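/- arXiv:1312.7213 — 2 statements merged into one kernel-verified Lean document; each statement's English description precedes it below -/
import Mathlib

section
/- If (X,𝒳,μ,T) is a weakly mixing invertible measure-preserving system on a Lebesgue probability space, then for every d ∈ ℕ it has a strictly ergodic topological model (X̂,T̂) such that the F^{[d]}-orbit closure of x^{[d]} is strictly ergodic under F^{[d]} for every x ∈ X̂, and the dynamical parallelepiped Q^{[d]}(X̂) is strictly ergodic under G^{[d]}. -/
open MeasureTheory Topology Filter

namespace HSY

/-- The group structure on self-homeomorphisms of a topological space,
with `a * b = b.trans a` (i.e. composition `a ∘ b`). -/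
instance homeoGroup (X : Type*) [TopologicalSpace X] : Group (X ≃ₜ X) where
  mul a b := b.trans a
  one := Homeomorph.refl X
  inv := Homeomorph.symm
  mul_assoc a b c := rfl
  one_mul a := by ext x; rfl
  mul_one a := by ext x; rfl
  inv_mul_cancel a := by
    show a.trans a.symm = Homeomorph.refl X
    ext x; exact a.symm_apply_apply x

/-- A measure-theoretic isomorphism (mod null sets) between the system `(X, μ, T)` and the
system `(Y, ν, S)`. -/
def MeasIso {X Y : Type*} [MeasurableSpace X] [MeasurableSpace Y]
    (μ : Measure X) (T : X → X) (ν : Measure Y) (S : Y → Y) : Prop :=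
  ∃ (φ : X → Y) (ψ : Y → X), Measurable φ ∧ Measurable ψ ∧
    Measure.map φ μ = ν ∧
    (∀ᵐ x ∂μ, ψ (φ x) = x) ∧ (∀ᵐ y ∂ν, φ (ψ y) = y) ∧
    (∀ᵐ x ∂μ, φ (T x) = S (φ x))

/-- The orbit of a point under the group of homeomorphisms generated by `gens`. -/
def grpOrbit {Y : Type*} [TopologicalSpace Y] (gens : Set (Y ≃ₜ Y)) (y : Y) : Set Y :=
  {z | ∃ g ∈ Subgroup.closure gens, (g : Y ≃ₜ Y) y = z}

/-- The action of the group of homeomorphisms generated by `gens` on the (invariant) set `A`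
is strictly ergodic: the orbit of every point of `A` is dense in `A` (minimality), and there is
exactly one invariant Borel probability measure giving full mass to `A` (unique ergodicity). -/
def StrictlyErgodicOn {Y : Type*} [TopologicalSpace Y] [MeasurableSpace Y]
    (gens : Set (Y ≃ₜ Y)) (A : Set Y) : Prop :=
  (∀ y ∈ A, closure (grpOrbit gens y) = A) ∧
  (∃! ν : Measure Y, IsProbabilityMeasure ν ∧ ν A = 1 ∧ ∀ g ∈ gens, MeasurePreserving g ν ν)

/-- A homeomorphism is strictly ergodic: minimal and uniquely ergodic. -/
def StrictlyErgodicHomeo {Y : Type*} [TopologicalSpace Y] [MeasurableSpace Y] (S : Y ≃ₜ Y) :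
    Prop :=
  (∀ y : Y, Dense (Set.range fun n : ℤ => (S ^ n) y)) ∧
  (∃! ν : Measure Y, IsProbabilityMeasure ν ∧ MeasurePreserving S ν ν)

/-- `(Y, ν, S)` is a topological model of the measure preserving system `(X, μ, T)`:
`ν` is an `S`-invariant Borel probability measure and the two systems are measure
theoretically isomorphic. -/
def IsModel {X : Type*} [MeasurableSpace X] (μ : Measure X) (T : X → X)
    {Y : Type*} [TopologicalSpace Y] [MeasurableSpace Y] (S : Y ≃ₜ Y) (ν : Measure Y) : Prop :=
  IsProbabilityMeasure ν ∧ MeasurePreserving S ν ν ∧ MeasIso μ T ν S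

/-- The `j`-th face transformation of dimension `d`: it applies `S` to the coordinates `ε`
with `ε j = 1` and leaves the other coordinates unchanged. -/
def faceHomeo {Y : Type*} [TopologicalSpace Y] (S : Y ≃ₜ Y) {d : ℕ} (j : Fin d) :
    ((Fin d → Bool) → Y) ≃ₜ ((Fin d → Bool) → Y) :=
  Homeomorph.piCongrRight fun ε => if ε j then S else Homeomorph.refl Y

/-- The generators of the face group `F^[d]`. -/
def faceGens {Y : Type*} [TopologicalSpace Y] (S : Y ≃ₜ Y) (d : ℕ) :
    Set (((Fin d → Bool) → Y) ≃ₜ ((Fin d → Bool) → Y)) :=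
  Set.range fun j : Fin d => faceHomeo S j

/-- The diagonal transformation `S × ⋯ × S` of dimension `d`. -/
def diagHomeo {Y : Type*} [TopologicalSpace Y] (S : Y ≃ₜ Y) (d : ℕ) :
    ((Fin d → Bool) → Y) ≃ₜ ((Fin d → Bool) → Y) :=
  Homeomorph.piCongrRight fun _ => S

/-- The generators of the parallelepiped group `G^[d]` : the face transformations together
with the diagonal transformation. -/
def parallelepipedGens {Y : Type*} [TopologicalSpace Y] (S : Y ≃ₜ Y) (d : ℕ) :
    Set (((Fin d → Bool) → Y) ≃ₜ ((Fin d → Bool) → Y)) :=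
  insert (diagHomeo S d) (faceGens S d)

/-- The dynamical parallelepiped `Q^[d]`, the closure of the set of points
`(S^(n·ε) y)_{ε ∈ {0,1}^d}`. -/
def Qset {Y : Type*} [TopologicalSpace Y] (S : Y ≃ₜ Y) (d : ℕ) : Set ((Fin d → Bool) → Y) :=
  closure {c | ∃ (n : Fin d → ℤ) (y : Y),
    c = fun ε => (S ^ (∑ i, if ε i then n i else 0)) y}

section MeanErgodic

variable {α : Type*} [MeasurableSpace α] {m : Measure α} {f : α → α}

/-- The average of `h` along the first `N` points of the `f`-orbit of `x`. -/
noncomputable def orbitAverage (f : α → α) (h : α → ℝ) (N : ℕ) (x : α) : ℝ :=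
  (N : ℝ)⁻¹ * ∑ n ∈ Finset.range N, h (f^[n] x)

lemma memLp_orbitAverage (hf : MeasurePreserving f m m) {h : α → ℝ} (hh : MemLp h 2 m) (N : ℕ) :
    MemLp (orbitAverage f h N) 2 m := by
  unfold orbitAverage
  exact (memLp_finsetSum _ fun n _ => hh.comp_measurePreserving (hf.iterate n)).const_mul _

lemma birkhoffAverage_toLp (hf : MeasurePreserving f m m) {h : α → ℝ} (hh : MemLp h 2 m) (N : ℕ) :
    birkhoffAverage ℝ (Lp.compMeasurePreservingₗᵢ ℝ f hf (E := ℝ) (p := 2)).toContinuousLinearMap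
      _root_.id N (hh.toLp h) = (memLp_orbitAverage hf hh N).toLp _ := by
  set K := (Lp.compMeasurePreservingₗᵢ ℝ f hf (E := ℝ) (p := 2)).toContinuousLinearMap
  have h1 : ∀ n, K^[n] (hh.toLp h) =
      (hh.comp_measurePreserving (hf.iterate n)).toLp (h ∘ f^[n]) := by
    intro n
    induction n with
    | zero => rfl
    | succ n ih => rw [Function.iterate_succ_apply', ih]; rfl
  have h2 : ∀ N, ∑ n ∈ Finset.range N, K^[n] (hh.toLp h) =
      (memLp_finsetSum (Finset.range N)
        fun n _ => hh.comp_measurePreserving (hf.iterate n)).toLp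
        (fun x => ∑ n ∈ Finset.range N, (h ∘ f^[n]) x) := by
    intro N
    induction N with
    | zero => 
      simp only [Finset.sum_range_zero]
      exact (MemLp.toLp_zero _).symm
    | succ N ih =>
      rw [Finset.sum_range_succ, ih, h1, ← MemLp.toLp_add]
      congr 1
      ext x
      simp [Finset.sum_range_succ]
  simp only [birkhoffAverage, birkhoffSum, _root_.id]
  rw [h2, ← MemLp.toLp_const_smul]
  rfl

variable [IsProbabilityMeasure m]

lemma integral_orbitAverage (hf : MeasurePreserving f m m) {h : α → ℝ} (hh : MemLp h 2 m)
    {N : ℕ} (hN : 1 ≤ N) : ∫ x, orbitAverage f h N x ∂m = ∫ x, h x ∂m := by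
  have hi : ∀ n, ∫ x, h (f^[n] x) ∂m = ∫ x, h x ∂m := fun n => by
    have h1 := (hf.iterate n)
    conv_rhs => rw [← h1.map_eq]
    rw [integral_map h1.measurable.aemeasurable]
    rw [h1.map_eq]; exact hh.aestronglyMeasurable
  unfold orbitAverage
  rw [integral_const_mul, integral_finsetSum]
  · simp only [hi]
    have : (N : ℝ) ≠ 0 := by positivity
    simp [this]
  · intro n _
    exact (hh.comp_measurePreserving (hf.iterate n)).integrable (by norm_num)

/-- The mean ergodic theorem in `L¹`. -/
lemma tendsto_integral_abs_orbitAverage (hf : Ergodic f m) {h : α → ℝ} (hh : MemLp h 2 m) :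
    Tendsto (fun N : ℕ => ∫ x, |orbitAverage f h N x - ∫ y, h y ∂m| ∂m) atTop (𝓝 0) := by
  have hfp := hf.toMeasurePreserving
  set K := (Lp.compMeasurePreservingₗᵢ ℝ f hfp (E := ℝ) (p := 2)).toContinuousLinearMap
  have key := K.tendsto_birkhoffAverage_orthogonalProjection
    (LinearIsometry.norm_toContinuousLinearMap_le _) (hh.toLp h)
  set g := (K.eqLocus (1 : Lp ℝ 2 m →L[ℝ] Lp ℝ 2 m)).orthogonalProjectionOnto (hh.toLp h)
  have hg : K g.1 = g.1 := g.2
  obtain ⟨c, hc⟩ := hf.eq_const_of_compMeasurePreserving_eq (g := g.1.1)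
    (congrArg Subtype.val hg)
  have hgc : (g.1 : α → ℝ) =ᵐ[m] fun _ => c := by
    have : (g.1.1 : α → ℝ) = ((AEEqFun.const α c : α →ₘ[m] ℝ) : α → ℝ) := by rw [hc]
    change (g.1.1 : α → ℝ) =ᵐ[m] _
    rw [this]; exact AEEqFun.coeFn_const _ _
  have hint : ∀ N c', Integrable (fun x => orbitAverage f h N x - c') m := fun N c' =>
    ((memLp_orbitAverage hfp hh N).integrable (by norm_num)).sub (integrable_const _)
  have hlim : Tendsto (fun N : ℕ => ∫ x, |orbitAverage f h N x - c| ∂m) atTop (𝓝 0) := by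
    have h0 : Tendsto (fun N => ‖birkhoffAverage ℝ K _root_.id N (hh.toLp h) - g.1‖) atTop (𝓝 0) :=
      tendsto_iff_norm_sub_tendsto_zero.1 key
    refine squeeze_zero (fun N => integral_nonneg fun x => abs_nonneg _) (fun N => ?_) h0
    have e1 : (birkhoffAverage ℝ K _root_.id N (hh.toLp h) - g.1 : Lp ℝ 2 m) =ᵐ[m]
        fun x => orbitAverage f h N x - c := by
      rw [show birkhoffAverage ℝ K _root_.id N (hh.toLp h) =
        (memLp_orbitAverage hfp hh N).toLp _ from birkhoffAverage_toLp hfp hh N]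
      filter_upwards [Lp.coeFn_sub ((memLp_orbitAverage hfp hh N).toLp _) g.1,
        (memLp_orbitAverage hfp hh N).coeFn_toLp, hgc] with x h1 h2 h3
      rw [h1, Pi.sub_apply, h2, h3]
    rw [Lp.norm_def, eLpNorm_congr_ae e1]
    have e2 : ∫ x, |orbitAverage f h N x - c| ∂m =
        (eLpNorm (fun x => orbitAverage f h N x - c) 1 m).toReal := by
      rw [eLpNorm_one_eq_lintegral_enorm, ← integral_norm_eq_lintegral_enorm
        (hint N c).aestronglyMeasurable]
      rfl
    rw [e2]
    have hm : MemLp (fun x => orbitAverage f h N x - c) 2 m :=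
      (memLp_orbitAverage hfp hh N).sub (memLp_const _)
    exact ENNReal.toReal_mono hm.eLpNorm_lt_top.ne
      (eLpNorm_le_eLpNorm_of_exponent_le (by norm_num) hm.aestronglyMeasurable)
  have hc' : c = ∫ y, h y ∂m := by
    have h1 : Tendsto (fun _ : ℕ => (∫ y, h y ∂m) - c) atTop (𝓝 0) := by
      refine squeeze_zero_norm' ?_ hlim
      filter_upwards [eventually_ge_atTop 1] with N hN
      calc ‖(∫ y, h y ∂m) - c‖ = ‖∫ x, (orbitAverage f h N x - c) ∂m‖ := by
            rw [integral_sub ((memLp_orbitAverage hfp hh N).integrable (by norm_num))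
              (integrable_const _), integral_orbitAverage hfp hh hN]
            simp
        _ ≤ _ := norm_integral_le_integral_norm _
    have := tendsto_nhds_unique h1 tendsto_const_nhds
    linarith
  rwa [← hc']

end MeanErgodic

section CesaroLim

/-- Strong Cesàro convergence of the sequence `x` to `c`. -/
def CesaroLim (x : ℕ → ℝ) (c : ℝ) : Prop :=
  Tendsto (fun N : ℕ => (N : ℝ)⁻¹ * ∑ n ∈ Finset.range N, |x n - c|) atTop (𝓝 0)

lemma CesaroLim.of_le {x y : ℕ → ℝ} {c d : ℝ} (h : CesaroLim x c)
    (hle : ∀ n, |y n - d| ≤ |x n - c|) : CesaroLim y d := by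
  exact squeeze_zero (fun N => by positivity) (fun N => mul_le_mul_of_nonneg_left
    (Finset.sum_le_sum fun n _ => hle n) (by positivity)) h

lemma CesaroLim.of_le_add {x y z : ℕ → ℝ} {c d e : ℝ} (h : CesaroLim x c) (h' : CesaroLim y d)
    (hle : ∀ n, |z n - e| ≤ |x n - c| + |y n - d|) : CesaroLim z e := by
  have := h.add h'
  rw [add_zero] at this
  refine squeeze_zero (fun N => by positivity) (fun N => ?_) this
  rw [← mul_add, ← Finset.sum_add_distrib]
  gcongr with n _
  exact hle n

lemma cesaroLim_const (c : ℝ) : CesaroLim (fun _ => c) c := by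
  simp [CesaroLim]

lemma CesaroLim.prod {ι : Type*} (s : Finset ι) {x : ι → ℕ → ℝ} {c : ι → ℝ}
    (h : ∀ i, CesaroLim (x i) (c i)) (hx : ∀ i n, |x i n| ≤ 1) (hc : ∀ i, |c i| ≤ 1) :
    CesaroLim (fun n => ∏ i ∈ s, x i n) (∏ i ∈ s, c i) := by
  classical
  induction s using Finset.induction_on with
  | empty => simpa using cesaroLim_const 1
  | insert a s ha ih =>
    simp only [Finset.prod_insert ha]
    refine (h a).of_le_add ih fun n => ?_
    have e1 : |∏ i ∈ s, x i n| ≤ 1 := by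
      rw [Finset.abs_prod]
      exact Finset.prod_le_one (fun i _ => abs_nonneg _) fun i _ => hx i n
    calc |x a n * ∏ i ∈ s, x i n - c a * ∏ i ∈ s, c i|
        = |(x a n - c a) * ∏ i ∈ s, x i n + c a * (∏ i ∈ s, x i n - ∏ i ∈ s, c i)| := by ring_nf
      _ ≤ |x a n - c a| * |∏ i ∈ s, x i n| + |c a| * |∏ i ∈ s, x i n - ∏ i ∈ s, c i| := by
        rw [← abs_mul, ← abs_mul]; exact abs_add_le _ _
      _ ≤ |x a n - c a| * 1 + 1 * |∏ i ∈ s, x i n - ∏ i ∈ s, c i| := by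
        gcongr; exact hc a
      _ = _ := by ring

lemma CesaroLim.of_approx {y : ℕ → ℝ} {d : ℝ}
    (h : ∀ ε > 0, ∃ x c, CesaroLim x c ∧ ∀ n, |y n - d| ≤ |x n - c| + ε) : CesaroLim y d := by
  rw [CesaroLim, Metric.tendsto_atTop]
  intro ε hε
  obtain ⟨x, c, hx, hle⟩ := h (ε / 2) (by positivity)
  obtain ⟨N, hN⟩ := (Metric.tendsto_atTop.1 hx) (ε / 2) (by positivity)
  refine ⟨max N 1, fun k hk => ?_⟩
  have hk1 : 1 ≤ k := le_trans (le_max_right _ _) hk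
  have h1 := hN k (le_trans (le_max_left _ _) hk)
  rw [Real.dist_eq, sub_zero, abs_of_nonneg (by positivity)] at h1 ⊢
  have hk0 : (k : ℝ) ≠ 0 := by positivity
  calc (k : ℝ)⁻¹ * ∑ n ∈ Finset.range k, |y n - d|
      ≤ (k : ℝ)⁻¹ * ∑ n ∈ Finset.range k, (|x n - c| + ε / 2) := by
        gcongr with n _; exact hle n
    _ = (k : ℝ)⁻¹ * ∑ n ∈ Finset.range k, |x n - c| + ε / 2 := by
        rw [Finset.sum_add_distrib, mul_add]; simp [hk0]
    _ < ε := by linarith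

lemma CesaroLim.of_sq {x : ℕ → ℝ} {c : ℝ}
    (h1 : Tendsto (fun N : ℕ => (N : ℝ)⁻¹ * ∑ n ∈ Finset.range N, x n) atTop (𝓝 c))
    (h2 : Tendsto (fun N : ℕ => (N : ℝ)⁻¹ * ∑ n ∈ Finset.range N, x n ^ 2) atTop (𝓝 (c ^ 2))) :
    CesaroLim x c := by
  have h3 : Tendsto (fun N : ℕ => (N : ℝ)⁻¹ * ∑ n ∈ Finset.range N, (x n - c) ^ 2) atTop
      (𝓝 0) := by
    have h := (h2.sub (h1.const_mul (2 * c))).add_const (c ^ 2)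
    have e : c ^ 2 - 2 * c * c + c ^ 2 = 0 := by ring
    rw [e] at h
    refine h.congr' ?_
    filter_upwards [eventually_ge_atTop 1] with N hN
    have hN0 : (N : ℝ) ≠ 0 := by positivity
    have : ∀ n, (x n - c) ^ 2 = x n ^ 2 - 2 * c * x n + c ^ 2 := fun n => by ring
    simp only [this, Finset.sum_add_distrib, Finset.sum_sub_distrib, ← Finset.mul_sum]
    simp only [Finset.sum_const, Finset.card_range, nsmul_eq_mul]
    field_simp
  have h4 := h3.sqrt
  rw [Real.sqrt_zero] at h4
  refine squeeze_zero (fun N => by positivity) (fun N => ?_) h4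
  apply Real.le_sqrt_of_sq_le
  have hcs := sq_sum_le_card_mul_sum_sq (s := Finset.range N) (f := fun n => |x n - c|)
  simp only [sq_abs, Finset.card_range] at hcs
  rcases Nat.eq_zero_or_pos N with rfl | hN
  · simp
  have hN0 : (0 : ℝ) < N := by exact_mod_cast hN
  calc ((N : ℝ)⁻¹ * ∑ n ∈ Finset.range N, |x n - c|) ^ 2
      = (N : ℝ)⁻¹ ^ 2 * (∑ n ∈ Finset.range N, |x n - c|) ^ 2 := by ring
    _ ≤ (N : ℝ)⁻¹ ^ 2 * (N * ∑ n ∈ Finset.range N, (x n - c) ^ 2) := by gcongr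
    _ = _ := by field_simp

end CesaroLim

section WeakMixing

variable {α : Type*} [MeasurableSpace α] {m : Measure α} {f : α → α}

/-- Weak mixing, expressed through strong Cesàro convergence of correlations. -/
def WeakMixing (m : Measure α) (f : α → α) : Prop :=
  ∀ A B, MeasurableSet A → MeasurableSet B →
    CesaroLim (fun n => m.real (A ∩ f^[n] ⁻¹' B)) (m.real A * m.real B)

lemma tendsto_average_correlation [IsProbabilityMeasure m] (hf : Ergodic f m) {A B : Set α}
    (hB : MeasurableSet B) :
    Tendsto (fun N : ℕ => (N : ℝ)⁻¹ * ∑ n ∈ Finset.range N, m.real (A ∩ f^[n] ⁻¹' B)) atTop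
      (𝓝 (m.real A * m.real B)) := by
  have hB2 : MemLp (B.indicator (fun _ => (1 : ℝ))) 2 m :=
    memLp_indicator_const _ hB _ (Or.inr (measure_ne_top _ _))
  have h := tendsto_integral_abs_orbitAverage hf hB2
  rw [tendsto_iff_norm_sub_tendsto_zero]
  refine squeeze_zero (fun _ => norm_nonneg _) (fun N => ?_) h
  have hBi : ∫ y, B.indicator (fun _ => (1 : ℝ)) y ∂m = m.real B := by
    rw [integral_indicator_const _ hB]; simp
  rw [hBi]
  have hfm := hf.measurable
  have e1 : ∀ n, m.real (A ∩ f^[n] ⁻¹' B) =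
      ∫ x in A, B.indicator (fun _ => (1 : ℝ)) (f^[n] x) ∂m := by
    intro n
    have : (fun x => B.indicator (fun _ => (1 : ℝ)) (f^[n] x)) =
      (f^[n] ⁻¹' B).indicator (fun _ => 1) := rfl
    rw [this, integral_indicator_const _ (hfm.iterate n hB), measureReal_restrict_apply
      (hfm.iterate n hB), Set.inter_comm]
    simp
  have hint := (memLp_orbitAverage hf.toMeasurePreserving hB2 N).integrable (by norm_num)
  have e2 : (N : ℝ)⁻¹ * ∑ n ∈ Finset.range N, m.real (A ∩ f^[n] ⁻¹' B) - m.real A * m.real B =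
      ∫ x in A, (orbitAverage f (B.indicator (fun _ => (1 : ℝ))) N x - m.real B) ∂m := by
    rw [integral_sub hint.integrableOn (integrable_const _).integrableOn]
    unfold orbitAverage
    rw [integral_const_mul, integral_finsetSum]
    · simp only [e1]
      simp
    · intro n _
      exact ((hB2.comp_measurePreserving
        (hf.toMeasurePreserving.iterate n)).integrable (by norm_num)).integrableOn
  rw [e2]
  refine (norm_integral_le_integral_norm _).trans ?_
  exact setIntegral_le_integral (hint.sub (integrable_const _)).norm
    (Eventually.of_forall fun x => abs_nonneg _)

lemma measureReal_prod_correlation [IsProbabilityMeasure m] (n : ℕ) (A B : Set α) :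
    (m.prod m).real ((A ×ˢ A) ∩ (Prod.map f f)^[n] ⁻¹' (B ×ˢ B)) =
      m.real (A ∩ f^[n] ⁻¹' B) ^ 2 := by
  have : (A ×ˢ A) ∩ (Prod.map f f)^[n] ⁻¹' (B ×ˢ B) =
      (A ∩ f^[n] ⁻¹' B) ×ˢ (A ∩ f^[n] ⁻¹' B) := by
    ext ⟨x, y⟩
    simp [Prod.map_iterate]
    tauto
  rw [this, measureReal_prod_prod, sq]

lemma ergodic_of_ergodic_prod [IsProbabilityMeasure m] (hf : MeasurePreserving f m m)
    (h : Ergodic (Prod.map f f) (m.prod m)) : Ergodic f m := by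
  refine ⟨hf, ⟨fun s hs hfs => ?_⟩⟩
  have h1 := h.aeconst_set (s := Prod.fst ⁻¹' s) (measurable_fst hs) (by
    ext ⟨x, y⟩
    exact (Set.ext_iff.1 hfs x))
  rw [eventuallyConst_set'] at h1 ⊢
  have hfst : MeasurePreserving Prod.fst (m.prod m) m := measurePreserving_fst
  rcases h1 with h1 | h1
  · left
    rw [ae_eq_empty] at h1 ⊢
    rwa [hfst.measure_preimage hs.nullMeasurableSet] at h1
  · right
    rw [ae_eq_univ] at h1 ⊢
    rw [← Set.preimage_compl] at h1
    rwa [hfst.measure_preimage hs.compl.nullMeasurableSet] at h1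

lemma weakMixing_of_ergodic_prod [IsProbabilityMeasure m] (hf : MeasurePreserving f m m)
    (h : Ergodic (Prod.map f f) (m.prod m)) : WeakMixing m f := by
  intro A B hA hB
  apply CesaroLim.of_sq
  · exact tendsto_average_correlation (ergodic_of_ergodic_prod hf h) hB
  · have := tendsto_average_correlation h (A := A ×ˢ A) (hB.prod hB)
    simp only [measureReal_prod_correlation] at this
    convert this using 2
    rw [measureReal_prod_prod, measureReal_prod_prod]; ring

lemma WeakMixing.ergodic [IsProbabilityMeasure m] (hf : MeasurePreserving f m m)
    (h : WeakMixing m f) : Ergodic f m := by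
  refine ⟨hf, ⟨fun s hs hfs => ?_⟩⟩
  have h1 := h s s hs hs
  have e : ∀ n, f^[n] ⁻¹' s = s := fun n => by
    induction n with
    | zero => rfl
    | succ n ih => rw [Function.iterate_succ, Set.preimage_comp, ih, hfs]
  simp only [CesaroLim, e, Set.inter_self] at h1
  have h2 : Tendsto (fun _ : ℕ => |m.real s - m.real s * m.real s|) atTop (𝓝 0) := by
    refine h1.congr' ?_
    filter_upwards [eventually_ge_atTop 1] with N hN
    have hN0 : (N : ℝ) ≠ 0 := by positivity
    simp [hN0]
  have h3 := tendsto_nhds_unique h2 tendsto_const_nhds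
  have h4 : m.real s * (1 - m.real s) = 0 := by
    have := abs_eq_zero.1 h3.symm
    linarith
  rw [eventuallyConst_set']
  rcases mul_eq_zero.1 h4 with h5 | h5
  · left
    rw [ae_eq_empty]
    exact (measureReal_eq_zero_iff (measure_ne_top _ _)).1 h5
  · right
    rw [ae_eq_univ]
    rw [← measureReal_eq_zero_iff (measure_ne_top _ _), probReal_compl_eq_one_sub hs]
    exact h5

lemma WeakMixing.of_map {β : Type*} [MeasurableSpace β] {ν : Measure β} {S : β → β} {g : α → β}
    (h : WeakMixing m f) (hf : MeasurePreserving f m m) (hg : MeasurePreserving g m ν)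
    (hS : Measurable S)
    (hgf : ∀ᵐ x ∂m, g (f x) = S (g x)) : WeakMixing ν S := by
  intro A B hA hB
  have hall : ∀ᵐ x ∂m, ∀ n, g (f^[n] x) = S^[n] (g x) := by
    have : ∀ n, ∀ᵐ x ∂m, g (f (f^[n] x)) = S (g (f^[n] x)) := fun n =>
      (hf.iterate n).quasiMeasurePreserving.ae hgf
    filter_upwards [ae_all_iff.2 this] with x hx n
    induction n with
    | zero => rfl
    | succ n ih => rw [Function.iterate_succ_apply', Function.iterate_succ_apply', hx, ih]
  have e : ∀ n, ν.real (A ∩ S^[n] ⁻¹' B) = m.real (g ⁻¹' A ∩ f^[n] ⁻¹' (g ⁻¹' B)) := by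
    intro n
    rw [← hg.measureReal_preimage (hA.inter (hS.iterate n hB)).nullMeasurableSet]
    apply measureReal_congr
    filter_upwards [hall] with x hx
    have := hx n
    apply propext
    change (g x ∈ A ∧ S^[n] (g x) ∈ B) ↔ (g x ∈ A ∧ g (f^[n] x) ∈ B)
    rw [this]
  simp only [e]
  rw [← hg.measureReal_preimage hA.nullMeasurableSet, ← hg.measureReal_preimage hB.nullMeasurableSet]
  exact h _ _ (hg.measurable hA) (hg.measurable hB)

end WeakMixing

section WeakMixingPi

variable {α : Type*} [MeasurableSpace α] {m : Measure α} {f : α → α}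

lemma CesaroLim.of_piSystem [IsProbabilityMeasure m] {ρ : ℕ → Measure α} {σ : Measure α}
    (hρ : ∀ n, ρ n ≤ m) (hσ : σ ≤ m) {C : Set (Set α)}
    (hgen : ‹MeasurableSpace α› = MeasurableSpace.generateFrom C) (hC : IsPiSystem C)
    (huniv : CesaroLim (fun n => (ρ n).real Set.univ) (σ.real Set.univ))
    (h : ∀ B ∈ C, CesaroLim (fun n => (ρ n).real B) (σ.real B)) {B : Set α}
    (hB : MeasurableSet B) : CesaroLim (fun n => (ρ n).real B) (σ.real B) := by
  have hfin : ∀ n, IsFiniteMeasure (ρ n) := fun n => isFiniteMeasure_of_le m (hρ n)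
  have hfin' : IsFiniteMeasure σ := isFiniteMeasure_of_le m hσ
  induction B, hB using MeasurableSpace.induction_on_inter hgen hC with
  | empty => simpa using cesaroLim_const 0
  | basic t ht => exact h t ht
  | compl t htm ih =>
    refine huniv.of_le_add ih fun n => ?_
    rw [measureReal_compl htm, measureReal_compl htm]
    calc _ = |((ρ n).real Set.univ - σ.real Set.univ) - ((ρ n).real t - σ.real t)| := by ring_nf
      _ ≤ _ := abs_sub _ _
  | iUnion g hd hm ih =>
    have hacc : ∀ K, CesaroLim (fun n => (ρ n).real (⋃ k ∈ Finset.range K, g k))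
        (σ.real (⋃ k ∈ Finset.range K, g k)) := by
      intro K
      induction K with
      | zero => simpa using cesaroLim_const 0
      | succ K ihK =>
        refine ihK.of_le_add (ih K) fun n => ?_
        have hdis : Disjoint (⋃ k ∈ Finset.range K, g k) (g K) := by
          simp only [Set.disjoint_iUnion_left]
          intro k hk
          exact hd (Finset.mem_range.1 hk).ne
        have e : (⋃ k ∈ Finset.range (K + 1), g k) = (⋃ k ∈ Finset.range K, g k) ∪ g K := by
          rw [Finset.range_add_one, Finset.set_biUnion_insert, Set.union_comm]
        have := hfin n
        rw [e, measureReal_union hdis (hm K) (measure_ne_top _ _) (measure_ne_top _ _),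
          measureReal_union hdis (hm K) (measure_ne_top _ _) (measure_ne_top _ _)]
        calc _ = |((ρ n).real (⋃ k ∈ Finset.range K, g k) - σ.real (⋃ k ∈ Finset.range K, g k))
            + ((ρ n).real (g K) - σ.real (g K))| := by ring_nf
          _ ≤ _ := abs_add_le _ _
    have htail : Tendsto (fun K => m.real ((⋃ k, g k) \ ⋃ k ∈ Finset.range K, g k)) atTop
        (𝓝 0) := by
      have h1 : Tendsto (fun K => m ((⋃ k, g k) \ ⋃ k ∈ Finset.range K, g k)) atTop
          (𝓝 (m (⋂ K, (⋃ k, g k) \ ⋃ k ∈ Finset.range K, g k))) := by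
        apply tendsto_measure_iInter_atTop
        · intro K
          exact ((MeasurableSet.iUnion hm).diff
            (Finset.measurableSet_biUnion _ fun k _ => hm k)).nullMeasurableSet
        · intro K K' hKK
          apply Set.sdiff_subset_sdiff_right
          apply Set.biUnion_subset_biUnion_left
          intro k hk
          exact Finset.mem_coe.2 (Finset.mem_range.2 ((Finset.mem_range.1 hk).trans_le hKK))
        · exact ⟨0, measure_ne_top _ _⟩
      have h2 : (⋂ K, (⋃ k, g k) \ ⋃ k ∈ Finset.range K, g k) = ∅ := by
        rw [Set.eq_empty_iff_forall_notMem]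
        intro x hx
        rw [Set.mem_iInter] at hx
        obtain ⟨k, hk⟩ := Set.mem_iUnion.1 (hx 0).1
        apply (hx (k + 1)).2
        simp only [Set.mem_iUnion]
        exact ⟨k, by simp, hk⟩
      rw [h2, measure_empty] at h1
      have := (ENNReal.tendsto_toReal ENNReal.zero_ne_top).comp h1
      simpa only [ENNReal.toReal_zero] using! this
    refine CesaroLim.of_approx fun ε hε => ?_
    obtain ⟨K, hK⟩ := (htail.eventually (gt_mem_nhds (half_pos hε))).exists
    refine ⟨_, _, hacc K, fun n => ?_⟩
    set U := ⋃ k ∈ Finset.range K, g k with hU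
    have hUm : MeasurableSet U := Finset.measurableSet_biUnion _ fun k _ => hm k
    have hsub : U ⊆ ⋃ k, g k := by
      intro x hx
      simp only [hU, Set.mem_iUnion] at hx ⊢
      obtain ⟨k, _, hk⟩ := hx
      exact ⟨k, hk⟩
    have key : ∀ κ : Measure α, κ ≤ m →
        0 ≤ κ.real (⋃ k, g k) - κ.real U ∧ κ.real (⋃ k, g k) - κ.real U ≤ ε / 2 := by
      intro κ hκ
      have : IsFiniteMeasure κ := isFiniteMeasure_of_le m hκ
      rw [← measureReal_sdiff hsub hUm]
      refine ⟨measureReal_nonneg, le_trans ?_ hK.le⟩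
      exact ENNReal.toReal_mono (measure_ne_top _ _) (hκ _)
    obtain ⟨a1, a2⟩ := key (ρ n) (hρ n)
    obtain ⟨b1, b2⟩ := key σ hσ
    have h3 : |((ρ n).real (⋃ k, g k) - (ρ n).real U) - (σ.real (⋃ k, g k) - σ.real U)| ≤ ε :=
      abs_le.2 ⟨by linarith, by linarith⟩
    calc |(ρ n).real (⋃ k, g k) - σ.real (⋃ k, g k)|
        = |((ρ n).real U - σ.real U) +
          (((ρ n).real (⋃ k, g k) - (ρ n).real U) - (σ.real (⋃ k, g k) - σ.real U))| := by
          ring_nf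
      _ ≤ _ := (abs_add_le _ _).trans (by gcongr)

lemma WeakMixing.of_piSystem [IsProbabilityMeasure m] (hf : MeasurePreserving f m m)
    {C : Set (Set α)}
    (hgen : ‹MeasurableSpace α› = MeasurableSpace.generateFrom C) (hC : IsPiSystem C)
    (h : ∀ A ∈ C, ∀ B ∈ C,
      CesaroLim (fun n => m.real (A ∩ f^[n] ⁻¹' B)) (m.real A * m.real B)) : WeakMixing m f := by
  have hCm : ∀ A ∈ C, MeasurableSet A := fun A hA => by
    rw [hgen]; exact MeasurableSpace.measurableSet_generateFrom hA
  have scale_le : ∀ A, m A • m ≤ m := fun A => by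
    intro s
    simp only [Measure.smul_apply, smul_eq_mul]
    exact mul_le_of_le_one_left (zero_le) prob_le_one
  have step : ∀ A ∈ C, ∀ B, MeasurableSet B →
      CesaroLim (fun n => m.real (A ∩ f^[n] ⁻¹' B)) (m.real A * m.real B) := by
    intro A hA B hB
    have e : ∀ n, ∀ B, MeasurableSet B →
        ((m.restrict A).map f^[n]).real B = m.real (A ∩ f^[n] ⁻¹' B) := fun n B hB => by
      rw [map_measureReal_apply (hf.iterate n).measurable hB,
        measureReal_restrict_apply ((hf.iterate n).measurable hB), Set.inter_comm]
    have e' : ∀ B, (m A • m).real B = m.real A * m.real B := fun B => by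
      simp [Measure.real]
    have := CesaroLim.of_piSystem (m := m) (ρ := fun n => (m.restrict A).map f^[n])
      (σ := m A • m) (fun n => ?_) (scale_le A) hgen hC ?_ (fun B' hB' => ?_) hB
    · simpa only [e _ _ hB, e'] using this
    · calc (m.restrict A).map f^[n] ≤ m.map f^[n] :=
            Measure.map_mono Measure.restrict_le_self (hf.iterate n).measurable
        _ = m := (hf.iterate n).map_eq
    · simp only [e _ _ MeasurableSet.univ, e']
      simpa using cesaroLim_const (m.real A)
    · simp only [e _ _ (hCm _ hB'), e']
      exact h A hA B' hB'
  intro A B hA hB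
  have e : ∀ n, ∀ A, (m.restrict (f^[n] ⁻¹' B)).real A = m.real (A ∩ f^[n] ⁻¹' B) := fun n A => by
    rw [measureReal_restrict_apply' ((hf.iterate n).measurable hB)]
  have e' : ∀ A, (m B • m).real A = m.real A * m.real B := fun B => by
    simp [Measure.real, mul_comm]
  have := CesaroLim.of_piSystem (m := m) (ρ := fun n => m.restrict (f^[n] ⁻¹' B))
      (σ := m B • m) (fun n => Measure.restrict_le_self) (scale_le B) hgen hC ?_
      (fun A' hA' => ?_) hA
  · simpa only [e, e'] using this
  · simp only [e, e', Set.univ_inter]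
    have e2 : ∀ n, m.real (f^[n] ⁻¹' B) = m.real B := fun n =>
      (hf.iterate n).measureReal_preimage hB.nullMeasurableSet
    simp only [e2]
    simpa using cesaroLim_const (m.real B)
  · simp only [e, e']
    exact step A' hA' B hB

lemma iterate_diag {α ι : Type*} {f : α → α} (n : ℕ) (y : ι → α) :
    (fun (y : ι → α) i => f (y i))^[n] y = fun i => f^[n] (y i) := by
  induction n with
  | zero => rfl
  | succ n ih =>
    rw [Function.iterate_succ_apply', ih]
    ext i
    rw [Function.iterate_succ_apply']

lemma measurePreserving_diag {ι : Type*} [Fintype ι] [IsProbabilityMeasure m]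
    (hf : MeasurePreserving f m m) :
    MeasurePreserving (fun (y : ι → α) i => f (y i)) (Measure.pi fun _ => m)
      (Measure.pi fun _ => m) :=
  measurePreserving_pi _ _ fun _ => hf

lemma WeakMixing.pi {ι : Type*} [Fintype ι] [IsProbabilityMeasure m]
    (hf : MeasurePreserving f m m) (h : WeakMixing m f) :
    WeakMixing (Measure.pi fun _ : ι => m) (fun y i => f (y i)) := by
  refine WeakMixing.of_piSystem (measurePreserving_diag hf) generateFrom_pi.symm isPiSystem_pi ?_
  rintro _ ⟨A, hA, rfl⟩ _ ⟨B, hB, rfl⟩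
  simp only [Set.mem_pi, Set.mem_univ, true_imp_iff, Set.mem_ofPred_eq] at hA hB
  have e : ∀ n, (Set.pi Set.univ A) ∩ (fun (y : ι → α) i => f (y i))^[n] ⁻¹' (Set.pi Set.univ B) =
      Set.pi Set.univ fun i => A i ∩ f^[n] ⁻¹' (B i) := by
    intro n
    ext y
    simp only [Set.mem_inter_iff, Set.mem_preimage, iterate_diag, Set.mem_pi, Set.mem_univ,
      true_imp_iff]
    exact forall_and.symm
  simp only [e, Measure.real, Measure.pi_pi, ENNReal.toReal_prod]
  rw [← Finset.prod_mul_distrib]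
  have hle : ∀ s : Set α, m.real s ≤ 1 := fun s => measureReal_le_one
  refine CesaroLim.prod _ (fun i => h (A i) (B i) (hA i) (hB i)) (fun i n => ?_) fun i => ?_
  · exact (abs_of_nonneg measureReal_nonneg).trans_le (hle _)
  · refine (abs_of_nonneg (by positivity)).trans_le ?_
    exact mul_le_one₀ (hle _) measureReal_nonneg (hle _)

lemma WeakMixing.ergodic_pi {ι : Type*} [Fintype ι] [IsProbabilityMeasure m]
    (hf : MeasurePreserving f m m) (h : WeakMixing m f) :
    Ergodic (fun (y : ι → α) i => f (y i)) (Measure.pi fun _ : ι => m) :=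
  (h.pi hf).ergodic (measurePreserving_diag hf)

end WeakMixingPi

section KrylovBogoliubov

variable {E : Type*} [TopologicalSpace E] [MeasurableSpace E] [BorelSpace E]

/-- The averages of the push-forwards of a measure along the iterates of a map. -/
noncomputable def averageMeasure (μ : Measure E) (f : E → E) (N : ℕ) : Measure E :=
  ((N + 1 : ℕ) : ENNReal)⁻¹ • ∑ n ∈ Finset.range (N + 1), μ.map f^[n]

lemma isProbabilityMeasure_averageMeasure (μ : Measure E) [IsProbabilityMeasure μ] {f : E → E}
    (hf : Continuous f) (N : ℕ) : IsProbabilityMeasure (averageMeasure μ f N) := by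
  constructor
  have h : ∀ n, (μ.map f^[n]) Set.univ = 1 := fun n => by
    rw [Measure.map_apply (hf.iterate n).measurable MeasurableSet.univ]; simp
  simp only [averageMeasure, Measure.smul_apply, Measure.finsetSum_apply, h, smul_eq_mul,
    Finset.sum_const, Finset.card_range, nsmul_eq_mul, mul_one]
  exact ENNReal.inv_mul_cancel (by simp) (by simp)

lemma map_averageMeasure (μ : Measure E) {f g : E → E} (hf : Continuous f) (hg : Continuous g)
    (hfg : Function.Commute g f) (hμ : μ.map g = μ) (N : ℕ) :
    (averageMeasure μ f N).map g = averageMeasure μ f N := by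
  have h : ∀ n, (μ.map f^[n]).map g = μ.map f^[n] := fun n => by
    rw [Measure.map_map hg.measurable (hf.iterate n).measurable,
      (hfg.iterate_right n).comp_eq,
      ← Measure.map_map (hf.iterate n).measurable hg.measurable, hμ]
  ext s hs
  have h' : ∀ n, μ.map f^[n] (g ⁻¹' s) = μ.map f^[n] s := fun n => by
    conv_rhs => rw [← h n, Measure.map_apply hg.measurable hs]
  rw [Measure.map_apply hg.measurable hs]
  simp only [averageMeasure, Measure.smul_apply, Measure.finsetSum_apply, h']

variable [CompactSpace E] [TopologicalSpace.MetrizableSpace E]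

lemma integral_averageMeasure (μ : Measure E) [IsProbabilityMeasure μ] {f : E → E}
    (hf : Continuous f) (N : ℕ) {h : E → ℝ} (hh : Continuous h) :
    ∫ x, h x ∂(averageMeasure μ f N) =
      ((N + 1 : ℕ) : ℝ)⁻¹ * ∑ n ∈ Finset.range (N + 1), ∫ x, h (f^[n] x) ∂μ := by
  rw [averageMeasure, integral_smul_measure, integral_finsetSum_measure]
  · simp only [smul_eq_mul, ENNReal.toReal_inv, ENNReal.toReal_natCast]
    congr 1
    refine Finset.sum_congr rfl fun n _ => ?_
    rw [integral_map (hf.iterate n).aemeasurable hh.aestronglyMeasurable]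
  · intro n _
    have := Measure.isProbabilityMeasure_map (μ := μ) (hf.iterate n).aemeasurable
    exact hh.integrable_of_hasCompactSupport (HasCompactSupport.of_compactSpace h)

lemma exists_invariant_measure_of_commute [Nonempty E] (l : List (E → E))
    (hc : ∀ f ∈ l, Continuous f) (hl : ∀ f ∈ l, ∀ g ∈ l, Function.Commute f g) :
    ∃ μ : Measure E, IsProbabilityMeasure μ ∧ ∀ f ∈ l, μ.map f = μ := by
  induction l with
  | nil =>
    obtain ⟨x⟩ := ‹Nonempty E›
    exact ⟨Measure.dirac x, inferInstance, by simp⟩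
  | cons f l ih =>
    obtain ⟨μ, hμ, hinv⟩ := ih (fun g hg => hc g (List.mem_cons_of_mem _ hg))
      fun g hg k hk => hl g (List.mem_cons_of_mem _ hg) k (List.mem_cons_of_mem _ hk)
    have hf : Continuous f := hc f List.mem_cons_self
    have hp := isProbabilityMeasure_averageMeasure μ hf
    let P : ℕ → ProbabilityMeasure E := fun N => ⟨averageMeasure μ f N, hp N⟩
    let U : Ultrafilter ℕ := Ultrafilter.of atTop
    have hU : (U : Filter ℕ) ≤ atTop := Ultrafilter.of_le _
    obtain ⟨ρ, -, hρ⟩ := (isCompact_univ (X := ProbabilityMeasure E)).ultrafilter_le_nhds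
      (U.map P) (by simp)
    have hρ' : ∀ h : BoundedContinuousFunction E ℝ,
        Tendsto (fun N => ∫ x, h x ∂(averageMeasure μ f N)) U (𝓝 (∫ x, h x ∂(ρ : Measure E))) :=
      ProbabilityMeasure.tendsto_iff_forall_integral_tendsto.1 hρ
    have key : ∀ g : E → E, Continuous g → (∀ h : BoundedContinuousFunction E ℝ,
        Tendsto (fun N => ∫ x, h (g x) ∂(averageMeasure μ f N) - ∫ x, h x ∂(averageMeasure μ f N))
          atTop (𝓝 0)) → (ρ : Measure E).map g = ρ := by
      intro g hg h0
      have := Measure.isProbabilityMeasure_map (μ := (ρ : Measure E)) hg.aemeasurable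
      apply ext_of_forall_integral_eq_of_IsFiniteMeasure
      intro h
      rw [integral_map hg.aemeasurable h.continuous.aestronglyMeasurable]
      have h1 := (hρ' (h.compContinuous ⟨g, hg⟩)).sub (hρ' h)
      exact sub_eq_zero.1 (tendsto_nhds_unique h1 ((h0 h).mono_left hU))
    refine ⟨ρ, inferInstance, fun g hg => ?_⟩
    rcases List.mem_cons.1 hg with rfl | hgl
    · refine key g hf fun h => ?_
      have e : ∀ N, ∫ x, h (g x) ∂(averageMeasure μ g N) - ∫ x, h x ∂(averageMeasure μ g N) =
          ((N + 1 : ℕ) : ℝ)⁻¹ * (∫ x, h (g^[N + 1] x) ∂μ - ∫ x, h (g^[0] x) ∂μ) := fun N => by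
        rw [integral_averageMeasure μ hf N (h := fun x => h (g x)) (h.continuous.comp hf),
          integral_averageMeasure μ hf N h.continuous, ← mul_sub, ← Finset.sum_sub_distrib]
        simp only [← Function.iterate_succ_apply' g]
        rw [Finset.sum_range_sub (fun n => ∫ x, h (g^[n] x) ∂μ)]
      have hb : ∀ n, |∫ x, h (g^[n] x) ∂μ| ≤ ‖h‖ := fun n => by
        have := norm_integral_le_of_norm_le_const (μ := μ) (f := fun x => h (g^[n] x)) (C := ‖h‖)
          (ae_of_all _ fun x => h.norm_coe_le_norm _)
        simpa using this
      have ht : Tendsto (fun N : ℕ => ((N + 1 : ℕ) : ℝ)⁻¹ * (‖h‖ + ‖h‖)) atTop (𝓝 0) := by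
        have := (tendsto_inv_atTop_nhds_zero_nat (𝕜 := ℝ)).comp (tendsto_add_atTop_nat 1)
        simpa using this.mul_const (‖h‖ + ‖h‖)
      refine squeeze_zero_norm (fun N => ?_) ht
      rw [e, norm_mul, Real.norm_of_nonneg (by positivity), Real.norm_eq_abs]
      gcongr
      exact (abs_sub _ _).trans (add_le_add (hb _) (hb _))
    · have hgc := hc g hg
      refine key g hgc fun h => ?_
      have e : ∀ N, ∫ x, h (g x) ∂(averageMeasure μ f N) = ∫ x, h x ∂(averageMeasure μ f N) := by
        intro N
        conv_rhs => rw [← map_averageMeasure μ hf hgc (hl g hg f List.mem_cons_self) (hinv g hgl) N]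
        rw [integral_map hgc.aemeasurable h.continuous.aestronglyMeasurable]
      simp [e]

lemma exists_invariant_measure_of_isClosed {A : Set E} (hA : IsClosed A) (hne : A.Nonempty)
    {G : Set (E ≃ₜ E)} (hG : G.Finite) (hcomm : ∀ f ∈ G, ∀ g ∈ G, Function.Commute f g)
    (hmaps : ∀ g ∈ G, Set.MapsTo g A A) :
    ∃ ρ : Measure E, IsProbabilityMeasure ρ ∧ ρ A = 1 ∧ ∀ g ∈ G, MeasurePreserving g ρ ρ := by
  have : CompactSpace A := isCompact_iff_compactSpace.1 hA.isCompact
  have : Nonempty A := hne.to_subtype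
  classical
  let R : G → A → A := fun g => (hmaps g g.2).restrict g A A
  have : Fintype G := hG.fintype
  obtain ⟨ρ, hρ, hinv⟩ := exists_invariant_measure_of_commute ((Finset.univ : Finset G).toList.map R)
    (fun f hf => by
      obtain ⟨g, -, rfl⟩ := List.mem_map.1 hf
      exact g.1.continuous.restrict (hmaps g g.2))
    (fun f hf f' hf' => by
      obtain ⟨g, -, rfl⟩ := List.mem_map.1 hf
      obtain ⟨g', -, rfl⟩ := List.mem_map.1 hf'
      exact fun a => Subtype.ext (hcomm g g.2 g' g'.2 a))
  refine ⟨ρ.map Subtype.val, Measure.isProbabilityMeasure_map measurable_subtype_coe.aemeasurable,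
    ?_, fun g hg => ⟨g.continuous.measurable, ?_⟩⟩
  · rw [Measure.map_apply measurable_subtype_coe hA.measurableSet]
    simp
  · have h1 := hinv (R ⟨g, hg⟩) (List.mem_map.2 ⟨⟨g, hg⟩, by simp, rfl⟩)
    have h2 : Measurable (R ⟨g, hg⟩) := (g.continuous.restrict (hmaps g hg)).measurable
    conv_rhs => rw [← h1]
    rw [Measure.map_map g.continuous.measurable measurable_subtype_coe,
      Measure.map_map measurable_subtype_coe h2]
    rfl

lemma eq_of_isClosed_of_mapsTo {A O : Set E} (hO : IsClosed O) (hne : O.Nonempty)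
    (hsub : O ⊆ A) {G : Set (E ≃ₜ E)} (hG : G.Finite)
    (hcomm : ∀ f ∈ G, ∀ g ∈ G, Function.Commute f g)
    (hmaps : ∀ g ∈ G, Set.MapsTo g O O) {ν : Measure E}
    (huniq : ∀ ρ : Measure E, IsProbabilityMeasure ρ → ρ A = 1 →
      (∀ g ∈ G, MeasurePreserving g ρ ρ) → ρ = ν)
    (hsupp : ∀ U : Set E, IsOpen U → (U ∩ A).Nonempty → ν U ≠ 0) : O = A := by
  obtain ⟨ρ, hρ, h1, hinv⟩ := exists_invariant_measure_of_isClosed hO hne hG hcomm hmaps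
  have hρA : ρ A = 1 := le_antisymm prob_le_one (h1 ▸ measure_mono hsub)
  obtain rfl := huniq ρ hρ hρA hinv
  refine hsub.antisymm fun x hx => ?_
  by_contra hxc
  exact hsupp _ hO.isOpen_compl ⟨x, hxc, hx⟩ ((prob_compl_eq_zero_iff hO.measurableSet).2 h1)

lemma closure_grpOrbit_eq {A : Set E} (hA : IsClosed A)
    {G : Set (E ≃ₜ E)} (hG : G.Finite) (hcomm : ∀ f ∈ G, ∀ g ∈ G, Function.Commute f g)
    (hmaps : ∀ g ∈ G, ∀ x, g x ∈ A ↔ x ∈ A) {ν : Measure E}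
    (huniq : ∀ ρ : Measure E, IsProbabilityMeasure ρ → ρ A = 1 →
      (∀ g ∈ G, MeasurePreserving g ρ ρ) → ρ = ν)
    (hsupp : ∀ U : Set E, IsOpen U → (U ∩ A).Nonempty → ν U ≠ 0) {y : E} (hy : y ∈ A) :
    closure (grpOrbit G y) = A := by
  have hsub : closure (grpOrbit G y) ⊆ A := by
    refine closure_minimal ?_ hA
    rintro _ ⟨g, hg, rfl⟩
    have : ∀ x, g x ∈ A ↔ x ∈ A := by
      induction hg using Subgroup.closure_induction with
      | mem g hg => exact hmaps g hg
      | one => exact fun x => Iff.rfl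
      | mul a b _ _ ha hb => exact fun x => (ha (b x)).trans (hb x)
      | inv a _ ha =>
        intro x
        rw [← ha]
        exact iff_of_eq (congrArg (· ∈ A) (a.apply_symm_apply x))
    exact (this y).2 hy
  have hne : (closure (grpOrbit G y)).Nonempty :=
    ⟨y, subset_closure ⟨1, one_mem _, rfl⟩⟩
  refine eq_of_isClosed_of_mapsTo isClosed_closure hne hsub hG hcomm (fun g hg => ?_) huniq hsupp
  refine Set.MapsTo.closure ?_ g.continuous
  rintro _ ⟨k, hk, rfl⟩
  exact ⟨g * k, mul_mem (Subgroup.subset_closure hg) hk, rfl⟩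

end KrylovBogoliubov

section Independence

lemma measurePreserving_map_of_semiconj {α β : Type*} [MeasurableSpace α] [MeasurableSpace β]
    {l : Measure α} {h : α → α} {r : α → β} {h' : β → β} (hh : MeasurePreserving h l l)
    (hr : Measurable r) (hh' : Measurable h') (hs : ∀ a, r (h a) = h' (r a)) :
    MeasurePreserving h' (l.map r) (l.map r) := by
  refine ⟨hh', ?_⟩
  rw [Measure.map_map hh' hr]
  have : h' ∘ r = r ∘ h := funext fun a => (hs a).symm
  rw [this, ← Measure.map_map hr hh.measurable, hh.map_eq]

lemma eq_prod_of_ergodic_fst {α β : Type*} [MeasurableSpace α] [MeasurableSpace β]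
    {l : Measure (α × β)} [IsProbabilityMeasure l] {f : α → α} (hf : Ergodic f l.fst)
    (hl : MeasurePreserving (Prod.map f id) l l) : l = l.fst.prod l.snd := by
  symm
  refine Measure.prod_eq fun U V hU hV => ?_
  have hreal : l.real (U ×ˢ V) = l.fst.real U * l.snd.real V := by
    have hVm : Measurable (V.indicator (1 : β → ℝ)) := measurable_one.indicator hV
    have hUm : Measurable (U.indicator (1 : α → ℝ)) := measurable_one.indicator hU
    have hU2 : MemLp (U.indicator (1 : α → ℝ)) 2 l.fst :=
      (memLp_const (1 : ℝ)).indicator hU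
    have hfst : MeasurePreserving (Prod.fst : α × β → α) l l.fst := ⟨measurable_fst, rfl⟩
    have hit : ∀ n, MeasurePreserving (Prod.map f^[n] (id : β → β)) l l := fun n => by
      have := hl.iterate n
      rwa [Prod.map_iterate, Function.iterate_id] at this
    have hprod : ∀ n, ∫ z, U.indicator (1 : α → ℝ) (f^[n] z.1) * V.indicator (1 : β → ℝ) z.2 ∂l =
        l.real (U ×ˢ V) := by
      intro n
      have e : (fun z : α × β => U.indicator (1 : α → ℝ) (f^[n] z.1) *
          V.indicator (1 : β → ℝ) z.2) =
          (Prod.map f^[n] (id : β → β) ⁻¹' (U ×ˢ V)).indicator 1 := by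
        ext z
        by_cases h1 : f^[n] z.1 ∈ U <;> by_cases h2 : z.2 ∈ V <;>
          simp [Set.indicator, h1, h2]
      rw [e, integral_indicator_one ((hit n).measurable (hU.prod hV)),
        (hit n).measureReal_preimage (hU.prod hV).nullMeasurableSet]
    have hV' : ∫ z, V.indicator (1 : β → ℝ) z.2 ∂l = l.snd.real V := by
      rw [← integral_indicator_one hV, Measure.snd,
        integral_map measurable_snd.aemeasurable hVm.aestronglyMeasurable]
    have hbound : ∀ (g : α × β → ℝ) (z : α × β), ‖V.indicator (1 : β → ℝ) z.2‖ ≤ 1 := fun g z => by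
      by_cases h2 : z.2 ∈ V <;> simp [Set.indicator, h2]
    have hint : ∀ g : α → ℝ, Integrable g l.fst →
        Integrable (fun z : α × β => g z.1 * V.indicator (1 : β → ℝ) z.2) l := fun g hg =>
      (hfst.integrable_comp_of_integrable hg).mul_bdd (c := 1)
        (hVm.comp measurable_snd).aestronglyMeasurable (ae_of_all _ (hbound fun _ => 0))
    have hle : ∀ N : ℕ, 0 < N → |l.real (U ×ˢ V) - l.fst.real U * l.snd.real V| ≤
        ∫ x, |orbitAverage f (U.indicator (1 : α → ℝ)) N x - l.fst.real U| ∂l.fst := by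
      intro N hN
      have hI : Integrable (orbitAverage f (U.indicator (1 : α → ℝ)) N) l.fst :=
        (memLp_orbitAverage hf.toMeasurePreserving hU2 N).integrable (by norm_num)
      have e1 : ∫ z, orbitAverage f (U.indicator (1 : α → ℝ)) N z.1 *
          V.indicator (1 : β → ℝ) z.2 ∂l = l.real (U ×ˢ V) := by
        simp only [orbitAverage, mul_assoc, Finset.sum_mul, integral_const_mul]
        rw [integral_finsetSum]
        · simp only [hprod, Finset.sum_const, Finset.card_range, nsmul_eq_mul]
          rw [inv_mul_cancel_left₀ (by positivity)]
        · intro n _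
          exact hint _ (((hf.toMeasurePreserving.iterate n).integrable_comp_of_integrable
            (hU2.integrable (by norm_num))))
      have e2 : l.real (U ×ˢ V) - l.fst.real U * l.snd.real V =
          ∫ z, (orbitAverage f (U.indicator (1 : α → ℝ)) N z.1 - l.fst.real U) *
            V.indicator (1 : β → ℝ) z.2 ∂l := by
        simp only [sub_mul]
        rw [integral_sub (hint _ hI) ((hint _ (integrable_const (l.fst.real U)))), e1,
          integral_const_mul, hV']
      rw [e2]
      refine (abs_integral_le_integral_abs).trans ?_
      have hI' := hI.sub (integrable_const (l.fst.real U))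
      have e3 : ∫ x, |orbitAverage f (U.indicator (1 : α → ℝ)) N x - l.fst.real U| ∂l.fst =
          ∫ z, |orbitAverage f (U.indicator (1 : α → ℝ)) N z.1 - l.fst.real U| ∂l :=
        integral_map measurable_fst.aemeasurable hI'.abs.aestronglyMeasurable
      rw [e3]
      refine integral_mono (hint _ hI').abs (hfst.integrable_comp_of_integrable hI').abs ?_
      intro z
      simp only [abs_mul]
      exact mul_le_of_le_one_right (abs_nonneg _) (hbound (fun _ => 0) z)
    have ht := tendsto_integral_abs_orbitAverage hf hU2
    simp only [integral_indicator_one hU] at ht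
    have h0 : |l.real (U ×ˢ V) - l.fst.real U * l.snd.real V| ≤ 0 :=
      ge_of_tendsto ht (eventually_atTop.2 ⟨1, fun N hN => hle N hN⟩)
    exact sub_eq_zero.1 (abs_nonpos_iff.1 h0)
  have h1 := congrArg ENNReal.ofReal hreal
  rwa [ENNReal.ofReal_mul measureReal_nonneg, ofReal_measureReal, ofReal_measureReal,
    ofReal_measureReal] at h1

variable {Y : Type*} [MeasurableSpace Y] {S : Y → Y} {ν : Measure Y} [IsProbabilityMeasure ν]
  {ι : Type*}

/-- Applies `S` to the coordinates satisfying `p`. -/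
def partialDiag (S : Y → Y) (p : ι → Prop) [DecidablePred p] (y : ι → Y) : ι → Y :=
  fun i => if p i then S (y i) else y i

lemma measurable_partialDiag (hS : Measurable S) (p : ι → Prop) [DecidablePred p] :
    Measurable (partialDiag S p) := by
  refine measurable_pi_lambda _ fun i => ?_
  unfold partialDiag
  split_ifs
  · exact hS.comp (measurable_pi_apply i)
  · exact measurable_pi_apply i

/-- Restriction of a family to a subtype of the index set. -/
def restrictIndex (p : ι → Prop) (y : ι → Y) : {i // p i} → Y := fun i => y i

lemma measurable_restrictIndex (p : ι → Prop) :
    Measurable (restrictIndex (Y := Y) p) :=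
  measurable_pi_lambda _ fun _ => measurable_pi_apply _

lemma injective_restrict_castSucc {k : ℕ} {σ : ι → Fin (k + 1) → Bool}
    (hσ : Function.Injective σ) {p : ι → Prop} (b : Bool) (hp : ∀ i, p i → σ i (Fin.last k) = b) :
    Function.Injective fun (i : {i // p i}) (j : Fin k) => σ i j.castSucc := by
  intro i i' h
  refine Subtype.ext (hσ (funext fun j => ?_))
  induction j using Fin.lastCases with
  | last => rw [hp i i.2, hp i' i'.2]
  | cast j => exact congrFun h j

variable [Fintype ι]

lemma eq_pi_of_restrictIndex (hS : MeasurePreserving S ν ν) (hw : WeakMixing ν S)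
    (p : ι → Prop) [DecidablePred p] {κ : ι → Measure Y} [∀ i, IsProbabilityMeasure (κ i)]
    (hκ : ∀ i, p i → κ i = ν) {l : Measure (ι → Y)} [IsProbabilityMeasure l]
    (hl : MeasurePreserving (partialDiag S p) l l)
    (h1 : l.map (restrictIndex p) = Measure.pi fun _ => ν)
    (h2 : l.map (restrictIndex fun i => ¬ p i) = Measure.pi fun i : {i // ¬ p i} => κ i) :
    l = Measure.pi κ := by
  let e := MeasurableEquiv.piEquivPiSubtypeProd (fun _ : ι => Y) p
  have he : ∀ y, e y = (restrictIndex p y, restrictIndex (fun i => ¬ p i) y) := fun y => rfl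
  have hprob : IsProbabilityMeasure (l.map e) :=
    Measure.isProbabilityMeasure_map e.measurable.aemeasurable
  have hfst : (l.map e).fst = Measure.pi fun _ => ν := by
    rw [← h1, Measure.fst, Measure.map_map measurable_fst e.measurable]; rfl
  have hsnd : (l.map e).snd = Measure.pi fun i : {i // ¬ p i} => κ i := by
    rw [← h2, Measure.snd, Measure.map_map measurable_snd e.measurable]; rfl
  have hdm : Measurable fun (y : {i // p i} → Y) i => S (y i) :=
    (measurePreserving_diag hS).measurable
  have hmp : MeasurePreserving (Prod.map (fun (y : {i // p i} → Y) i => S (y i)) id)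
      (l.map e) (l.map e) := by
    refine measurePreserving_map_of_semiconj hl e.measurable (hdm.prodMap measurable_id) fun y => ?_
    simp only [he, Prod.map_apply, id_eq]
    refine Prod.ext (funext fun i => ?_) (funext fun i => ?_)
    · exact if_pos i.2
    · exact if_neg i.2
  have herg : Ergodic (fun (y : {i // p i} → Y) i => S (y i)) (l.map e).fst := by
    rw [hfst]; exact hw.ergodic_pi hS
  have hfin := eq_prod_of_ergodic_fst herg hmp
  rw [hfst, hsnd] at hfin
  have hpi := (measurePreserving_piEquivPiSubtypeProd κ p).map_eq
  have hpκ : (fun i : {i // p i} => κ i) = fun _ => ν := funext fun i => hκ i i.2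
  have : l.map e = (Measure.pi κ).map e := by
    rw [hfin]
    refine Eq.trans ?_ hpi.symm
    congr 1
    exact congrArg Measure.pi hpκ.symm
  exact e.map_measurableEquiv_injective this

lemma eq_pi_of_subsingleton [Subsingleton ι] {κ : ι → Measure Y}
    [∀ i, IsProbabilityMeasure (κ i)] {l : Measure (ι → Y)} [IsProbabilityMeasure l]
    (h : ∀ i, l.map (fun y => y i) = κ i) : l = Measure.pi κ := by
  refine (Measure.pi_eq fun s hs => ?_).symm
  rcases isEmpty_or_nonempty ι with hι | ⟨⟨i⟩⟩
  · simp [show Set.univ.pi s = Set.univ from Set.eq_univ_of_forall fun y i _ => isEmptyElim i]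
  · rw [Fintype.prod_subsingleton _ i, ← h i, Measure.map_apply (measurable_pi_apply i) (hs i)]
    congr 1
    ext y
    simp only [Set.mem_pi, Set.mem_univ, true_imp_iff, Set.mem_preimage]
    exact ⟨fun h => h i, fun h j => Subsingleton.elim i j ▸ h⟩

lemma eq_pi_of_invariant_cube (hS : MeasurePreserving S ν ν) (hw : WeakMixing ν S)
    (huniq : ∀ ρ : Measure Y, IsProbabilityMeasure ρ → MeasurePreserving S ρ ρ → ρ = ν)
    {k : ℕ} {σ : ι → Fin k → Bool} (hσ : Function.Injective σ) {l : Measure (ι → Y)}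
    [IsProbabilityMeasure l] (hdiag : MeasurePreserving (fun (y : ι → Y) i => S (y i)) l l)
    (hface : ∀ j, MeasurePreserving (partialDiag S fun i => σ i j = true) l l) :
    l = Measure.pi fun _ => ν := by
  have hdm : ∀ {ι : Type _} , Measurable fun (y : ι → Y) i => S (y i) := fun {ι} =>
    measurable_pi_lambda _ fun i => hS.measurable.comp (measurable_pi_apply i)
  induction k generalizing ι with
  | zero =>
    have : Subsingleton ι := hσ.subsingleton
    refine eq_pi_of_subsingleton fun i => huniq _ ?_ ?_
    · exact Measure.isProbabilityMeasure_map (measurable_pi_apply i).aemeasurable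
    · exact measurePreserving_map_of_semiconj hdiag (measurable_pi_apply i) hS.measurable
        fun y => rfl
  | succ k ih =>
    have half : ∀ (p : ι → Prop) [DecidablePred p] (b : Bool),
        (∀ i, p i → σ i (Fin.last k) = b) →
        l.map (restrictIndex p) = Measure.pi fun _ => ν := by
      intro p _ b hp
      have hr := measurable_restrictIndex (Y := Y) p
      have := Measure.isProbabilityMeasure_map (μ := l) hr.aemeasurable
      refine ih (injective_restrict_castSucc hσ b hp) ?_ fun j => ?_
      · exact measurePreserving_map_of_semiconj hdiag hr hdm fun y => rfl
      · exact measurePreserving_map_of_semiconj (hface j.castSucc) hr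
          (measurable_partialDiag hS.measurable _) fun y => rfl
    exact eq_pi_of_restrictIndex hS hw _ (fun _ _ => rfl) (hface (Fin.last k))
      (half _ true fun i h => h) (half _ false fun i h => by simpa using h)

lemma eq_pi_of_invariant_face (hS : MeasurePreserving S ν ν) (hw : WeakMixing ν S)
    (huniq : ∀ ρ : Measure Y, IsProbabilityMeasure ρ → MeasurePreserving S ρ ρ → ρ = ν)
    {k : ℕ} {σ : ι → Fin k → Bool} (hσ : Function.Injective σ) {l : Measure (ι → Y)}
    [IsProbabilityMeasure l]
    (hface : ∀ j, MeasurePreserving (partialDiag S fun i => σ i j = true) l l)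
    {κ : ι → Measure Y} [∀ i, IsProbabilityMeasure (κ i)]
    (hκ0 : ∀ i, (∀ j, σ i j = false) → l.map (fun y => y i) = κ i)
    (hκ1 : ∀ i j, σ i j = true → κ i = ν) :
    l = Measure.pi κ := by
  induction k generalizing ι with
  | zero =>
    have : Subsingleton ι := hσ.subsingleton
    exact eq_pi_of_subsingleton fun i => hκ0 i fun j => j.elim0
  | succ k ih =>
    refine eq_pi_of_restrictIndex hS hw (fun i => σ i (Fin.last k) = true)
      (fun i hi => hκ1 i _ hi) (hface (Fin.last k)) ?_ ?_
    · have hr := measurable_restrictIndex (Y := Y) fun i => σ i (Fin.last k) = true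
      have := Measure.isProbabilityMeasure_map (μ := l) hr.aemeasurable
      refine eq_pi_of_invariant_cube hS hw huniq
        (injective_restrict_castSucc hσ true fun i h => h) ?_ fun j => ?_
      · refine measurePreserving_map_of_semiconj (hface (Fin.last k)) hr
          (measurable_pi_lambda _ fun i => hS.measurable.comp (measurable_pi_apply i))
          fun y => funext fun i => if_pos i.2
      · exact measurePreserving_map_of_semiconj (hface j.castSucc) hr
          (measurable_partialDiag hS.measurable _) fun y => rfl
    · have hr := measurable_restrictIndex (Y := Y) fun i => ¬ σ i (Fin.last k) = true
      have := Measure.isProbabilityMeasure_map (μ := l) hr.aemeasurable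
      refine ih (injective_restrict_castSucc hσ false fun i h => by simpa using h)
        (fun j => ?_) (fun i hi => ?_) fun i j hij => hκ1 i _ hij
      · exact measurePreserving_map_of_semiconj (hface j.castSucc) hr
          (measurable_partialDiag hS.measurable _) fun y => rfl
      · rw [Measure.map_map (measurable_pi_apply i) hr, ← hκ0 i]
        · rfl
        · intro j
          induction j using Fin.lastCases with
          | last => simpa using i.2
          | cast j => exact hi j

end Independence

section CubeModel

variable {Y : Type*} [TopologicalSpace Y]

lemma faceHomeo_apply (S : Y ≃ₜ Y) {d : ℕ} (j : Fin d) (y : (Fin d → Bool) → Y) :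
    faceHomeo S j y = partialDiag S (fun ε => ε j = true) y := by
  ext ε
  by_cases h : ε j = true <;> simp [faceHomeo, partialDiag, h]

lemma diagHomeo_apply (S : Y ≃ₜ Y) (d : ℕ) (y : (Fin d → Bool) → Y) :
    diagHomeo S d y = fun ε => S (y ε) := rfl

lemma commute_faceHomeo (S : Y ≃ₜ Y) {d : ℕ} (i j : Fin d) :
    Function.Commute (faceHomeo S i) (faceHomeo S j) := by
  intro y
  simp only [faceHomeo_apply]
  ext ε
  simp only [partialDiag]
  split_ifs <;> rfl

lemma commute_diagHomeo_faceHomeo (S : Y ≃ₜ Y) {d : ℕ} (j : Fin d) :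
    Function.Commute (diagHomeo S d) (faceHomeo S j) := by
  intro y
  simp only [faceHomeo_apply, diagHomeo_apply]
  ext ε
  simp only [partialDiag]
  split_ifs <;> rfl

lemma commute_faceGens (S : Y ≃ₜ Y) (d : ℕ) :
    ∀ f ∈ faceGens S d, ∀ g ∈ faceGens S d, Function.Commute f g := by
  rintro _ ⟨i, rfl⟩ _ ⟨j, rfl⟩
  exact commute_faceHomeo S i j

lemma commute_parallelepipedGens (S : Y ≃ₜ Y) (d : ℕ) :
    ∀ f ∈ parallelepipedGens S d, ∀ g ∈ parallelepipedGens S d, Function.Commute f g := by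
  rintro _ (rfl | ⟨i, rfl⟩) _ (rfl | ⟨j, rfl⟩)
  · exact Function.Commute.refl _
  · exact commute_diagHomeo_faceHomeo S j
  · exact (commute_diagHomeo_faceHomeo S i).symm
  · exact commute_faceHomeo S i j

variable [MeasurableSpace Y]

lemma pi_ne_zero_of_isOpen {ι : Type*} [Fintype ι] {κ : ι → Measure Y} [∀ i, SigmaFinite (κ i)]
    {z : ι → Y} (h : ∀ i, ∀ u : Set Y, IsOpen u → z i ∈ u → κ i u ≠ 0) {U : Set (ι → Y)}
    (hU : IsOpen U) (hz : z ∈ U) : Measure.pi κ U ≠ 0 := by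
  obtain ⟨u, hu, hsub⟩ := isOpen_pi_iff'.1 hU z hz
  intro h0
  have := measure_mono_null hsub h0
  rw [Measure.pi_pi, Finset.prod_eq_zero_iff] at this
  obtain ⟨i, -, hi⟩ := this
  exact h i (u i) (hu i).1 (hu i).2 hi

variable [CompactSpace Y] [TopologicalSpace.MetrizableSpace Y] [BorelSpace Y]
  {S : Y ≃ₜ Y} {ν : Measure Y} [IsProbabilityMeasure ν]

lemma strictlyErgodicHomeo_of_unique (hS : MeasurePreserving S ν ν)
    (huniq : ∀ ρ : Measure Y, IsProbabilityMeasure ρ → MeasurePreserving S ρ ρ → ρ = ν)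
    (hsupp : ∀ U : Set Y, IsOpen U → U.Nonempty → ν U ≠ 0) : StrictlyErgodicHomeo S := by
  refine ⟨fun y => ?_, ν, ⟨inferInstance, hS⟩, fun ρ hρ => huniq ρ hρ.1 hρ.2⟩
  have h : closure (grpOrbit {S} y) = Set.univ := by
    refine closure_grpOrbit_eq isClosed_univ (Set.finite_singleton S) ?_ (by simp) (ν := ν)
      (fun ρ hρ _ h => huniq ρ hρ (h S rfl)) (fun U hU hne => hsupp U hU (by simpa using hne))
      (Set.mem_univ y)
    rintro _ rfl _ rfl
    exact Function.Commute.refl _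
  refine dense_iff_closure_eq.2 (Set.eq_univ_of_univ_subset (h ▸ closure_mono ?_))
  rintro _ ⟨g, hg, rfl⟩
  obtain ⟨n, rfl⟩ := Subgroup.mem_closure_singleton.1 hg
  exact ⟨n, rfl⟩

variable [SecondCountableTopology Y]

lemma strictlyErgodicOn_faceGens (hS : MeasurePreserving S ν ν) (hw : WeakMixing ν S)
    (huniq : ∀ ρ : Measure Y, IsProbabilityMeasure ρ → MeasurePreserving S ρ ρ → ρ = ν)
    (hsupp : ∀ U : Set Y, IsOpen U → U.Nonempty → ν U ≠ 0) (d : ℕ) (y : Y) :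
    StrictlyErgodicOn (faceGens S d) (closure (grpOrbit (faceGens S d) fun _ => y)) := by
  classical
  let A : Set ((Fin d → Bool) → Y) := {z | z (fun _ => false) = y}
  let κ : (Fin d → Bool) → Measure Y := fun ε =>
    if ε = fun _ => false then Measure.dirac y else ν
  have hκ : ∀ ε, IsProbabilityMeasure (κ ε) := fun ε => by
    simp only [κ]; split_ifs <;> infer_instance
  have hA : IsClosed A := isClosed_eq (continuous_apply _) continuous_const
  have hmaps : ∀ g ∈ faceGens S d, ∀ z, g z ∈ A ↔ z ∈ A := by
    rintro _ ⟨j, rfl⟩ z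
    change faceHomeo S j z (fun _ => false) = y ↔ _
    rw [faceHomeo_apply]
    simp [partialDiag, A]
  have huniq' : ∀ ρ : Measure ((Fin d → Bool) → Y), IsProbabilityMeasure ρ → ρ A = 1 →
      (∀ g ∈ faceGens S d, MeasurePreserving g ρ ρ) → ρ = Measure.pi κ := by
    intro ρ hρ hρA hinv
    refine eq_pi_of_invariant_face hS hw huniq (σ := id) Function.injective_id (fun j => ?_)
      (fun ε hε => ?_) fun ε j hε => if_neg ?_
    · have := hinv _ ⟨j, rfl⟩
      rwa [show ⇑(faceHomeo S j) = _ from funext (faceHomeo_apply S j)] at this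
    · obtain rfl : ε = fun _ => false := funext hε
      have hd : ∀ᵐ z ∂ρ, z (fun _ => false) = y := (prob_compl_eq_zero_iff hA.measurableSet).2 hρA
      rw [Measure.map_congr hd, Measure.map_const]
      simp [κ]
    · rintro rfl
      simp at hε
  have hsupp' : ∀ z ∈ A, ∀ U : Set ((Fin d → Bool) → Y), IsOpen U → z ∈ U →
      Measure.pi κ U ≠ 0 := by
    intro z hz U hU hzU
    refine pi_ne_zero_of_isOpen (fun ε u hu hzu => ?_) hU hzU
    simp only [κ]
    split_ifs with h
    · subst h
      have hz' : z (fun _ => false) = y := hz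
      rw [hz'] at hzu
      simp [hzu]
    · exact hsupp u hu ⟨_, hzu⟩
  have hmin : ∀ z ∈ A, closure (grpOrbit (faceGens S d) z) = A := fun z hz =>
    closure_grpOrbit_eq hA (Set.finite_range _) (commute_faceGens S d) hmaps huniq'
      (fun U hU ⟨z, hzU, hz⟩ => hsupp' z hz U hU hzU) hz
  have hy : (fun _ => y) ∈ A := rfl
  rw [hmin _ hy]
  refine ⟨hmin, Measure.pi κ, ⟨inferInstance, ?_, ?_⟩, fun ρ hρ => huniq' ρ hρ.1 hρ.2.1 hρ.2.2⟩
  · rw [← prob_compl_eq_zero_iff hA.measurableSet]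
    have : Aᶜ = (fun z : (Fin d → Bool) → Y => z (fun _ => false)) ⁻¹' {y}ᶜ := rfl
    rw [this]
    have hm := (measurePreserving_eval κ (fun _ => false)).measure_preimage
      (measurableSet_singleton y).compl.nullMeasurableSet
    refine hm.trans ?_
    simp [κ]
  · rintro _ ⟨j, rfl⟩
    have hp := measurePreserving_pi κ κ (f := fun ε => if ε j then S else id) fun ε => ?_
    · convert hp using 1
      ext z ε
      rw [faceHomeo_apply]
      simp only [partialDiag]
      split_ifs <;> rfl
    · split_ifs with h
      · have : κ ε = ν := if_neg (by rintro rfl; simp at h)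
        rwa [this]
      · exact MeasurePreserving.id _

lemma strictlyErgodicOn_parallelepipedGens [Nonempty Y] (hS : MeasurePreserving S ν ν)
    (hw : WeakMixing ν S)
    (huniq : ∀ ρ : Measure Y, IsProbabilityMeasure ρ → MeasurePreserving S ρ ρ → ρ = ν)
    (hsupp : ∀ U : Set Y, IsOpen U → U.Nonempty → ν U ≠ 0) (d : ℕ) :
    StrictlyErgodicOn (parallelepipedGens S d) (Qset S d) := by
  have huniq' : ∀ ρ : Measure ((Fin d → Bool) → Y), IsProbabilityMeasure ρ → ρ Set.univ = 1 →
      (∀ g ∈ parallelepipedGens S d, MeasurePreserving g ρ ρ) → ρ = Measure.pi fun _ => ν := by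
    intro ρ hρ _ hinv
    refine eq_pi_of_invariant_cube hS hw huniq (σ := id) Function.injective_id
      (hinv _ (Set.mem_insert _ _)) fun j => ?_
    have := hinv _ (Set.mem_insert_of_mem _ ⟨j, rfl⟩)
    rwa [show ⇑(faceHomeo S j) = _ from funext (faceHomeo_apply S j)] at this
  have hsupp' : ∀ U : Set ((Fin d → Bool) → Y), IsOpen U → (U ∩ Set.univ).Nonempty →
      Measure.pi (fun _ : Fin d → Bool => ν) U ≠ 0 := fun U hU ⟨z, hz, _⟩ =>
    pi_ne_zero_of_isOpen (fun i u hu hzu => hsupp u hu ⟨_, hzu⟩) hU hz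
  have hfin : (parallelepipedGens S d).Finite := (Set.finite_range _).insert _
  have hQ : Qset S d = Set.univ := by
    refine eq_of_isClosed_of_mapsTo isClosed_closure ?_ (Set.subset_univ _) hfin
      (commute_parallelepipedGens S d) ?_ huniq' hsupp'
    · obtain ⟨y⟩ := ‹Nonempty Y›
      exact ⟨_, subset_closure ⟨0, y, rfl⟩⟩
    · have hSz : ∀ (m : ℤ) (y : Y), S ((S ^ m) y) = (S ^ (m + 1)) y := fun m y => by
        rw [add_comm, zpow_add, zpow_one]; rfl
      have hSz' : ∀ (m : ℤ) (y : Y), S ((S ^ m) y) = (S ^ m) (S y) := fun m y => by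
        rw [hSz, zpow_add, zpow_one]; rfl
      rintro g (rfl | ⟨j, rfl⟩)
      · refine Set.MapsTo.closure ?_ (Homeomorph.continuous _)
        rintro _ ⟨n, y, rfl⟩
        exact ⟨n, S y, funext fun ε => hSz' _ y⟩
      · refine Set.MapsTo.closure ?_ (Homeomorph.continuous _)
        rintro _ ⟨n, y, rfl⟩
        refine ⟨n + Pi.single j 1, y, ?_⟩
        rw [faceHomeo_apply]
        ext ε
        have hsum : (∑ i, if ε i then (n + Pi.single j 1 : Fin d → ℤ) i else 0) =
            (∑ i, if ε i then n i else 0) + if ε j then 1 else 0 := by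
          have : ∀ i, (if ε i then (n + Pi.single j 1 : Fin d → ℤ) i else 0) =
              (if ε i then n i else 0) + if i = j then (if ε j then 1 else 0) else 0 := by
            intro i
            by_cases hi : i = j
            · subst hi; by_cases h : ε i <;> simp [h]
            · by_cases h : ε i <;> simp [h, hi]
          simp only [this, Finset.sum_add_distrib, Finset.sum_ite_eq', Finset.mem_univ, if_true]
        simp only [partialDiag]
        rw [hsum]
        by_cases h : ε j = true
        · simp only [h, if_true]
          exact hSz _ y
        · simp [h]
  rw [hQ]
  refine ⟨fun z hz => closure_grpOrbit_eq isClosed_univ hfin (commute_parallelepipedGens S d)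
    (fun _ _ _ => by simp) huniq' hsupp' hz, Measure.pi fun _ => ν,
    ⟨inferInstance, measure_univ, ?_⟩, fun ρ hρ => huniq' ρ hρ.1 hρ.2.1 hρ.2.2⟩
  rintro _ (rfl | ⟨j, rfl⟩)
  · exact measurePreserving_diag hS
  · have hp := measurePreserving_pi (fun _ : Fin d → Bool => ν) (fun _ : Fin d → Bool => ν)
      (f := fun ε => if ε j then S else id) fun ε => ?_
    · convert hp using 1
      ext z ε
      rw [faceHomeo_apply]
      simp only [partialDiag]
      split_ifs <;> rfl
    · split_ifs
      · exact hS
      · exact MeasurePreserving.id _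

end CubeModel

section Powers

variable {X : Type*} [MeasurableSpace X]

/-- Integer powers of a measurable automorphism, as functions. -/
def zpt (T : X ≃ᵐ X) (i : ℤ) : X → X := ((T.toEquiv : Equiv.Perm X) ^ i : Equiv.Perm X)

variable (T : X ≃ᵐ X)

@[simp] lemma zpt_zero (x : X) : zpt T 0 x = x := rfl

lemma zpt_one (x : X) : zpt T 1 x = T x := by
  simp [zpt]

lemma zpt_add (i j : ℤ) (x : X) : zpt T (i + j) x = zpt T i (zpt T j x) := by
  simp [zpt, zpow_add]

lemma zpt_add_one (i : ℤ) (x : X) : zpt T (i + 1) x = T (zpt T i x) := by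
  rw [add_comm, zpt_add, zpt_one]

lemma zpt_add_one' (i : ℤ) (x : X) : zpt T (i + 1) x = zpt T i (T x) := by
  rw [zpt_add, zpt_one]

lemma zpt_natCast (n : ℕ) (x : X) : zpt T n x = T^[n] x := by
  induction n with
  | zero => rfl
  | succ n ih => rw [Nat.cast_succ, zpt_add_one, ih, Function.iterate_succ_apply']

lemma zpt_neg_cancel (i : ℤ) (x : X) : zpt T (-i) (zpt T i x) = x := by
  rw [← zpt_add]; simp

lemma zpt_cancel_neg (i : ℤ) (x : X) : zpt T i (zpt T (-i) x) = x := by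
  rw [← zpt_add]; simp

lemma zpt_neg_one (x : X) : zpt T (-1) x = T.symm x := by
  apply T.injective
  rw [T.apply_symm_apply, ← zpt_one, zpt_cancel_neg]

lemma measurePreserving_zpt {μ : Measure X} (hT : MeasurePreserving T μ μ) (i : ℤ) :
    MeasurePreserving (zpt T i) μ μ := by
  have hs : MeasurePreserving T.symm μ μ := hT.symm T
  induction i with
  | zero => exact MeasurePreserving.id μ
  | succ n ih =>
    have : zpt T (n + 1) = T ∘ zpt T n := funext fun x => zpt_add_one T _ x
    rw [this]; exact hT.comp ih
  | pred n ih =>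
    have : zpt T (-n - 1) = T.symm ∘ zpt T (-n) := funext fun x => by
      rw [sub_eq_neg_add, zpt_add, zpt_neg_one]; rfl
    rw [this]; exact hs.comp ih

lemma measurable_zpt (i : ℤ) : Measurable (zpt T i) := by
  induction i with
  | zero => exact measurable_id
  | succ n ih =>
    have : zpt T (n + 1) = T ∘ zpt T n := funext fun x => zpt_add_one T _ x
    rw [this]; exact T.measurable.comp ih
  | pred n ih =>
    have : zpt T (-n - 1) = T.symm ∘ zpt T (-n) := funext fun x => by
      rw [sub_eq_neg_add, zpt_add, zpt_neg_one]; rfl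
    rw [this]; exact T.symm.measurable.comp ih

end Powers

section Markers

variable {X : Type*} [MeasurableSpace X] {T : X ≃ᵐ X}

/-- A set whose points have return times at least `L`. -/
def IsGapped (T : X ≃ᵐ X) (B : Set X) (L : ℕ) : Prop :=
  ∀ x ∈ B, ∀ i : ℕ, 0 < i → i < L → zpt T i x ∉ B

lemma exists_cover_disjoint_translates [StandardBorelSpace X]
    (hap : ∀ x, ∀ i : ℕ, 0 < i → zpt T i x ≠ x) (L : ℕ) :
    ∃ V : ℕ → Set X, (∀ n, MeasurableSet (V n)) ∧ (∀ x, ∃ n, x ∈ V n) ∧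
      ∀ n, IsGapped T (V n) L := by
  obtain ⟨A, hAm, hA⟩ : ∃ A : ℕ → Set X, (∀ n, MeasurableSet (A n)) ∧
      ∀ x y, (∀ n, x ∈ A n ↔ y ∈ A n) → x = y := by
    obtain ⟨A, hA, hsep⟩ := exists_seq_separating X (p := MeasurableSet) MeasurableSet.empty Set.univ
    exact ⟨A, hA, fun x y h => hsep x (Set.mem_univ x) y (Set.mem_univ y) h⟩
  let A' : ℕ × Bool → Set X := fun p => if p.2 then A p.1 else (A p.1)ᶜ
  have hA'm : ∀ p, MeasurableSet (A' p) := fun p => by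
    simp only [A']; split_ifs
    · exact hAm _
    · exact (hAm _).compl
  have hA' : ∀ x y, x ≠ y → ∃ p, x ∈ A' p ∧ y ∉ A' p := by
    intro x y hxy
    by_contra! h
    refine hxy (hA x y fun n => ⟨fun hx => ?_, fun hy => ?_⟩)
    · simpa [A'] using h (n, true) (by simpa [A'] using hx)
    · by_contra hx
      have := h (n, false) (by simpa [A'] using hx)
      simp [A'] at this
      exact this hy
  let V : (Fin L → ℕ × Bool) → Set X := fun c =>
    ⋂ i : Fin L, {x | 0 < (i : ℕ) → x ∈ A' (c i) ∧ zpt T (i : ℕ) x ∉ A' (c i)}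
  obtain ⟨e, he⟩ := exists_surjective_nat (Fin L → ℕ × Bool)
  refine ⟨fun n => V (e n), fun n => MeasurableSet.iInter fun i => ?_, fun x => ?_,
    fun n x hx i hi hiL hx' => ?_⟩
  · by_cases hi : 0 < (i : ℕ)
    · simp only [hi, true_imp_iff]
      exact (hA'm _).inter ((measurable_zpt T _) (hA'm _)).compl
    · simp [hi]
  · choose! p hp using fun i : Fin L => fun hi : 0 < (i : ℕ) => hA' x _ (hap x i hi).symm
    obtain ⟨n, hn⟩ := he p
    refine ⟨n, ?_⟩
    simp only [V, hn]
    exact Set.mem_iInter.2 fun i hi => hp i hi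
  · exact (Set.mem_iInter.1 hx ⟨i, hiL⟩ hi).2 (Set.mem_iInter.1 hx' ⟨i, hiL⟩ hi).1

/-- Stages of the greedy selection of a maximal separated subset of `B`. -/
def greedy (T : X ≃ᵐ X) (B : Set X) (L : ℕ) (V : ℕ → Set X) : ℕ → Set X
  | 0 => ∅
  | n + 1 => greedy T B L V n ∪
      ((V n ∩ B) \ ⋃ i ∈ Finset.Ioo (-(L : ℤ)) L, zpt T i ⁻¹' greedy T B L V n)

lemma exists_marker [StandardBorelSpace X] (hap : ∀ x, ∀ i : ℕ, 0 < i → zpt T i x ≠ x)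
    {B : Set X} (hB : MeasurableSet B) {D : ℕ} (hD : ∀ x, ∃ i < D, zpt T i x ∈ B) {L : ℕ}
    (hDL : D ≤ L) :
    ∃ B' ⊆ B, MeasurableSet B' ∧ IsGapped T B' L ∧
      ∀ x, ∃ i : ℕ, i + 1 < 3 * L ∧ zpt T (i + 1 : ℕ) x ∈ B' := by
  obtain ⟨V, hVm, hVc, hVs⟩ := exists_cover_disjoint_translates hap L
  have hm : ∀ n, MeasurableSet (greedy T B L V n) := by
    intro n
    induction n with
    | zero => exact MeasurableSet.empty
    | succ n ih =>
      exact ih.union (((hVm n).inter hB).diff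
        (Finset.measurableSet_biUnion _ fun i _ => measurable_zpt T i ih))
  have hsub : ∀ n, greedy T B L V n ⊆ B := by
    intro n
    induction n with
    | zero => exact Set.empty_subset _
    | succ n ih => exact Set.union_subset ih fun x hx => hx.1.2
  have hmono : Monotone (greedy T B L V) := monotone_nat_of_le_succ fun n => Set.subset_union_left
  have hsep : ∀ n, IsGapped T (greedy T B L V n) L := by
    intro n
    induction n with
    | zero => exact fun x hx => hx.elim
    | succ n ih =>
      rintro x (hx | hx) i hi hiL (hx' | hx')
      · exact ih x hx i hi hiL hx'
      · refine hx'.2 (Set.mem_iUnion₂.2 ⟨-i, Finset.mem_Ioo.2 ⟨by omega, by omega⟩, ?_⟩)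
        rw [Set.mem_preimage, zpt_neg_cancel]
        exact hx
      · exact hx.2 (Set.mem_iUnion₂.2 ⟨i, Finset.mem_Ioo.2 ⟨by omega, by omega⟩, hx'⟩)
      · exact hVs n x hx.1.1 i hi hiL hx'.1.1
  refine ⟨⋃ n, greedy T B L V n, Set.iUnion_subset hsub, MeasurableSet.iUnion hm, ?_, fun x => ?_⟩
  · intro x hx i hi hiL hx'
    obtain ⟨n, hn⟩ := Set.mem_iUnion.1 hx
    obtain ⟨n', hn'⟩ := Set.mem_iUnion.1 hx'
    exact hsep (max n n') x (hmono (le_max_left _ _) hn) i hi hiL (hmono (le_max_right _ _) hn')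
  · obtain ⟨j, hj, hjB⟩ := hD (zpt T L x)
    rw [← zpt_add] at hjB
    obtain ⟨n, hn⟩ := hVc (zpt T (j + L) x)
    obtain ⟨i, hi1, hi2, hi3⟩ : ∃ i : ℤ, -L < i ∧ i < L ∧
        zpt T i (zpt T (j + L) x) ∈ greedy T B L V (n + 1) := by
      by_cases h : zpt T (j + L) x ∈ ⋃ i ∈ Finset.Ioo (-(L : ℤ)) L, zpt T i ⁻¹' greedy T B L V n
      · obtain ⟨i, hi, h⟩ := Set.mem_iUnion₂.1 h
        obtain ⟨h1, h2⟩ := Finset.mem_Ioo.1 hi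
        exact ⟨i, h1, h2, Or.inl h⟩
      · exact ⟨0, by omega, by omega, Or.inr ⟨⟨hn, hjB⟩, h⟩⟩
    rw [← zpt_add] at hi3
    obtain ⟨k, hk⟩ : ∃ k : ℕ, ((k + 1 : ℕ) : ℤ) = i + (j + L) :=
      ⟨(i + (j + L) - 1).toNat, by omega⟩
    exact ⟨k, by omega, Set.mem_iUnion.2 ⟨n + 1, hk ▸ hi3⟩⟩

end Markers

lemma abs_sum_sub_le_of_averages {a : ℕ → ℝ} (ha : ∀ i, 0 ≤ a i ∧ a i ≤ 1) (c : ℝ) {M : ℕ}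
    (hM : 0 < M) (t : ℕ) :
    |∑ i ∈ Finset.range t, (a i - c)| ≤
      M + ∑ i ∈ Finset.range t, |(M : ℝ)⁻¹ * ∑ m ∈ Finset.range M, a (i + m) - c| := by
  have hM' : (0 : ℝ) < M := by exact_mod_cast hM
  have hshift : ∀ m : ℕ, |∑ i ∈ Finset.range t, a i - ∑ i ∈ Finset.range t, a (i + m)| ≤ m := by
    intro m
    induction m with
    | zero => simp
    | succ m ih =>
      have h1 : ∑ i ∈ Finset.range t, a (i + m) - ∑ i ∈ Finset.range t, a (i + (m + 1)) =
          a m - a (t + m) := by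
        rw [← Finset.sum_sub_distrib]
        have := Finset.sum_range_sub' (fun i => a (i + m)) t
        simp only [zero_add] at this
        rw [← this]
        exact Finset.sum_congr rfl fun i _ => by rw [add_right_comm, ← add_assoc]
      have h2 : |a m - a (t + m)| ≤ 1 :=
        abs_le.2 ⟨by linarith [ha m, ha (t + m)], by linarith [ha m, ha (t + m)]⟩
      have := abs_add_le (∑ i ∈ Finset.range t, a i - ∑ i ∈ Finset.range t, a (i + m))
        (∑ i ∈ Finset.range t, a (i + m) - ∑ i ∈ Finset.range t, a (i + (m + 1)))
      rw [sub_add_sub_cancel, h1] at this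
      push_cast
      linarith
  have hcomm : ∑ i ∈ Finset.range t, (M : ℝ)⁻¹ * ∑ m ∈ Finset.range M, a (i + m) =
      (M : ℝ)⁻¹ * ∑ m ∈ Finset.range M, ∑ i ∈ Finset.range t, a (i + m) := by
    rw [← Finset.mul_sum, Finset.sum_comm]
  have hdiff : |∑ i ∈ Finset.range t, a i -
      (M : ℝ)⁻¹ * ∑ m ∈ Finset.range M, ∑ i ∈ Finset.range t, a (i + m)| ≤ M := by
    have e : ∑ i ∈ Finset.range t, a i -
        (M : ℝ)⁻¹ * ∑ m ∈ Finset.range M, ∑ i ∈ Finset.range t, a (i + m) =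
        (M : ℝ)⁻¹ * ∑ m ∈ Finset.range M,
          (∑ i ∈ Finset.range t, a i - ∑ i ∈ Finset.range t, a (i + m)) := by
      rw [Finset.sum_sub_distrib, mul_sub, Finset.sum_const, Finset.card_range, nsmul_eq_mul,
        inv_mul_cancel_left₀ hM'.ne']
    rw [e, abs_mul, abs_of_pos (inv_pos.2 hM'), inv_mul_le_iff₀ hM']
    refine (Finset.abs_sum_le_sum_abs _ _).trans ?_
    calc _ ≤ ∑ m ∈ Finset.range M, (M : ℝ) := by
          refine Finset.sum_le_sum fun m hm => (hshift m).trans ?_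
          exact_mod_cast (Finset.mem_range.1 hm).le
      _ = M * M := by simp
  have e : ∑ i ∈ Finset.range t, (a i - c) =
      (∑ i ∈ Finset.range t, a i -
        (M : ℝ)⁻¹ * ∑ m ∈ Finset.range M, ∑ i ∈ Finset.range t, a (i + m)) +
      ∑ i ∈ Finset.range t, ((M : ℝ)⁻¹ * ∑ m ∈ Finset.range M, a (i + m) - c) := by
    rw [Finset.sum_sub_distrib, Finset.sum_sub_distrib, hcomm]; ring
  rw [e]
  exact (abs_add_le _ _).trans (add_le_add hdiff (Finset.abs_sum_le_sum_abs _ _))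

section Step

variable {X : Type*} [MeasurableSpace X] {μ : Measure X} {T : X ≃ᵐ X}

lemma exists_split_of_weakMixing (hw : WeakMixing μ T) {B : Set X} (hB : MeasurableSet B)
    (hpos : 0 < μ.real B) :
    ∃ r₀ : ℕ, ∀ r ≥ r₀, ∃ r₁ r₂, r₁ + r₂ = r ∧
      μ.real B ^ 2 / 2 ≤ μ.real (B ∩ T^[r₁] ⁻¹' B) ∧
      μ.real B ^ 2 / 2 ≤ μ.real (B ∩ T^[r₂] ⁻¹' B) := by
  classical
  set β := μ.real B with hβ
  have hlim := hw B B hB hB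
  have hev := hlim.eventually (gt_mem_nhds (show (0 : ℝ) < β ^ 2 / 8 by positivity))
  obtain ⟨r₀, hr₀⟩ := eventually_atTop.1 hev
  refine ⟨r₀, fun r hr => ?_⟩
  have h1 := hr₀ (r + 1) (by omega)
  set g : ℕ → ℝ := fun n => μ.real (B ∩ T^[n] ⁻¹' B) with hg
  set bad := (Finset.range (r + 1)).filter fun n => g n < β ^ 2 / 2 with hbad
  have hcard : (4 * bad.card : ℝ) < r + 1 := by
    have h2 : (bad.card : ℝ) * (β ^ 2 / 2) ≤ ∑ n ∈ Finset.range (r + 1), |g n - β * β| := by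
      calc (bad.card : ℝ) * (β ^ 2 / 2) = ∑ n ∈ bad, β ^ 2 / 2 := by simp
        _ ≤ ∑ n ∈ bad, |g n - β * β| := by
          refine Finset.sum_le_sum fun n hn => ?_
          have := (Finset.mem_filter.1 hn).2
          rw [abs_sub_comm]
          refine le_trans ?_ (le_abs_self _)
          nlinarith
        _ ≤ _ := Finset.sum_le_sum_of_subset_of_nonneg (Finset.filter_subset _ _)
          fun _ _ _ => abs_nonneg _
    rw [inv_mul_lt_iff₀ (by positivity)] at h1
    have h3 := h2.trans_lt h1
    have hβ2 : 0 < β ^ 2 := by positivity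
    push_cast at h3
    by_contra! hc
    nlinarith
  have hex : ∃ n ∈ Finset.range (r + 1), n ∉ bad ∪ bad.image (fun n => r - n) := by
    by_contra! hc
    have h2 : (Finset.range (r + 1)).card ≤ _ := Finset.card_le_card hc
    have h3 := h2.trans (Finset.card_union_le _ _)
    have h4 := Finset.card_image_le (s := bad) (f := fun n => r - n)
    rw [Finset.card_range] at h3
    have h5 : (r + 1 : ℝ) ≤ bad.card + bad.card := by
      exact_mod_cast h3.trans (Nat.add_le_add_left h4 _)
    have : (0 : ℝ) ≤ bad.card := by positivity
    linarith
  obtain ⟨n, hn, hnb⟩ := hex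
  have hn' := Finset.mem_range.1 hn
  rw [Finset.mem_union, not_or] at hnb
  refine ⟨n, r - n, by omega, ?_, ?_⟩
  · by_contra! hc
    exact hnb.1 (Finset.mem_filter.2 ⟨hn, hc⟩)
  · by_contra! hc
    refine hnb.2 (Finset.mem_image.2 ⟨r - n, Finset.mem_filter.2
      ⟨Finset.mem_range.2 (by omega), hc⟩, by omega⟩)

variable [IsProbabilityMeasure μ]

lemma exists_error_function (hE : Ergodic T μ) {ι : Type*} (F : Finset ι) {h : ι → X → ℝ}
    (hm : ∀ i ∈ F, Measurable (h i)) (h01 : ∀ i ∈ F, ∀ x, 0 ≤ h i x ∧ h i x ≤ 1)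
    {η : ℝ} (hη : 0 < η) :
    ∃ (M : ℕ) (e : X → ℝ), Measurable e ∧ (∀ x, 0 ≤ e x) ∧ Integrable e μ ∧ ∫ x, e x ∂μ ≤ η ∧
      ∀ i ∈ F, ∀ y (t : ℕ), |∑ j ∈ Finset.range t, (h i (T^[j] y) - ∫ x, h i x ∂μ)| ≤
        M + ∑ j ∈ Finset.range t, e (T^[j] y) := by
  have hL2 : ∀ i ∈ F, MemLp (h i) 2 μ := fun i hi =>
    MemLp.of_bound (hm i hi).aestronglyMeasurable 1 (ae_of_all _ fun x => by
      rw [Real.norm_eq_abs, abs_le]; constructor <;> linarith [h01 i hi x])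
  have hlim : Tendsto (fun M => ∑ i ∈ F, ∫ x, |orbitAverage T (h i) M x - ∫ y, h i y ∂μ| ∂μ)
      atTop (𝓝 0) := by
    have := tendsto_finsetSum F fun i hi => tendsto_integral_abs_orbitAverage hE (hL2 i hi)
    simpa using this
  obtain ⟨M, hM1, hM0⟩ := ((hlim.eventually (gt_mem_nhds hη)).and (eventually_gt_atTop 0)).exists
  have hav : ∀ i ∈ F, Measurable (orbitAverage T (h i) M) := fun i hi =>
    measurable_const.mul (Finset.measurable_fun_sum _ fun n _ =>
      (hm i hi).comp (T.measurable.iterate n))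
  have hint : ∀ i ∈ F, Integrable (fun x => |orbitAverage T (h i) M x - ∫ y, h i y ∂μ|) μ :=
    fun i hi => (((memLp_orbitAverage hE.toMeasurePreserving (hL2 i hi) M).integrable
      (by norm_num)).sub (integrable_const _)).abs
  refine ⟨M, fun x => ∑ i ∈ F, |orbitAverage T (h i) M x - ∫ y, h i y ∂μ|, ?_, ?_, ?_, ?_, ?_⟩
  · exact Finset.measurable_fun_sum _ fun i hi => ((hav i hi).sub_const _).norm
  · exact fun x => Finset.sum_nonneg fun _ _ => abs_nonneg _
  · exact integrable_finsetSum _ hint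
  · rw [integral_finsetSum _ hint]; exact hM1.le
  · intro i hi y t
    have := abs_sum_sub_le_of_averages (a := fun j => h i (T^[j] y)) (fun j => h01 i hi _)
      (∫ x, h i x ∂μ) hM0 t
    refine this.trans (add_le_add_right (Finset.sum_le_sum fun j _ => ?_) _)
    have e : (M : ℝ)⁻¹ * ∑ m ∈ Finset.range M, h i (T^[j + m] y) =
        orbitAverage T (h i) M (T^[j] y) := by
      simp only [orbitAverage, ← Function.iterate_add_apply, add_comm]
    rw [e]
    exact Finset.single_le_sum
      (f := fun i => |orbitAverage T (h i) M (T^[j] y) - ∫ y, h i y ∂μ|)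
      (fun _ _ => abs_nonneg _) hi

end Step

section Clock

variable {X : Type*} [MeasurableSpace X] {T : X ≃ᵐ X}

lemma exists_clock {B : Set X} (hB : MeasurableSet B) {L : ℕ} (hg : IsGapped T B L)
    (hs : ∀ x, ∃ i : ℕ, i + 1 < 3 * L ∧ zpt T (i + 1 : ℕ) x ∈ B) :
    ∃ (J r : X → ℕ) (b : X → X), Measurable J ∧ Measurable r ∧ Measurable b ∧
      (∀ x, b x ∈ B ∧ zpt T (J x) (b x) = x ∧ J x < r x ∧ L ≤ r x ∧ r x ≤ 3 * L) ∧
      (∀ x, T x ∉ B → J (T x) = J x + 1 ∧ r (T x) = r x ∧ b (T x) = b x) ∧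
      (∀ x, T x ∈ B → J x + 1 = r x) ∧ (∀ x ∈ B, J x = 0) := by
  classical
  have hJ : ∀ x, ∃ j : ℕ, zpt T (-(j : ℤ)) x ∈ B := fun x => by
    obtain ⟨i, hi, hiB⟩ := hs (zpt T (-(3 * L : ℕ) : ℤ) x)
    refine ⟨3 * L - (i + 1), ?_⟩
    rw [← zpt_add] at hiB
    convert hiB using 2
    push_cast [Nat.cast_sub hi.le]; ring
  have hW : ∀ x, ∃ i : ℕ, zpt T (i + 1 : ℕ) x ∈ B := fun x => (hs x).imp fun _ h => h.2
  let J : X → ℕ := fun x => Nat.find (hJ x)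
  let W : X → ℕ := fun x => Nat.find (hW x)
  have hJm : Measurable J := measurable_find hJ fun k => measurable_zpt T _ hB
  have hWm : Measurable W := measurable_find hW fun k => measurable_zpt T _ hB
  have hJB : ∀ x, zpt T (-(J x : ℤ)) x ∈ B := fun x => Nat.find_spec (hJ x)
  have hWB : ∀ x, zpt T (W x + 1 : ℕ) x ∈ B := fun x => Nat.find_spec (hW x)
  have hJmin : ∀ x (j : ℕ), zpt T (-(j : ℤ)) x ∈ B → J x ≤ j := fun x j h => Nat.find_min' (hJ x) h
  have hWmin : ∀ x (j : ℕ), zpt T (j + 1 : ℕ) x ∈ B → W x ≤ j := fun x j h =>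
    Nat.find_min' (hW x) h
  have hbm : Measurable fun x => zpt T (-(J x : ℤ)) x := by
    refine measurable_from_prod_countable_left
      (f := fun p : X × ℕ => zpt T (-(p.2 : ℤ)) p.1) (fun j => measurable_zpt T (-(j : ℤ))) |>.comp
      (measurable_id.prodMk hJm)
  have hback : ∀ x (i : ℤ), zpt T i (T x) = zpt T (i + 1) x := fun x i => (zpt_add_one' T i x).symm
  have hstep : ∀ x, zpt T (J x + W x + 1 : ℕ) (zpt T (-(J x : ℤ)) x) ∈ B := fun x => by
    rw [← zpt_add]
    convert hWB x using 2
    push_cast; ring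
  refine ⟨J, fun x => J x + W x + 1, fun x => zpt T (-(J x : ℤ)) x, hJm,
    (hJm.add hWm).add_const 1, hbm, fun x => ⟨hJB x, zpt_cancel_neg T _ x,
      Nat.lt_succ_of_le (Nat.le_add_right _ _), ?_, ?_⟩,
    fun x hx => ?_, fun x hx => ?_, fun x hx => ?_⟩
  · by_contra! h
    exact hg _ (hJB x) _ (by omega) h (hstep x)
  · obtain ⟨i, hi, hiB⟩ := hs (zpt T (-(J x : ℤ)) x)
    by_contra! h
    rw [← zpt_add] at hiB
    rcases lt_or_ge i (J x) with h1 | h1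
    · have h2 : zpt T (-((J x - (i + 1) : ℕ) : ℤ)) x ∈ B := by
        convert hiB using 2
        push_cast [Nat.cast_sub (show i + 1 ≤ J x by omega)]; ring
      have := hJmin x _ h2
      omega
    · have h2 : zpt T ((i - J x) + 1 : ℕ) x ∈ B := by
        convert hiB using 2
        push_cast [Nat.cast_sub h1]; ring
      have := hWmin x _ h2
      omega
  · have h1 : J (T x) = J x + 1 := by
      apply le_antisymm
      · apply hJmin
        rw [hback]
        convert hJB x using 2
        push_cast; ring
      · have h2 := hJB (T x)
        rcases Nat.eq_zero_or_pos (J (T x)) with h0 | h0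
        · rw [h0] at h2; exact absurd h2 hx
        · rw [hback] at h2
          have := hJmin x (J (T x) - 1) (by
            convert h2 using 2
            push_cast [Nat.cast_sub (show 1 ≤ J (T x) by omega)]; ring)
          omega
    have h2 : W x = W (T x) + 1 := by
      apply le_antisymm
      · apply hWmin
        have := hWB (T x)
        rw [hback] at this
        convert this using 2
        push_cast; ring
      · have h2 := hWB x
        rcases Nat.eq_zero_or_pos (W x) with h0 | h0
        · rw [h0] at h2
          exact absurd h2 (by simpa [zpt_one] using hx)
        · have := hWmin (T x) (W x - 1) (by
            rw [hback]
            convert h2 using 2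
            push_cast [Nat.cast_sub (show 1 ≤ W x by omega)]; ring)
          omega
    refine ⟨h1, by simp only; omega, ?_⟩
    simp only [h1]
    rw [hback]
    congr 1
    push_cast; ring
  · have : W x ≤ 0 := hWmin x 0 (by simpa [zpt_one] using hx)
    simp only; omega
  · have := hJmin x 0 (by simpa using hx)
    omega

end Clock

section Filler

variable {X : Type*} {T : X → X}

lemma exists_filler {B : Set X} {r₁ r₂ : ℕ} (hr : 0 < r₁ + r₂) {y₁ y₂ : X} (hy₁ : y₁ ∈ B)
    (hy₂ : y₂ ∈ B) (hy₁' : T^[r₁] y₁ ∈ B) (hy₂' : T^[r₂] y₂ ∈ B) :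
    ∃ p : ℕ → X, p 0 ∈ B ∧ T (p (r₁ + r₂ - 1)) ∈ B ∧
      (∀ j, p (j + 1) = T (p j) ∨ (p (j + 1) ∈ B ∧ T (p j) ∈ B)) ∧
      ∀ (g : X → ℝ) (κ : ℝ), (∀ t ≤ r₁ + r₂, |∑ j ∈ Finset.range t, g (T^[j] y₁)| ≤ κ) →
        (∀ t ≤ r₁ + r₂, |∑ j ∈ Finset.range t, g (T^[j] y₂)| ≤ κ) →
        ∀ t ≤ r₁ + r₂, |∑ j ∈ Finset.range t, g (p j)| ≤ 2 * κ := by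
  let p : ℕ → X := fun j => if j < r₁ then T^[j] y₁ else T^[j - r₁] y₂
  have hlt : ∀ j < r₁, p j = T^[j] y₁ := fun j hj => by simp [p, hj]
  have hge : ∀ j, p (r₁ + j) = T^[j] y₂ := fun j => by simp [p]
  refine ⟨p, ?_, ?_, fun j => ?_, fun g κ h1 h2 t ht => ?_⟩
  · rcases Nat.eq_zero_or_pos r₁ with h | h
    · subst h; simpa using (hge 0 ▸ hy₂ : p (0 + 0) ∈ B)
    · rw [hlt 0 h]; exact hy₁
  · rcases Nat.eq_zero_or_pos r₂ with h | h
    · subst h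
      rw [hlt _ (by omega), ← Function.iterate_succ_apply' T]
      convert hy₁' using 2
      omega
    · rw [show r₁ + r₂ - 1 = r₁ + (r₂ - 1) by omega, hge, ← Function.iterate_succ_apply' T]
      convert hy₂' using 2
      omega
  · rcases lt_trichotomy (j + 1) r₁ with h | h | h
    · left
      rw [hlt _ h, hlt _ (by omega), Function.iterate_succ_apply']
    · right
      rw [hlt j (by omega), ← Function.iterate_succ_apply' T, Nat.succ_eq_add_one, h]
      have := hge 0
      rw [Nat.add_zero] at this
      exact ⟨by rw [this]; exact hy₂, hy₁'⟩
    · left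
      obtain ⟨k, rfl⟩ := Nat.exists_eq_add_of_le (Nat.lt_succ_iff.1 h)
      rw [Nat.add_assoc, hge, hge, Function.iterate_succ_apply']
  · have hκ : 0 ≤ κ := by simpa using h1 0 (Nat.zero_le _)
    rcases le_or_gt t r₁ with h | h
    · rw [Finset.sum_congr rfl fun j hj => by
        rw [hlt j (lt_of_lt_of_le (Finset.mem_range.1 hj) h)]]
      linarith [h1 t ht]
    · obtain ⟨k, rfl⟩ := Nat.exists_eq_add_of_le h.le
      rw [Finset.sum_range_add, Finset.sum_congr rfl fun j hj => by
        rw [hlt j (Finset.mem_range.1 hj)]]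
      simp only [hge]
      calc _ ≤ _ := abs_add_le _ _
        _ ≤ κ + κ := add_le_add (h1 r₁ (by omega)) (h2 k (by omega))
        _ = _ := by ring

end Filler

section BadBases

variable {X : Type*} [MeasurableSpace X] {μ : Measure X} {T : X ≃ᵐ X}

lemma measureReal_mul_le_of_sum (hT : MeasurePreserving T μ μ) {e : X → ℝ}
    (he0 : ∀ x, 0 ≤ e x) (hei : Integrable e μ) (a : ℝ) (k : ℕ) :
    a * μ.real {x | a ≤ ∑ i ∈ Finset.range k, e (T^[i] x)} ≤ k * ∫ x, e x ∂μ := by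
  have hi : ∀ i, Integrable (fun x => e (T^[i] x)) μ := fun i =>
    (hT.iterate i).integrable_comp_of_integrable hei
  have h := mul_meas_ge_le_integral_of_nonneg (μ := μ)
    (f := fun x => ∑ i ∈ Finset.range k, e (T^[i] x))
    (ae_of_all _ fun x => Finset.sum_nonneg fun i _ => he0 _)
    (integrable_finsetSum _ fun i _ => hi i) a
  refine h.trans (le_of_eq ?_)
  rw [integral_finsetSum _ fun i _ => hi i, Finset.sum_congr rfl fun i _ => ?_,
    Finset.sum_const, Finset.card_range, nsmul_eq_mul]
  have hemb : MeasurableEmbedding (T^[i]) := by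
    have : T^[i] = zpt T i := funext fun x => (zpt_natCast T i x).symm
    rw [this]
    exact (MeasurableEquiv.mk ((T.toEquiv : Equiv.Perm X) ^ (i : ℤ)) (measurable_zpt T i)
      (by
        have : ⇑(((T.toEquiv : Equiv.Perm X) ^ (i : ℤ)).symm) = zpt T (-i) := by
          rw [zpt, zpow_neg]; rfl
        rw [this]; exact measurable_zpt T _)).measurableEmbedding
  exact (hT.iterate i).integral_comp hemb e

variable [IsProbabilityMeasure μ]

lemma IsGapped.measureReal_mul_le (hT : MeasurePreserving T μ μ) {B : Set X} {L : ℕ}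
    (hg : IsGapped T B L) {C : Set X} (hC : MeasurableSet C) (hCB : C ⊆ B) {E : Set X}
    (hE : ∀ x, ∀ i < L, zpt T i x ∈ C → x ∈ E) :
    L * μ.real C ≤ μ.real E := by
  have h1 : ∀ i : ℕ, μ.real (zpt T i ⁻¹' C) = μ.real C := fun i =>
    (measurePreserving_zpt T hT i).measureReal_preimage hC.nullMeasurableSet
  have hd : (↑(Finset.range L) : Set ℕ).PairwiseDisjoint fun i => zpt T (i : ℤ) ⁻¹' C := by
    have key : ∀ i j : ℕ, i < j → j < L → ∀ x, zpt T i x ∈ C → zpt T j x ∉ C := by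
      intro i j hij hj x hx hx'
      refine hg _ (hCB hx) (j - i) (by omega) (by omega) (hCB ?_)
      rw [← zpt_add]
      convert hx' using 2
      omega
    intro i hi j hj hij
    simp only [Finset.coe_range, Set.mem_Iio] at hi hj
    refine Set.disjoint_left.2 fun x hx hx' => ?_
    rcases lt_or_gt_of_ne hij with h | h
    · exact key i j h hj x hx hx'
    · exact key j i h hi x hx' hx
  calc L * μ.real C = ∑ i ∈ Finset.range L, μ.real (zpt T i ⁻¹' C) := by simp [h1]
    _ = μ.real (⋃ i ∈ Finset.range L, zpt T i ⁻¹' C) :=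
      (measureReal_biUnion_finset hd fun i _ => measurable_zpt T i hC).symm
    _ ≤ μ.real E := measureReal_mono (Set.iUnion₂_subset fun i hi x hx =>
      hE x i (Finset.mem_range.1 hi) hx)

end BadBases

section Step

variable {X : Type*} [MeasurableSpace X] {μ : Measure X} [IsProbabilityMeasure μ] {T : X ≃ᵐ X}

lemma exists_modification [StandardBorelSpace X] (hT : MeasurePreserving T μ μ)
    (hE : Ergodic T μ) (hw : WeakMixing μ T) (hap : ∀ x, ∀ i : ℕ, 0 < i → zpt T i x ≠ x)
    {B : Set X} (hB : MeasurableSet B) (hpos : 0 < μ.real B)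
    {D : ℕ} (hD : ∀ x, ∃ i < D, zpt T i x ∈ B) {ι : Type*} (F : Finset ι) {h : ι → X → ℝ}
    (hm : ∀ i ∈ F, Measurable (h i)) (h01 : ∀ i ∈ F, ∀ x, 0 ≤ h i x ∧ h i x ≤ 1)
    {ε : ℝ} (hε : 0 < ε) (L₀ : ℕ) :
    ∃ (L : ℕ) (B' : Set X) (θ : X → X), L₀ ≤ L ∧ 0 < L ∧ B' ⊆ B ∧ MeasurableSet B' ∧
      IsGapped T B' L ∧ (∃ D' : ℕ, ∀ x, ∃ i < D', zpt T i x ∈ B') ∧ Measurable θ ∧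
      (∀ x ∈ B', θ x ∈ B) ∧ (∀ x, θ (T x) = T (θ x) ∨ (θ (T x) ∈ B ∧ T (θ x) ∈ B)) ∧
      μ.real {x | θ x ≠ x} ≤ ε ∧
      ∀ i ∈ F, ∃ (c : ℝ) (w : X → ℝ), (∀ x, |w x| ≤ ε * L) ∧ (∀ x ∈ B', w x = 0) ∧
        (∀ x, T x ∉ B' → w (T x) = w x + (h i (θ x) - c)) ∧
        (∀ x, T x ∈ B' → |w x + (h i (θ x) - c)| ≤ ε * L) := by
  classical
  have hβ2 : 0 < μ.real B ^ 2 := by positivity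
  obtain ⟨η, hη, hη1, hη2⟩ : ∃ η : ℝ, 0 < η ∧ 48 * η ≤ ε * ε ∧ 12 * η < ε * (μ.real B ^ 2 / 2) := by
    refine ⟨min (ε * ε / 48) (ε * (μ.real B ^ 2 / 2) / 24), by positivity, ?_, ?_⟩
    · have := min_le_left (ε * ε / 48) (ε * (μ.real B ^ 2 / 2) / 24); linarith
    · have := min_le_right (ε * ε / 48) (ε * (μ.real B ^ 2 / 2) / 24)
      have : 0 < ε * (μ.real B ^ 2 / 2) := by positivity
      linarith
  obtain ⟨M, e, hem, he0, hei, heη, hsum⟩ := exists_error_function hE F hm h01 hη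
  obtain ⟨r₀, hr₀⟩ := exists_split_of_weakMixing hw hB hpos
  obtain ⟨M', hM'⟩ := exists_nat_ge ((M : ℝ) / (ε / 4))
  set L := L₀ + D + M' + r₀ + 1 with hL
  have hLpos : 0 < L := by omega
  have hLR : (0 : ℝ) < L := by exact_mod_cast hLpos
  have hML : (M : ℝ) ≤ ε / 4 * L := by
    have : (M : ℝ) / (ε / 4) ≤ L := hM'.trans (by exact_mod_cast (by omega : M' ≤ L))
    rwa [div_le_iff₀' (by positivity)] at this
  obtain ⟨B', hB'B, hB'm, hgap, hsyn⟩ := exists_marker hap hB hD (show D ≤ L by omega)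
  set G : Set X := {y | ∑ i ∈ Finset.range (3 * L), e (T^[i] y) ≤ ε / 4 * L} with hG
  have hTi : ∀ i, Measurable (T^[i]) := fun i => T.measurable.iterate i
  have hGm : MeasurableSet G :=
    measurableSet_le (Finset.measurable_sum _ fun i _ => hem.comp (hTi i)) measurable_const
  have hGc' : ∀ x ∉ G, ε / 4 * L ≤ ∑ i ∈ Finset.range (3 * L), e (T^[i] x) := fun x hx => by
    rw [hG, Set.mem_ofPred_eq, not_le] at hx
    exact hx.le
  have hGc : μ.real Gᶜ < μ.real B ^ 2 / 2 := by
    have h1 := measureReal_mul_le_of_sum hT he0 hei (ε / 4 * L) (3 * L)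
    have h2 : μ.real Gᶜ ≤ μ.real {x | ε / 4 * L ≤ ∑ i ∈ Finset.range (3 * L), e (T^[i] x)} :=
      measureReal_mono fun x hx => hGc' x hx
    have h3 : ε / 4 * L * μ.real Gᶜ ≤ ε / 4 * L *
        μ.real {x | ε / 4 * L ≤ ∑ i ∈ Finset.range (3 * L), e (T^[i] x)} := by gcongr
    have h4 : ((3 * L : ℕ) : ℝ) * ∫ x, e x ∂μ ≤ 3 * L * η := by push_cast; gcongr
    have h5 : L * (ε / 4 * μ.real Gᶜ) ≤ L * (3 * η) := by nlinarith
    have h6 := le_of_mul_le_mul_left h5 hLR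
    by_contra! h7
    have : ε * (μ.real B ^ 2 / 2) ≤ ε * μ.real Gᶜ := by gcongr
    linarith
  have hbad : L * μ.real (B' \ G) ≤ ε / 3 := by
    have h1 := measureReal_mul_le_of_sum hT he0 hei (ε / 4 * L) (4 * L)
    have h2 := hgap.measureReal_mul_le hT (hB'm.diff hGm) Set.sdiff_subset
      (E := {x | ε / 4 * L ≤ ∑ i ∈ Finset.range (4 * L), e (T^[i] x)}) fun x i hi hx => by
        have h3 := hGc' _ hx.2
        refine h3.trans ?_
        rw [zpt_natCast]
        simp only [← Function.iterate_add_apply]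
        rw [show 4 * L = i + 3 * L + (L - i) by omega, Finset.sum_range_add, Finset.sum_range_add]
        simp only [Nat.add_comm i]
        have := Finset.sum_nonneg fun j (_ : j ∈ Finset.range i) => he0 (T^[j] x)
        have := Finset.sum_nonneg fun j (_ : j ∈ Finset.range (L - i)) =>
          he0 (T^[3 * L + i + j] x)
        linarith
    have h3 : ε / 4 * L * (L * μ.real (B' \ G)) ≤ ε / 4 * L * μ.real
      {x | ε / 4 * L ≤ ∑ i ∈ Finset.range (4 * L), e (T^[i] x)} := by gcongr
    have h4 : ((4 * L : ℕ) : ℝ) * ∫ x, e x ∂μ ≤ 4 * L * η := by push_cast; gcongr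
    have h5 : L * (ε / 4 * (L * μ.real (B' \ G))) ≤ L * (4 * η) := by nlinarith
    have h6 := le_of_mul_le_mul_left h5 hLR
    have h7 : ε * (L * μ.real (B' \ G)) ≤ ε * (ε / 3) := by nlinarith
    exact le_of_mul_le_mul_left h7 hε
  obtain ⟨J, r, b, hJm, hrm, hbm, hJ, hnext, hret, hJ0⟩ := exists_clock hB'm hgap hsyn
  have hsumG : ∀ i ∈ F, ∀ y ∈ G, ∀ t ≤ 3 * L,
      |∑ j ∈ Finset.range t, (h i (T^[j] y) - ∫ x, h i x ∂μ)| ≤ ε / 2 * L := by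
    intro i hi y hy t ht
    have h1 := hsum i hi y t
    have h2 : ∑ j ∈ Finset.range t, e (T^[j] y) ≤ ∑ j ∈ Finset.range (3 * L), e (T^[j] y) :=
      Finset.sum_le_sum_of_subset_of_nonneg (Finset.range_mono ht) fun j _ _ => he0 _
    have h3 : ∑ j ∈ Finset.range (3 * L), e (T^[j] y) ≤ ε / 4 * L := hy
    linarith
  have hfill : ∀ ρ : ℕ, ∃ p : ℕ → X, L ≤ ρ → ρ ≤ 3 * L → p 0 ∈ B ∧ T (p (ρ - 1)) ∈ B ∧
      (∀ j, p (j + 1) = T (p j) ∨ (p (j + 1) ∈ B ∧ T (p j) ∈ B)) ∧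
      ∀ i ∈ F, ∀ t ≤ ρ, |∑ j ∈ Finset.range t, (h i (p j) - ∫ x, h i x ∂μ)| ≤ ε * L := by
    intro ρ
    by_cases hρ : L ≤ ρ ∧ ρ ≤ 3 * L
    swap
    · obtain ⟨x⟩ := nonempty_of_isProbabilityMeasure μ
      exact ⟨fun _ => x, fun h1 h2 => absurd ⟨h1, h2⟩ hρ⟩
    obtain ⟨r₁, r₂, hr, h1, h2⟩ := hr₀ ρ (by omega)
    have hex : ∀ q : ℕ, μ.real B ^ 2 / 2 ≤ μ.real (B ∩ T^[q] ⁻¹' B) →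
        ∃ y ∈ B, T^[q] y ∈ B ∧ y ∈ G := by
      intro q hq
      by_contra! hcon
      have : μ.real (B ∩ T^[q] ⁻¹' B) ≤ μ.real Gᶜ :=
        measureReal_mono fun y hy => hcon y hy.1 hy.2
      linarith
    obtain ⟨y₁, hy₁, hy₁', hG₁⟩ := hex r₁ h1
    obtain ⟨y₂, hy₂, hy₂', hG₂⟩ := hex r₂ h2
    obtain ⟨p, hp0, hp1, hp2, hp3⟩ :=
      exists_filler (by omega : 0 < r₁ + r₂) hy₁ hy₂ hy₁' hy₂'
    rw [hr] at hp1 hp3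
    refine ⟨p, fun _ _ => ⟨hp0, hp1, hp2, fun i hi t ht => ?_⟩⟩
    have := hp3 (fun x => h i x - ∫ x, h i x ∂μ) (ε / 2 * L)
      (fun t ht => hsumG i hi y₁ hG₁ t (by omega))
      (fun t ht => hsumG i hi y₂ hG₂ t (by omega)) t ht
    linarith
  choose p hp using hfill
  let val : X → ℕ → X := fun x j => if b x ∈ G then zpt T j (b x) else p (r x) j
  have hvalG : ∀ x, b x ∈ G → ∀ j : ℕ, val x j = zpt T j (b x) := fun x hx j => by simp [val, hx]
  have hvalG' : ∀ x, b x ∉ G → ∀ j : ℕ, val x j = p (r x) j := fun x hx j => by simp [val, hx]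
  have hp' := fun x => hp (r x) (hJ x).2.2.2.1 (hJ x).2.2.2.2
  have hval0 : ∀ x, val x 0 ∈ B := by
    intro x
    by_cases hx : b x ∈ G
    · rw [hvalG x hx]; exact hB'B (hJ x).1
    · rw [hvalG' x hx]; exact (hp' x).1
  have hvalsucc : ∀ x j, val x (j + 1) = T (val x j) ∨ (val x (j + 1) ∈ B ∧ T (val x j) ∈ B) := by
    intro x j
    by_cases hx : b x ∈ G
    · left
      rw [hvalG x hx, hvalG x hx]
      exact zpt_add_one T j (b x)
    · rw [hvalG' x hx, hvalG' x hx]; exact (hp' x).2.2.1 j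
  have hvalsum : ∀ i ∈ F, ∀ x, ∀ t ≤ r x,
      |∑ j ∈ Finset.range t, (h i (val x j) - ∫ x, h i x ∂μ)| ≤ ε * L := by
    intro i hi x t ht
    by_cases hx : b x ∈ G
    · simp only [hvalG x hx, zpt_natCast]
      refine (hsumG i hi _ hx t (ht.trans (hJ x).2.2.2.2)).trans ?_
      nlinarith
    · simp only [hvalG' x hx]
      exact (hp' x).2.2.2 i hi t ht
  have hvaleq : ∀ x, T x ∉ B' → val (T x) = val x := by
    intro x hx
    obtain ⟨-, h2, h3⟩ := hnext x hx
    funext j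
    simp only [val, h2, h3]
  have hvalm : Measurable fun x => val x (J x) := by
    have h1 : Measurable fun x => zpt T (J x) (b x) :=
      measurable_from_prod_countable_left (f := fun q : X × ℕ => zpt T (q.2 : ℤ) q.1)
        (fun j => measurable_zpt T (j : ℤ)) |>.comp (hbm.prodMk hJm)
    have h2 : Measurable fun x => p (r x) (J x) :=
      (measurable_of_countable fun q : ℕ × ℕ => p q.1 q.2).comp (hrm.prodMk hJm)
    exact Measurable.ite (hbm hGm) h1 h2
  have hθB : ∀ x ∈ B', val x (J x) ∈ B := fun x hx => by rw [hJ0 x hx]; exact hval0 x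
  refine ⟨L, B', fun x => val x (J x), by omega, hLpos, hB'B, hB'm, hgap, ⟨3 * L, fun x => ?_⟩,
    hvalm, hθB, fun x => ?_, ?_, fun i hi => ⟨∫ x, h i x ∂μ,
      fun x => ∑ j ∈ Finset.range (J x), (h i (val x j) - ∫ x, h i x ∂μ),
      fun x => hvalsum i hi x _ (hJ x).2.2.1.le, fun x hx => by simp [hJ0 x hx],
      fun x hx => ?_, fun x hx => ?_⟩⟩
  · obtain ⟨i, hi, hiB⟩ := hsyn x
    exact ⟨i + 1, hi, hiB⟩
  · by_cases hx : T x ∈ B'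
    · right
      refine ⟨hθB _ hx, ?_⟩
      simp only
      by_cases hbx : b x ∈ G
      · rw [hvalG x hbx, (hJ x).2.1]; exact hB'B hx
      · rw [hvalG' x hbx]
        have := (hp' x).2.1
        rwa [show r x - 1 = J x by have := hret x hx; omega] at this
    · simp only [hvaleq x hx, (hnext x hx).1]
      exact hvalsucc x _
  · have hsub : {x | val x (J x) ≠ x} ⊆
        ⋃ j ∈ Finset.range (3 * L), zpt T (-(j : ℤ)) ⁻¹' (B' \ G) := by
      intro x hx
      have hbx : b x ∉ G := fun hbx => hx (by rw [hvalG x hbx]; exact (hJ x).2.1)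
      have hlt : J x < 3 * L := (hJ x).2.2.1.trans_le (hJ x).2.2.2.2
      refine Set.mem_iUnion₂.2 ⟨J x, Finset.mem_range.2 hlt, ?_⟩
      have : zpt T (-(J x : ℤ)) x = b x := by
        conv_lhs => rw [← (hJ x).2.1]
        have h2 := (hJ x).2.1
        rw [h2]
        nth_rewrite 2 [← h2]
        exact zpt_neg_cancel T _ _
      rw [Set.mem_preimage, this]
      exact ⟨(hJ x).1, hbx⟩
    calc μ.real {x | val x (J x) ≠ x}
        ≤ μ.real (⋃ j ∈ Finset.range (3 * L), zpt T (-(j : ℤ)) ⁻¹' (B' \ G)) :=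
          measureReal_mono hsub (measure_ne_top μ _)
      _ ≤ ∑ j ∈ Finset.range (3 * L), μ.real (zpt T (-(j : ℤ)) ⁻¹' (B' \ G)) :=
          measureReal_biUnion_finset_le _ _
      _ = 3 * (L * μ.real (B' \ G)) := by
          rw [Finset.sum_congr rfl fun j _ => (measurePreserving_zpt T hT _).measureReal_preimage
            (hB'm.diff hGm).nullMeasurableSet]
          simp [mul_assoc]
      _ ≤ ε := by linarith
  · simp only [hvaleq x hx, (hnext x hx).1, Finset.sum_range_succ]
  · have := hvalsum i hi x (J x + 1) (hret x hx).le
    rwa [Finset.sum_range_succ] at this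

end Step

lemma exists_seq_of_forall_step {σ : Type*} {P : ℕ → σ → Prop} {R : ℕ → σ → σ → Prop} {s₀ : σ}
    (h0 : P 0 s₀) (hstep : ∀ n s, P n s → ∃ s', P (n + 1) s' ∧ R n s s') :
    ∃ f : ℕ → σ, f 0 = s₀ ∧ (∀ n, P n (f n)) ∧ ∀ n, R n (f n) (f (n + 1)) := by
  choose g hg using hstep
  let F : ∀ n, {s // P n s} := fun n =>
    Nat.rec (motive := fun n => {s // P n s}) ⟨s₀, h0⟩ (fun n s => ⟨g n s.1 s.2, (hg n s.1 s.2).1⟩) n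
  exact ⟨fun n => (F n).1, rfl, fun n => (F n).2, fun n => (hg n _ (F n).2).2⟩

lemma card_filter_mul_le_of_gap {P : ℕ → Prop} [DecidablePred P] {L : ℕ} (hL : 0 < L)
    (hgap : ∀ i j, P i → P j → i < j → i + L ≤ j) (K : ℕ) :
    ((Finset.range K).filter P).card * L ≤ K + L := by
  have h1 : ((Finset.range K).filter P).card ≤ (Finset.range (K / L + 1)).card := by
    refine Finset.card_le_card_of_injOn (fun i => i / L) (fun i hi => ?_) fun i hi j hj hij => ?_
    · simp only [Finset.coe_filter, Finset.mem_range, Set.mem_ofPred_eq] at hi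
      simp only [Finset.coe_range, Set.mem_Iio]
      exact Nat.lt_succ_of_le (Nat.div_le_div_right hi.1.le)
    · simp only [Finset.coe_filter, Finset.mem_range, Set.mem_ofPred_eq] at hi hj hij
      have key : ∀ a b, P a → P b → a / L = b / L → ¬ a < b := by
        intro a b ha hb hab hlt
        have h2 := Nat.div_le_div_right (c := L) (hgap a b ha hb hlt)
        rw [Nat.add_div_right _ hL] at h2
        omega
      exact le_antisymm (not_lt.1 (key j i hj.2 hi.2 hij.symm)) (not_lt.1 (key i j hi.2 hj.2 hij))
  rw [Finset.card_range] at h1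
  calc _ ≤ (K / L + 1) * L := Nat.mul_le_mul_right _ h1
    _ = K / L * L + L := by ring
    _ ≤ K + L := Nat.add_le_add_right (Nat.div_mul_le_self _ _) _

section Aligned

variable {X : Type*} [MeasurableSpace X] {T : X ≃ᵐ X}

/-- A bi-infinite sequence which is an orbit of `T` except for jumps into `B` taking place when
the orbit itself would have entered `B`. -/
def IsAligned (T : X ≃ᵐ X) (B : Set X) (z : ℤ → X) : Prop :=
  ∀ i, z (i + 1) = T (z i) ∨ (z (i + 1) ∈ B ∧ T (z i) ∈ B)

lemma IsAligned.mem {B : Set X} {z : ℤ → X} (hz : IsAligned T B z) {i : ℤ} (hi : T (z i) ∈ B) :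
    z (i + 1) ∈ B := (hz i).elim (fun h => h ▸ hi) fun h => h.1

lemma IsAligned.eq {B : Set X} {z : ℤ → X} (hz : IsAligned T B z) {i : ℤ} (hi : T (z i) ∉ B) :
    z (i + 1) = T (z i) := (hz i).resolve_right fun h => hi h.2

lemma IsAligned.shift {B : Set X} {z : ℤ → X} (hz : IsAligned T B z) (m : ℤ) :
    IsAligned T B fun i => z (i + m) := fun i => by
  have := hz (i + m)
  simpa only [show i + 1 + m = i + m + 1 by ring] using this

lemma IsAligned.comp {B B' : Set X} {z : ℤ → X} (hz : IsAligned T B' z) {θ : X → X}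
    (hθB : ∀ x ∈ B', θ x ∈ B) (hθ : ∀ x, θ (T x) = T (θ x) ∨ (θ (T x) ∈ B ∧ T (θ x) ∈ B)) :
    IsAligned T B fun i => θ (z i) := by
  intro i
  rcases hz i with h | ⟨h1, h2⟩
  · simpa only [h] using hθ (z i)
  · refine Or.inr ⟨hθB _ h1, ?_⟩
    rcases hθ (z i) with h | h
    · exact h ▸ hθB _ h2
    · exact h.2

lemma IsAligned.eq_zpt {B : Set X} {z : ℤ → X} (hz : IsAligned T B z) {a : ℤ} {k : ℕ}
    (h : ∀ j < k, T (z (a + (j : ℕ))) ∉ B) : z (a + k) = zpt T k (z a) := by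
  induction k with
  | zero => simp
  | succ k ih =>
    rw [Nat.cast_succ, zpt_add_one, ← ih fun j hj => h j (by omega), ← add_assoc]
    exact hz.eq (h k (by omega))

lemma IsAligned.eq_zpt_of_window {B : Set X} {z : ℤ → X} (hz : IsAligned T B z) {a : ℤ} {n : ℕ}
    (h : ∀ j ∈ Finset.Ico (-(n : ℤ)) n, T (z (a + j)) ∉ B) {j : ℤ}
    (hj : j ∈ Finset.Icc (-(n : ℤ)) n) : z (a + j) = zpt T j (z a) := by
  rw [Finset.mem_Icc] at hj
  obtain ⟨k, rfl | rfl⟩ := j.eq_nat_or_neg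
  · exact hz.eq_zpt fun i hi => h i (Finset.mem_Ico.2 ⟨by omega, by omega⟩)
  · have := hz.eq_zpt (a := a + -(k : ℤ)) (k := k) fun i hi => by
      have := h (-(k : ℤ) + i) (Finset.mem_Ico.2 ⟨by omega, by omega⟩)
      rwa [← add_assoc] at this
    rw [neg_add_cancel_right] at this
    rw [this, zpt_neg_cancel]

lemma IsAligned.gap {B : Set X} {L : ℕ} (hg : IsGapped T B L) {z : ℤ → X} (hz : IsAligned T B z)
    {i j : ℕ} (hi : T (z i) ∈ B) (hj : T (z j) ∈ B) (hij : i < j) : i + L ≤ j := by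
  classical
  by_contra! hlt
  have hex : ∃ k : ℕ, T (z ((i : ℤ) + 1 + k)) ∈ B := ⟨j - i - 1, by
    convert hj using 3
    omega⟩
  have hk := Nat.find_spec hex
  have hkj : Nat.find hex ≤ j - i - 1 := Nat.find_min' hex (by
    convert hj using 3
    omega)
  rw [hz.eq_zpt fun m hm => Nat.find_min hex hm, ← zpt_add_one] at hk
  exact hg _ (hz.mem hi) (Nat.find hex + 1) (by omega) (by omega) hk

lemma IsAligned.card_visits_mul_le {B : Set X} [DecidablePred (· ∈ B)] {L : ℕ} (hL : 0 < L)
    (hg : IsGapped T B L) {z : ℤ → X} (hz : IsAligned T B z) (m : ℤ) (K : ℕ) :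
    ((Finset.range K).filter fun i : ℕ => T (z (i + m)) ∈ B).card * L ≤ K + L :=
  card_filter_mul_le_of_gap hL (fun _ _ hi hj hij => (hz.shift m).gap hg hi hj hij) K

lemma IsAligned.abs_sum_le {B : Set X} {L : ℕ} (hL : 0 < L) (hg : IsGapped T B L) {z : ℤ → X}
    (hz : IsAligned T B z) {ε : ℝ} (hε : 0 ≤ ε) {g w : X → ℝ} (hw : ∀ x, |w x| ≤ ε * L)
    (hw0 : ∀ x ∈ B, w x = 0) (hw1 : ∀ x, T x ∉ B → w (T x) = w x + g x)
    (hw2 : ∀ x, T x ∈ B → |w x + g x| ≤ ε * L) (K : ℕ) :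
    |∑ i ∈ Finset.range K, g (z (i : ℕ))| ≤ ε * (K + 3 * L) := by
  classical
  have key : ∀ K : ℕ, |w (z K) - w (z 0) - ∑ i ∈ Finset.range K, g (z (i : ℕ))| ≤
      ε * L * ((Finset.range K).filter fun i : ℕ => T (z i) ∈ B).card := by
    intro K
    induction K with
    | zero => simp
    | succ K ih =>
      rw [Finset.sum_range_succ, Finset.range_add_one, Finset.filter_insert, Nat.cast_succ]
      split_ifs with h
      · rw [Finset.card_insert_of_notMem (by simp), hw0 _ (hz.mem h)]
        have h2 := hw2 _ h
        push_cast
        rw [abs_le] at *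
        constructor <;> linarith
      · rw [hz.eq h, hw1 _ h]
        convert ih using 2
        ring
  have h1 := key K
  have h2 : (((Finset.range K).filter fun i : ℕ => T (z i) ∈ B).card * L : ℝ) ≤ K + L := by
    have := hz.card_visits_mul_le hL hg 0 K
    simp only [add_zero] at this
    exact_mod_cast this
  have h3 := hw (z K)
  have h4 := hw (z 0)
  have h5 := mul_le_mul_of_nonneg_left h2 hε
  rw [abs_le] at *
  constructor <;> linarith

end Aligned

section Tower

variable {X : Type*} [MeasurableSpace X] {T : X ≃ᵐ X}

/-- The indices of coordinates taken into account at level `n`. -/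
noncomputable def coordBox (n : ℕ) : Finset (ℕ × ℤ) := Finset.range (n + 1) ×ˢ Finset.Icc (-(n : ℤ)) n

/-- The indicator function of the set of points whose names, read through the maps `Θ k`, have
ones on `s`. -/
noncomputable def nameIndicator (T : X ≃ᵐ X) (A : ℕ → Set X) (Θ : ℕ → X → X) (s : Finset (ℕ × ℤ))
    (y : X) : ℝ :=
  ∏ p ∈ s, (A p.1).indicator 1 (Θ p.1 (zpt T p.2 y))

lemma nameIndicator_mem_Icc (A : ℕ → Set X) (Θ : ℕ → X → X) (s : Finset (ℕ × ℤ)) (y : X) :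
    0 ≤ nameIndicator T A Θ s y ∧ nameIndicator T A Θ s y ≤ 1 := by
  have h0 : ∀ p : ℕ × ℤ, 0 ≤ (A p.1).indicator (1 : X → ℝ) (Θ p.1 (zpt T p.2 y)) := fun p =>
    Set.indicator_nonneg (fun _ _ => zero_le_one) _
  exact ⟨Finset.prod_nonneg fun p _ => h0 p, Finset.prod_le_one (fun p _ => h0 p) fun p _ =>
    Set.indicator_le_self' (fun _ _ => zero_le_one) _⟩

lemma measurable_nameIndicator {A : ℕ → Set X} (hA : ∀ k, MeasurableSet (A k)) {Θ : ℕ → X → X}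
    (hΘ : ∀ k, Measurable (Θ k)) (s : Finset (ℕ × ℤ)) : Measurable (nameIndicator T A Θ s) :=
  Finset.measurable_prod _ fun p _ => (measurable_one.indicator (hA p.1)).comp
    ((hΘ p.1).comp (measurable_zpt T p.2))

lemma measureReal_pos_of_syndetic {μ : Measure X} [IsProbabilityMeasure μ]
    (hT : MeasurePreserving T μ μ) {B : Set X} (hB : MeasurableSet B)
    {D : ℕ} (hD : ∀ x, ∃ i < D, zpt T i x ∈ B) : 0 < μ.real B := by
  by_contra! h
  have h0 : μ B = 0 := (measureReal_eq_zero_iff).1 (le_antisymm h measureReal_nonneg)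
  have h1 : (Set.univ : Set X) ⊆ ⋃ i : ℕ, zpt T i ⁻¹' B := fun x _ => by
    obtain ⟨i, -, hi⟩ := hD x
    exact Set.mem_iUnion.2 ⟨i, hi⟩
  have h2 : μ (⋃ i : ℕ, zpt T i ⁻¹' B) = 0 := measure_iUnion_null fun i => by
    rw [(measurePreserving_zpt T hT i).measure_preimage hB.nullMeasurableSet, h0]
  have := measure_mono_null h1 h2
  simp at this

/-- A tower of modifications `θ n` of the identity, with bases `B n`, along which the names of
points read through the compositions `Θ k n = θ k ∘ ⋯ ∘ θ (n - 1)` have uniform averages. -/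
structure ModificationTower (T : X ≃ᵐ X) (μ : Measure X) (A : ℕ → Set X) (B : ℕ → Set X)
    (L : ℕ → ℕ) (θ : ℕ → X → X) (Θ : ℕ → ℕ → X → X) : Prop where
  measurable_comp : ∀ k n, Measurable (Θ k n)
  comp_zero : ∀ k, Θ k 0 = id
  comp_succ : ∀ k n, Θ k (n + 1) = if k ≤ n then Θ k n ∘ θ n else id
  length_ge : ∀ n, 2 ^ (n + 1) * (2 * (n + 1)) < L (n + 1)
  gapped : ∀ n, IsGapped T (B (n + 1)) (L (n + 1))
  mapsTo : ∀ n, ∀ x ∈ B (n + 1), θ n x ∈ B n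
  aligned : ∀ n x, θ n (T x) = T (θ n x) ∨ (θ n (T x) ∈ B n ∧ T (θ n x) ∈ B n)
  ne_self : ∀ n, μ.real {x | θ n x ≠ x} ≤ (1 / 2) ^ n
  coboundary : ∀ n, ∀ s ⊆ coordBox n, ∃ (c : ℝ) (w : X → ℝ),
    (∀ x, |w x| ≤ (1 / 2) ^ n * L (n + 1)) ∧ (∀ x ∈ B (n + 1), w x = 0) ∧
    (∀ x, T x ∉ B (n + 1) →
      w (T x) = w x + (nameIndicator T A (fun k => Θ k n) s (θ n x) - c)) ∧
    (∀ x, T x ∈ B (n + 1) →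
      |w x + (nameIndicator T A (fun k => Θ k n) s (θ n x) - c)| ≤ (1 / 2) ^ n * L (n + 1))

lemma exists_modificationTower [StandardBorelSpace X] {μ : Measure X} [IsProbabilityMeasure μ]
    (hT : MeasurePreserving T μ μ) (hE : Ergodic T μ) (hw : WeakMixing μ T)
    (hap : ∀ x, ∀ i : ℕ, 0 < i → zpt T i x ≠ x) {A : ℕ → Set X} (hA : ∀ k, MeasurableSet (A k)) :
    ∃ B L θ Θ, ModificationTower T μ A B L θ Θ := by
  let P : ℕ → Set X × ℕ × (ℕ → X → X) → Prop := fun _ s =>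
    MeasurableSet s.1 ∧ (∃ D : ℕ, ∀ x, ∃ i < D, zpt T i x ∈ s.1) ∧ ∀ k, Measurable (s.2.2 k)
  let R : ℕ → Set X × ℕ × (ℕ → X → X) → Set X × ℕ × (ℕ → X → X) → Prop := fun n s s' =>
    ∃ θ : X → X, (∀ k, s'.2.2 k = if k ≤ n then s.2.2 k ∘ θ else id) ∧
      2 ^ (n + 1) * (2 * (n + 1)) < s'.2.1 ∧ IsGapped T s'.1 s'.2.1 ∧
      (∀ x ∈ s'.1, θ x ∈ s.1) ∧ (∀ x, θ (T x) = T (θ x) ∨ (θ (T x) ∈ s.1 ∧ T (θ x) ∈ s.1)) ∧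
      μ.real {x | θ x ≠ x} ≤ (1 / 2) ^ n ∧
      ∀ u ⊆ coordBox n, ∃ (c : ℝ) (w : X → ℝ),
        (∀ x, |w x| ≤ (1 / 2) ^ n * s'.2.1) ∧ (∀ x ∈ s'.1, w x = 0) ∧
        (∀ x, T x ∉ s'.1 → w (T x) = w x + (nameIndicator T A s.2.2 u (θ x) - c)) ∧
        (∀ x, T x ∈ s'.1 → |w x + (nameIndicator T A s.2.2 u (θ x) - c)| ≤ (1 / 2) ^ n * s'.2.1)
  have h0 : P 0 (Set.univ, 0, fun _ => id) :=
    ⟨MeasurableSet.univ, ⟨1, fun x => ⟨0, by simp⟩⟩, fun _ => measurable_id⟩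
  obtain ⟨f, hf0, hfP, hfR⟩ := exists_seq_of_forall_step (P := P) (R := R) h0 (by
    rintro n ⟨B, L, Θ⟩ ⟨hB, ⟨D, hD⟩, hΘ⟩
    obtain ⟨L', B', θ, hL', -, -, hB'm, hg, hD', hθm, hθB, hθ, hμ, hcob⟩ :=
      exists_modification hT hE hw hap hB (measureReal_pos_of_syndetic hT hB hD) hD
        (coordBox n).powerset (h := nameIndicator T A Θ)
        (fun s _ => measurable_nameIndicator hA hΘ s)
        (fun s _ x => nameIndicator_mem_Icc A Θ s x) (show (0 : ℝ) < (1 / 2) ^ n by positivity)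
        (2 ^ (n + 1) * (2 * (n + 1)) + 1)
    refine ⟨(B', L', fun k => if k ≤ n then Θ k ∘ θ else id), ⟨hB'm, hD', fun k => ?_⟩, θ,
      fun k => rfl, hL', hg, hθB, hθ, hμ, fun u hu => hcob u (Finset.mem_powerset.2 hu)⟩
    by_cases hk : k ≤ n
    · simpa [hk] using (hΘ k).comp hθm
    · simpa [hk] using measurable_id)
  choose θ h1 h2 h3 h4 h5 h6 h7 using hfR
  exact ⟨fun n => (f n).1, fun n => (f n).2.1, θ, fun k n => (f n).2.2 k,
    ⟨fun k n => (hfP n).2.2 k, fun k => by simp [hf0], fun k n => h1 n k, h2, h3, h4, h5, h6, h7⟩⟩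

end Tower

section Tower

variable {X : Type*} [MeasurableSpace X] {T : X ≃ᵐ X} {μ : Measure X} {A : ℕ → Set X}
  {B : ℕ → Set X} {L : ℕ → ℕ} {θ : ℕ → X → X} {Θ : ℕ → ℕ → X → X}

namespace ModificationTower

lemma comp_of_le (M : ModificationTower T μ A B L θ Θ) {k N : ℕ} (h : N ≤ k) : Θ k N = id := by
  cases N with
  | zero => exact M.comp_zero k
  | succ N => rw [M.comp_succ, if_neg (by omega)]

lemma comp_comp (M : ModificationTower T μ A B L θ Θ) {k n N : ℕ} (hkn : k ≤ n)
    (hnN : n ≤ N) (x : X) :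
    Θ k N x = Θ k n (Θ n N x) := by
  induction N, hnN using Nat.le_induction generalizing x with
  | base => rw [M.comp_of_le le_rfl]; rfl
  | succ N hN ih =>
    rw [M.comp_succ k, if_pos (hkn.trans hN), M.comp_succ n, if_pos hN]
    exact ih _

lemma comp_eq_apply (M : ModificationTower T μ A B L θ Θ) {n N : ℕ} (h : n < N) (x : X) :
    Θ n N x = θ n (Θ (n + 1) N x) := by
  rw [M.comp_comp n.le_succ h, M.comp_succ, if_pos le_rfl, Function.comp_apply,
    M.comp_of_le le_rfl]
  rfl

lemma isAligned (M : ModificationTower T μ A B L θ Θ) (n N : ℕ) (x : X) :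
    IsAligned T (B n) fun i => Θ n N (zpt T i x) := by
  have key : ∀ d n, N ≤ n + d → IsAligned T (B n) fun i => Θ n N (zpt T i x) := by
    intro d
    induction d with
    | zero =>
      intro n hn
      rw [M.comp_of_le (show N ≤ n from hn)]
      exact fun i => Or.inl (zpt_add_one T i x)
    | succ d ih =>
      intro n hn
      rcases le_or_gt N n with h | h
      · rw [M.comp_of_le h]
        exact fun i => Or.inl (zpt_add_one T i x)
      · simp only [M.comp_eq_apply h]
        exact (ih (n + 1) (by omega)).comp (M.mapsTo n) (M.aligned n)
  exact key N n (by omega)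

lemma length_pos (M : ModificationTower T μ A B L θ Θ) (n : ℕ) : 0 < L (n + 1) :=
  (Nat.zero_le _).trans_lt (M.length_ge n)

lemma abs_sum_nameIndicator_le (M : ModificationTower T μ A B L θ Θ) {n : ℕ} {s : Finset (ℕ × ℤ)}
    (hs : s ⊆ coordBox (n + 1)) :
    ∃ c : ℝ, ∀ N > n + 1, ∀ x, ∀ K : ℕ,
      |∑ i ∈ Finset.range K, (nameIndicator T A (fun k => Θ k N) s (zpt T i x) - c)| ≤
        (1 / 2) ^ n * (K + L (n + 1) + 2 * L (n + 2)) := by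
  classical
  obtain ⟨c, w, hw, hw0, hw1, hw2⟩ := M.coboundary (n + 1) s hs
  refine ⟨c, fun N hN x K => ?_⟩
  set m := n + 1 with hm
  have hLm : 0 < L m := M.length_pos n
  let y : ℤ → X := fun i => Θ m N (zpt T i x)
  have hy : IsAligned T (B m) y := M.isAligned m N x
  have h1 : |∑ i ∈ Finset.range K, (nameIndicator T A (fun k => Θ k m) s (y (i : ℕ)) - c)| ≤
      (1 / 2) ^ m * (K + 3 * L (m + 1)) := by
    have := (M.isAligned (m + 1) N x).abs_sum_le (M.length_pos m) (M.gapped m)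
      (by positivity : (0 : ℝ) ≤ (1 / 2) ^ m) hw hw0 hw1 hw2 K
    simpa only [y, M.comp_eq_apply hN] using this
  let v : ℤ → ℝ := fun i => if T (y i) ∈ B m then 1 else 0
  have hv0 : ∀ i, 0 ≤ v i := fun i => by simp only [v]; split_ifs <;> norm_num
  have hdiff : ∀ i : ℕ, |nameIndicator T A (fun k => Θ k N) s (zpt T i x) -
      nameIndicator T A (fun k => Θ k m) s (y i)| ≤ ∑ j ∈ Finset.Ico (-(m : ℤ)) m, v (i + j) := by
    intro i
    by_cases hi : ∀ j ∈ Finset.Ico (-(m : ℤ)) m, T (y (i + j)) ∉ B m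
    · have : nameIndicator T A (fun k => Θ k N) s (zpt T i x) =
          nameIndicator T A (fun k => Θ k m) s (y i) := by
        refine Finset.prod_congr rfl fun p hp => ?_
        have hpb := hs hp
        simp only [coordBox, Finset.mem_product, Finset.mem_range] at hpb
        simp only
        rw [← zpt_add, M.comp_comp (by omega : p.1 ≤ m) hN.le, ← hy.eq_zpt_of_window hi hpb.2,
          add_comm p.2]
      rw [this, sub_self, abs_zero]
      exact Finset.sum_nonneg fun j _ => hv0 _
    · push Not at hi
      obtain ⟨j, hj, hjB⟩ := hi
      have h2 : (1 : ℝ) ≤ ∑ j ∈ Finset.Ico (-(m : ℤ)) m, v (i + j) := by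
        refine le_trans ?_ (Finset.single_le_sum (fun j _ => hv0 (i + j)) hj)
        simp [v, hjB]
      refine le_trans ?_ h2
      have h3 := nameIndicator_mem_Icc (T := T) A (fun k => Θ k N) s (zpt T i x)
      have h4 := nameIndicator_mem_Icc (T := T) A (fun k => Θ k m) s (y i)
      rw [abs_le]
      constructor <;> linarith
  have hvis : ∀ j : ℤ, (∑ i ∈ Finset.range K, v (i + j)) * L m ≤ K + L m := by
    intro j
    have := hy.card_visits_mul_le hLm (M.gapped n) j K
    simp only [v, Finset.sum_boole]
    exact_mod_cast this
  have hL2 : (2 * m : ℝ) ≤ (1 / 2) ^ m * L m := by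
    have h2 : (2 : ℝ) ^ m * (2 * m) ≤ L m := by exact_mod_cast (M.length_ge n).le
    have h3 : ((1 / 2 : ℝ) ^ m) * ((2 : ℝ) ^ m * (2 * m)) = 2 * m := by
      rw [← mul_assoc, ← mul_pow]; norm_num
    rw [← h3]
    gcongr
  have h2 : ∑ i ∈ Finset.range K, ∑ j ∈ Finset.Ico (-(m : ℤ)) m, v (i + j) ≤
      (1 / 2) ^ m * (K + L m) := by
    rw [Finset.sum_comm]
    have h3 : (∑ j ∈ Finset.Ico (-(m : ℤ)) m, ∑ i ∈ Finset.range K, v (i + j)) * L m ≤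
        2 * m * (K + L m) := by
      rw [Finset.sum_mul]
      refine (Finset.sum_le_sum fun j _ => hvis j).trans (le_of_eq ?_)
      rw [Finset.sum_const, Int.card_Ico, nsmul_eq_mul]
      congr 1
      have : ((m : ℤ) - -(m : ℤ)).toNat = 2 * m := by omega
      rw [this]; push_cast; ring
    have hLR : (0 : ℝ) < L m := by exact_mod_cast hLm
    refine le_of_mul_le_mul_right (h3.trans ?_) hLR
    have : (0 : ℝ) ≤ K + L m := by positivity
    nlinarith [mul_le_mul_of_nonneg_right hL2 this]
  have h3 : |∑ i ∈ Finset.range K, (nameIndicator T A (fun k => Θ k N) s (zpt T i x) - c) -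
      ∑ i ∈ Finset.range K, (nameIndicator T A (fun k => Θ k m) s (y (i : ℕ)) - c)| ≤
      (1 / 2) ^ m * (K + L m) := by
    rw [← Finset.sum_sub_distrib]
    refine (Finset.abs_sum_le_sum_abs _ _).trans (le_trans (Finset.sum_le_sum fun i _ => ?_) h2)
    rw [sub_sub_sub_cancel_right]
    exact hdiff i
  have h4 : ((1 / 2 : ℝ) ^ m) = (1 / 2) ^ n * (1 / 2) := by rw [hm, pow_succ]
  have h5 : (0 : ℝ) < (1 / 2) ^ n := by positivity
  have h6 : (0 : ℝ) ≤ (1 / 2) ^ n * L m := by positivity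
  have h7 : (0 : ℝ) ≤ (1 / 2) ^ n * L (m + 1) := by positivity
  rw [h4] at h1 h3
  have h8 := abs_add_le
    (∑ i ∈ Finset.range K, (nameIndicator T A (fun k => Θ k N) s (zpt T i x) - c) -
      ∑ i ∈ Finset.range K, (nameIndicator T A (fun k => Θ k m) s (y (i : ℕ)) - c))
    (∑ i ∈ Finset.range K, (nameIndicator T A (fun k => Θ k m) s (y (i : ℕ)) - c))
  rw [sub_add_cancel] at h8
  rw [show n + 2 = m + 1 by omega]
  nlinarith

end ModificationTower

end Tower

/-- The indicator function of the cylinder of sequences with ones on `s`. -/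
noncomputable def cylinderIndicator (s : Finset (ℕ × ℤ)) (ω : ℕ × ℤ → Bool) : ℝ :=
  ∏ p ∈ s, if ω p then 1 else 0

section Coding

variable {X : Type*} [MeasurableSpace X] {T : X ≃ᵐ X}

lemma exists_uniform_coding [StandardBorelSpace X] {μ : Measure X} [IsProbabilityMeasure μ]
    (hT : MeasurePreserving T μ μ) (hE : Ergodic T μ) (hw : WeakMixing μ T)
    (hap : ∀ x, ∀ i : ℕ, 0 < i → zpt T i x ≠ x) :
    ∃ π : X → ℕ × ℤ → Bool, Measurable π ∧ (∀ x p, π (T x) p = π x (p.1, p.2 + 1)) ∧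
      ∃ X' : Set X, μ X'ᶜ = 0 ∧ X'.InjOn π ∧
        ∀ s : Finset (ℕ × ℤ), ∀ δ > 0, ∃ K : ℕ, 0 < K ∧ ∃ c : ℝ, ∀ x ∈ X',
          |(K : ℝ)⁻¹ * ∑ i ∈ Finset.range K, cylinderIndicator s (π (T^[i] x)) - c| ≤ δ := by
  classical
  obtain ⟨A₀, hA₀m, hA₀⟩ : ∃ A : ℕ → Set X, (∀ n, MeasurableSet (A n)) ∧
      ∀ x y, (∀ n, x ∈ A n ↔ y ∈ A n) → x = y := by
    obtain ⟨A, hA, hsep⟩ := exists_seq_separating X (p := MeasurableSet) MeasurableSet.empty Set.univ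
    exact ⟨A, hA, fun x y h => hsep x (Set.mem_univ x) y (Set.mem_univ y) h⟩
  obtain ⟨B, L, θ, Θ, M⟩ := exists_modificationTower hT hE hw hap
    (A := fun k => A₀ k.unpair.1) fun k => hA₀m _
  set A : ℕ → Set X := fun k => A₀ k.unpair.1 with hA
  let X' : Set X := {x | ∀ i : ℤ, ∀ᶠ n in atTop, θ n (zpt T i x) = zpt T i x}
  have hX' : μ X'ᶜ = 0 := by
    have h1 : ∀ᵐ x ∂μ, ∀ᶠ n in atTop, x ∉ {x | θ n x ≠ x} := by
      refine ae_eventually_notMem (ne_of_lt ?_)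
      have h2 : ∀ n, μ {x | θ n x ≠ x} ≤ ENNReal.ofReal ((1 / 2) ^ n) := fun n => by
        rw [← ENNReal.ofReal_toReal (measure_ne_top μ {x | θ n x ≠ x})]
        exact ENNReal.ofReal_le_ofReal (M.ne_self n)
      refine (ENNReal.tsum_le_tsum h2).trans_lt ?_
      rw [← ENNReal.ofReal_tsum_of_nonneg (fun n => by positivity) summable_geometric_two]
      exact ENNReal.ofReal_lt_top
    have h2 : ∀ᵐ x ∂μ, ∀ i : ℤ, ∀ᶠ n in atTop, θ n (zpt T i x) = zpt T i x := by
      rw [ae_all_iff]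
      intro i
      filter_upwards [(measurePreserving_zpt T hT i).quasiMeasurePreserving.ae h1] with x hx
      filter_upwards [hx] with n hn
      simpa using hn
    exact h2
  let π : X → ℕ × ℤ → Bool := fun x p => decide (∀ᶠ N in atTop, Θ p.1 N (zpt T p.2 x) ∈ A p.1)
  have hπ : ∀ x ∈ X', ∀ p : ℕ × ℤ, ∀ᶠ N in atTop,
      (π x p = true ↔ Θ p.1 N (zpt T p.2 x) ∈ A p.1) := by
    intro x hx p
    obtain ⟨N₀, hN₀⟩ := eventually_atTop.1 (hx p.2)
    have h1 : ∀ N ≥ max N₀ p.1, Θ p.1 N (zpt T p.2 x) = Θ p.1 (max N₀ p.1) (zpt T p.2 x) := by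
      intro N hN
      induction N, hN using Nat.le_induction with
      | base => rfl
      | succ N hN ih =>
        rw [M.comp_succ, if_pos (le_of_max_le_right hN), Function.comp_apply,
          hN₀ N (le_of_max_le_left hN), ih]
    filter_upwards [eventually_ge_atTop (max N₀ p.1)] with N hN
    simp only [π, decide_eq_true_eq]
    constructor
    · intro h
      obtain ⟨N', hN', hN''⟩ := (h.and (eventually_ge_atTop (max N₀ p.1))).exists
      rw [h1 N hN, ← h1 N' hN'']
      exact hN'
    · intro h
      filter_upwards [eventually_ge_atTop (max N₀ p.1)] with N' hN'
      rwa [h1 N' hN', ← h1 N hN]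
  have hπm : Measurable π := by
    refine measurable_pi_lambda _ fun p => measurable_to_bool ?_
    have : (fun x => π x p) ⁻¹' {true} =
        ⋃ N₀ : ℕ, ⋂ N ≥ N₀, {x | Θ p.1 N (zpt T p.2 x) ∈ A p.1} := by
      ext x
      simp [π, eventually_atTop]
    rw [this]
    exact MeasurableSet.iUnion fun N₀ => MeasurableSet.iInter fun N => MeasurableSet.iInter
      fun _ => (M.measurable_comp p.1 N).comp (measurable_zpt T p.2) (hA₀m _)
  refine ⟨π, hπm, fun x p => ?_, X', hX', fun x hx y hy hxy => ?_, fun s δ hδ => ?_⟩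
  · simp only [π, ← zpt_add_one']
  · refine hA₀ x y fun n => ?_
    obtain ⟨m₁, hm₁⟩ := eventually_atTop.1 (hx 0)
    obtain ⟨m₂, hm₂⟩ := eventually_atTop.1 (hy 0)
    set k := Nat.pair n (max m₁ m₂) with hk
    have hmk : max m₁ m₂ ≤ k := Nat.right_le_pair _ _
    have hAk : A k = A₀ n := by simp [hA, hk]
    have key : ∀ z : X, (∀ m ≥ k, θ m z = z) → ∀ N, Θ k N z = z := by
      intro z hz N
      induction N with
      | zero => rw [M.comp_zero]; rfl
      | succ N ih =>
        rw [M.comp_succ]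
        split_ifs with h
        · rw [Function.comp_apply, hz N h, ih]
        · rfl
    have hxk := key x fun m hm => hm₁ m (le_of_max_le_left (hmk.trans hm))
    have hyk := key y fun m hm => hm₂ m (le_of_max_le_right (hmk.trans hm))
    obtain ⟨N, hN⟩ := (hπ x hx (k, 0)).exists
    obtain ⟨N', hN'⟩ := (hπ y hy (k, 0)).exists
    simp only [zpt_zero, hxk, hyk, hAk] at hN hN'
    rw [← hN, ← hN', hxy]
  · obtain ⟨n, hn, hs⟩ : ∃ n : ℕ, (1 / 2 : ℝ) ^ n < δ / 2 ∧ s ⊆ coordBox (n + 1) := by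
      have h1 : ∀ᶠ n : ℕ in atTop, (1 / 2 : ℝ) ^ n < δ / 2 :=
        (tendsto_pow_atTop_nhds_zero_of_lt_one (by norm_num) (by norm_num)).eventually
          (gt_mem_nhds (by positivity))
      have h2 : ∀ᶠ n : ℕ in atTop, ∀ p ∈ s, p ∈ coordBox (n + 1) := by
        rw [eventually_all_finset]
        intro p _
        filter_upwards [eventually_ge_atTop (p.1 + p.2.natAbs)] with n hn
        simp only [coordBox, Finset.mem_product, Finset.mem_range, Finset.mem_Icc]
        omega
      obtain ⟨n, hn⟩ := (h1.and h2).exists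
      exact ⟨n, hn.1, hn.2⟩
    obtain ⟨c, hc⟩ := M.abs_sum_nameIndicator_le hs
    set K := L (n + 1) + 2 * L (n + 2) with hK
    have hKpos : 0 < K := by have := M.length_pos n; omega
    have hKR : (0 : ℝ) < K := by exact_mod_cast hKpos
    refine ⟨K, hKpos, c, fun x hx => ?_⟩
    have h1 : ∀ᶠ N in atTop, ∀ i ∈ Finset.range K,
        cylinderIndicator s (π (T^[i] x)) = nameIndicator T A (fun k => Θ k N) s (zpt T i x) := by
      rw [eventually_all_finset]
      intro i _
      have hxi : zpt T i x ∈ X' := fun j => by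
        have := hx (j + i)
        simpa only [zpt_add] using this
      have h2 : ∀ᶠ N in atTop, ∀ p ∈ s,
          (π (zpt T i x) p = true ↔ Θ p.1 N (zpt T p.2 (zpt T i x)) ∈ A p.1) := by
        rw [eventually_all_finset]
        exact fun p _ => hπ _ hxi p
      filter_upwards [h2] with N hN
      rw [← zpt_natCast]
      refine Finset.prod_congr rfl fun p hp => ?_
      by_cases hmem : Θ p.1 N (zpt T p.2 (zpt T i x)) ∈ A p.1
      · rw [if_pos ((hN p hp).2 hmem), Set.indicator_of_mem hmem]; rfl
      · rw [if_neg fun h => hmem ((hN p hp).1 h), Set.indicator_of_notMem hmem]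
    obtain ⟨N, hN, hNn⟩ := (h1.and (eventually_gt_atTop (n + 1))).exists
    have h3 := hc N hNn x K
    rw [Finset.sum_sub_distrib, ← Finset.sum_congr rfl hN, Finset.sum_const, Finset.card_range,
      nsmul_eq_mul] at h3
    have h4 : (K : ℝ)⁻¹ * ∑ i ∈ Finset.range K, cylinderIndicator s (π (T^[i] x)) - c =
        (K : ℝ)⁻¹ * (∑ i ∈ Finset.range K, cylinderIndicator s (π (T^[i] x)) - K * c) := by
      field_simp
    rw [h4, abs_mul, abs_of_pos (inv_pos.2 hKR), inv_mul_le_iff₀ hKR]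
    refine h3.trans ?_
    have h5 : (K : ℝ) + L (n + 1) + 2 * L (n + 2) = 2 * K := by rw [hK]; push_cast; ring
    rw [h5]
    nlinarith

end Coding

section Shift

/-- The shift of the integer coordinate on an array of symbols. -/
def arrayShift : (ℕ × ℤ → Bool) ≃ₜ (ℕ × ℤ → Bool) where
  toFun ω p := ω (p.1, p.2 + 1)
  invFun ω p := ω (p.1, p.2 - 1)
  left_inv ω := by ext p; simp
  right_inv ω := by ext p; simp
  continuous_toFun := by fun_prop
  continuous_invFun := by fun_prop

lemma continuous_cylinderIndicator (s : Finset (ℕ × ℤ)) : Continuous (cylinderIndicator s) :=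
  continuous_finsetProd _ fun p _ =>
    (continuous_of_discreteTopology (f := fun b : Bool => if b then (1 : ℝ) else 0)).comp
      (continuous_apply p)

lemma cylinderIndicator_eq_indicator (s : Finset (ℕ × ℤ)) :
    cylinderIndicator s = {ω | ∀ p ∈ s, ω p = true}.indicator 1 := by
  ext ω
  by_cases h : ω ∈ {ω | ∀ p ∈ s, ω p = true}
  · rw [Set.indicator_of_mem h]
    exact Finset.prod_eq_one fun p hp => if_pos (h p hp)
  · rw [Set.indicator_of_notMem h]
    simp only [Set.mem_ofPred_eq] at h
    push Not at h
    obtain ⟨p, hp, hne⟩ := h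
    exact Finset.prod_eq_zero hp (if_neg hne)

lemma measurableSet_cylinder_true (s : Finset (ℕ × ℤ)) :
    MeasurableSet {ω : ℕ × ℤ → Bool | ∀ p ∈ s, ω p = true} := by
  have : {ω : ℕ × ℤ → Bool | ∀ p ∈ s, ω p = true} = ⋂ p ∈ s, (fun ω => ω p) ⁻¹' {true} := by
    ext; simp
  rw [this]
  exact Finset.measurableSet_biInter _ fun p _ =>
    measurable_pi_apply p (measurableSet_singleton true)

lemma eq_of_integral_cylinderIndicator {ρ ν : Measure (ℕ × ℤ → Bool)} [IsProbabilityMeasure ρ]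
    [IsProbabilityMeasure ν]
    (h : ∀ s, ∫ ω, cylinderIndicator s ω ∂ρ = ∫ ω, cylinderIndicator s ω ∂ν) : ρ = ν := by
  refine ext_of_generate_finite
    (Set.range fun s : Finset (ℕ × ℤ) => {ω : ℕ × ℤ → Bool | ∀ p ∈ s, ω p = true}) ?_ ?_ ?_
    (by simp)
  · refine le_antisymm (iSup_le fun p => ?_) (MeasurableSpace.generateFrom_le ?_)
    · rw [← measurable_iff_comap_le]
      refine @measurable_to_bool _ (_) _ ?_
      refine MeasurableSpace.measurableSet_generateFrom ⟨{p}, ?_⟩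
      ext; simp
    · rintro _ ⟨s, rfl⟩
      exact measurableSet_cylinder_true s
  · rintro _ ⟨s, rfl⟩ _ ⟨t, rfl⟩ -
    refine ⟨s ∪ t, ?_⟩
    ext ω
    simp only [Finset.mem_union, Set.mem_ofPred_eq, Set.mem_inter_iff]
    grind
  · rintro _ ⟨s, rfl⟩
    have := h s
    simp only [cylinderIndicator_eq_indicator] at this
    rw [integral_indicator_one (measurableSet_cylinder_true s),
      integral_indicator_one (measurableSet_cylinder_true s)] at this
    exact (measureReal_eq_measureReal_iff).1 this

lemma abs_integral_sub_le_of_average {Y : Type*} [MeasurableSpace Y] {ρ : Measure Y}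
    [IsProbabilityMeasure ρ] {S : Y → Y} (hS : MeasurePreserving S ρ ρ) {f : Y → ℝ}
    (hf : Integrable f ρ) {K : ℕ} (hK : 0 < K) {c δ : ℝ}
    (h : ∀ᵐ y ∂ρ, |(K : ℝ)⁻¹ * ∑ i ∈ Finset.range K, f (S^[i] y) - c| ≤ δ) :
    |∫ y, f y ∂ρ - c| ≤ δ := by
  have hi : ∀ i, Integrable (fun y => f (S^[i] y)) ρ := fun i =>
    (hS.iterate i).integrable_comp_of_integrable hf
  have he : ∀ i, ∫ y, f (S^[i] y) ∂ρ = ∫ y, f y ∂ρ := fun i => by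
    conv_rhs => rw [← (hS.iterate i).map_eq]
    rw [integral_map (hS.iterate i).measurable.aemeasurable]
    rw [(hS.iterate i).map_eq]
    exact hf.aestronglyMeasurable
  have hKR : (K : ℝ) ≠ 0 := by positivity
  have h1 : ∫ y, ((K : ℝ)⁻¹ * ∑ i ∈ Finset.range K, f (S^[i] y) - c) ∂ρ = ∫ y, f y ∂ρ - c := by
    rw [integral_sub ((integrable_finsetSum _ fun i _ => hi i).const_mul _) (integrable_const _),
      integral_const_mul, integral_finsetSum _ fun i _ => hi i]
    simp [he, hKR]
  rw [← h1, ← Real.norm_eq_abs]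
  refine (norm_integral_le_of_norm_le_const (C := δ) h).trans ?_
  simp

end Shift

section Inverse

lemma exists_measurable_leftInverse_ae {X Z : Type*} [MeasurableSpace X] [StandardBorelSpace X]
    [MeasurableSpace Z] [MeasurableSpace.CountablySeparated Z] {μ : Measure X} [NeZero μ]
    {π : X → Z} (hπ : Measurable π) {X' : Set X} (hX' : μ X'ᶜ = 0) (hinj : X'.InjOn π) :
    ∃ ψ : Z → X, Measurable ψ ∧ ∀ᵐ x ∂μ, ψ (π x) = x := by
  set X₁ : Set X := (toMeasurable μ X'ᶜ)ᶜ with hX₁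
  have hm : MeasurableSet X₁ := (measurableSet_toMeasurable μ _).compl
  have hsub : X₁ ⊆ X' := Set.compl_subset_comm.1 (subset_toMeasurable μ _)
  have hnull : μ X₁ᶜ = 0 := by rw [hX₁, compl_compl, measure_toMeasurable, hX']
  have : StandardBorelSpace X₁ := hm.standardBorel
  have hg : Measurable fun x : X₁ => π x := hπ.comp measurable_subtype_coe
  have hemb : MeasurableEmbedding fun x : X₁ => π x :=
    hg.measurableEmbedding fun x y h => Subtype.ext (hinj (hsub x.2) (hsub y.2) h)
  have hne : Nonempty X := (μ.nonempty_of_neZero)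
  obtain ⟨ψ, hψ, hψe⟩ := hemb.exists_measurable_extend (measurable_subtype_coe (p := (· ∈ X₁)))
    fun _ => hne
  refine ⟨ψ, hψ, ?_⟩
  filter_upwards [(show X₁ ∈ ae μ from hnull)] with x hx
  exact congrFun hψe ⟨x, hx⟩

end Inverse

section Model

variable {X : Type*} [MeasurableSpace X]

/-- The system `(X, μ, T)` has a uniquely ergodic topological model whose invariant measure has
full support. -/
def HasUniquelyErgodicModel (μ : Measure X) (T : X → X) : Prop :=
  ∃ (Y : Type) (_ : MetricSpace Y) (_ : CompactSpace Y) (_ : MeasurableSpace Y)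
    (_ : BorelSpace Y) (S : Y ≃ₜ Y) (ν : Measure Y), IsModel μ T S ν ∧
    (∀ ρ : Measure Y, IsProbabilityMeasure ρ → MeasurePreserving S ρ ρ → ρ = ν) ∧
    ∀ U : Set Y, IsOpen U → U.Nonempty → ν U ≠ 0

lemma hasUniquelyErgodicModel_of_aperiodic [StandardBorelSpace X] {μ : Measure X}
    [IsProbabilityMeasure μ] {T : X ≃ᵐ X} (hT : MeasurePreserving T μ μ) (hw : WeakMixing μ T)
    (hap : ∀ x, ∀ i : ℕ, 0 < i → zpt T i x ≠ x) : HasUniquelyErgodicModel μ T := by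
  obtain ⟨π, hπ, hπT, X', hX', hinj, havg⟩ := exists_uniform_coding hT (hw.ergodic hT) hw hap
  have hsemi : ∀ x, π (T x) = arrayShift (π x) := fun x => funext fun p => hπT x p
  have hsemi' : ∀ n x, π (T^[n] x) = arrayShift^[n] (π x) := fun n x =>
    (show Function.Semiconj π T arrayShift from hsemi).iterate_right n x
  set ν₀ : Measure (ℕ × ℤ → Bool) := μ.map π with hν₀
  have : IsProbabilityMeasure ν₀ := Measure.isProbabilityMeasure_map hπ.aemeasurable
  have hσ : MeasurePreserving arrayShift ν₀ ν₀ :=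
    measurePreserving_map_of_semiconj hT hπ arrayShift.continuous.measurable hsemi
  have hmem : ∀ ω, ω ∈ ν₀.support ↔ arrayShift ω ∈ ν₀.support := fun ω => by
    have hopen : ∀ U : Set (ℕ × ℤ → Bool), ν₀ (arrayShift ⁻¹' U) = ν₀ U := fun U =>
      hσ.measure_preimage_emb arrayShift.measurableEmbedding U
    simp only [Measure.mem_support_iff_forall]
    refine ⟨fun h U hU => ?_, fun h U hU => ?_⟩
    · rw [← hopen]
      exact h _ (arrayShift.continuous.continuousAt hU)
    · rw [← arrayShift.preimage_image U, hopen]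
      exact h _ (arrayShift.isOpenMap.image_mem_nhds hU)
  have hconull : ∀ᵐ x ∂μ, π x ∈ ν₀.support := ae_of_ae_map hπ.aemeasurable Measure.support_mem_ae
  let Y : Type := ↥ν₀.support
  have hcomp : CompactSpace Y := isCompact_iff_compactSpace.1 Measure.isClosed_support.isCompact
  have hms : MeasurableSet ν₀.support := Measure.isClosed_support.measurableSet
  let S : Y ≃ₜ Y := arrayShift.subtype hmem
  obtain ⟨y₀⟩ : Nonempty Y :=
    (Measure.nonempty_support (IsProbabilityMeasure.ne_zero ν₀)).to_subtype
  classical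
  let φ : X → Y := fun x => if h : π x ∈ ν₀.support then ⟨π x, h⟩ else y₀
  have hφv : ∀ x, π x ∈ ν₀.support → (φ x : ℕ × ℤ → Bool) = π x := fun x h => by simp [φ, h]
  have hφ : Measurable φ := by
    refine (MeasurableEmbedding.subtype_coe hms).measurable_comp_iff.1 ?_
    have : Subtype.val ∘ φ = (π ⁻¹' ν₀.support).piecewise π fun _ => y₀ := by
      ext1 x
      by_cases h : π x ∈ ν₀.support <;> simp [φ, h]
    rw [this]
    exact hπ.piecewise (hπ hms) measurable_const
  have hφT : ∀ᵐ x ∂μ, φ (T x) = S (φ x) := by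
    filter_upwards [hconull] with x hx
    refine Subtype.ext ?_
    rw [hφv _ (by rw [hsemi]; exact (hmem _).1 hx), hsemi]
    exact congrArg arrayShift (hφv x hx).symm
  have hSm : Measurable S := S.continuous.measurable
  set ν : Measure Y := μ.map φ with hν
  have hνp : IsProbabilityMeasure ν := Measure.isProbabilityMeasure_map hφ.aemeasurable
  have hνS : MeasurePreserving S ν ν := by
    refine ⟨hSm, ?_⟩
    rw [hν, Measure.map_map hSm hφ, show S ∘ φ = fun x => S (φ x) from rfl,
      ← Measure.map_congr (f := φ ∘ T) hφT, ← Measure.map_map hφ hT.measurable, hT.map_eq]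
  have hνval : ν.map Subtype.val = ν₀ := by
    rw [hν, Measure.map_map measurable_subtype_coe hφ]
    exact Measure.map_congr (by filter_upwards [hconull] with x hx using hφv x hx)
  obtain ⟨ψ, hψ, hψπ⟩ := exists_measurable_leftInverse_ae hπ hX' hinj
  have hψφ : ∀ᵐ x ∂μ, ψ (φ x) = x := by
    filter_upwards [hψπ, hconull] with x hx hx'
    rw [hφv x hx', hx]
  let _ : MetricSpace Y := TopologicalSpace.metrizableSpaceMetric Y
  refine ⟨Y, inferInstance, hcomp, inferInstance, inferInstance, S, ν,
    ⟨hνp, hνS, φ, fun y => ψ y, hφ, hψ.comp measurable_subtype_coe, rfl, hψφ, ?_, hφT⟩, ?_, ?_⟩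
  · rw [hν, ae_map_iff hφ.aemeasurable]
    · filter_upwards [hψφ] with x hx
      rw [hx]
    · exact measurableSet_eq_fun (hφ.comp (hψ.comp measurable_subtype_coe)) measurable_id
  · have hval : ∀ (ρ : Measure Y), IsProbabilityMeasure ρ → MeasurePreserving S ρ ρ →
        ∀ s, ∀ δ > 0, ∃ c, |∫ ω, cylinderIndicator s ω ∂(ρ.map Subtype.val) - c| ≤ δ ∧
          |∫ ω, cylinderIndicator s ω ∂(ν.map Subtype.val) - c| ≤ δ := by
      intro ρ hρp hρ s δ hδ
      obtain ⟨K, hK, c, hc⟩ := havg s δ hδ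
      have hcl : IsClosed {ω | |(K : ℝ)⁻¹ * ∑ i ∈ Finset.range K,
          cylinderIndicator s (arrayShift^[i] ω) - c| ≤ δ} := by
        refine isClosed_le (Continuous.abs ((continuous_const.mul
          (continuous_finsetSum _ fun i _ => ?_)).sub continuous_const)) continuous_const
        exact (continuous_cylinderIndicator s).comp (arrayShift.continuous.iterate i)
      have hE : ν₀.support ⊆ {ω | |(K : ℝ)⁻¹ * ∑ i ∈ Finset.range K,
          cylinderIndicator s (arrayShift^[i] ω) - c| ≤ δ} := by
        refine Measure.support_subset_of_isClosed hcl ?_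
        refine (ae_map_iff hπ.aemeasurable hcl.measurableSet).2 ?_
        filter_upwards [(show X' ∈ ae μ from hX')] with x hx
        simpa only [hsemi'] using hc x hx
      have hit : ∀ i (y : Y), ((S^[i] y : Y) : ℕ × ℤ → Bool) = arrayShift^[i] y := fun i y =>
        (show Function.Semiconj Subtype.val S arrayShift from fun _ => rfl).iterate_right i y
      have hcont : Continuous fun y : Y => cylinderIndicator s y :=
        (continuous_cylinderIndicator s).comp continuous_subtype_val
      have key : ∀ (τ : Measure Y), IsProbabilityMeasure τ → MeasurePreserving S τ τ →
          |∫ ω, cylinderIndicator s ω ∂(τ.map Subtype.val) - c| ≤ δ := by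
        intro τ hτp hτ
        rw [integral_map measurable_subtype_coe.aemeasurable
          (continuous_cylinderIndicator s).aestronglyMeasurable]
        refine abs_integral_sub_le_of_average hτ
          (hcont.integrable_of_hasCompactSupport (HasCompactSupport.of_compactSpace _)) hK
          (Eventually.of_forall fun y => ?_)
        simp only [hit]
        exact hE y.2
      exact ⟨c, key ρ hρp hρ, key ν hνp hνS⟩
    intro ρ hρp hρ
    have hp : ∀ τ : Measure Y, IsProbabilityMeasure τ →
        IsProbabilityMeasure (τ.map Subtype.val) := fun τ _ =>
      Measure.isProbabilityMeasure_map measurable_subtype_coe.aemeasurable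
    have := hp ρ hρp
    have := hp ν hνp
    have hmap : ρ.map Subtype.val = ν.map Subtype.val := by
      refine eq_of_integral_cylinderIndicator fun s => eq_of_forall_dist_le fun ε hε => ?_
      obtain ⟨c, h1, h2⟩ := hval ρ hρp hρ s (ε / 2) (half_pos hε)
      rw [Real.dist_eq]
      rw [abs_le] at *
      constructor <;> linarith
    ext t ht
    have hemb := MeasurableEmbedding.subtype_coe hms
    rw [← Set.preimage_image_eq t hemb.injective, ← hemb.map_apply, hmap, hemb.map_apply]
  · rintro U hU ⟨y, hy⟩ h0
    obtain ⟨V, hV, rfl⟩ := isOpen_induced_iff.1 hU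
    have h1 := (Measure.mem_support_iff_forall _).1 y.2 V (hV.mem_nhds hy)
    rw [← hνval, Measure.map_apply measurable_subtype_coe hV.measurableSet, h0] at h1
    exact lt_irrefl _ h1

end Model

section Reduction

variable {X : Type*} [MeasurableSpace X]

lemma MeasIso.trans {Y Z : Type*} [MeasurableSpace Y] [MeasurableSpace Z]
    {μ : Measure X} {T : X → X} {ν : Measure Y} {S : Y → Y} {ρ : Measure Z} {R : Z → Z}
    (h₁ : MeasIso μ T ν S) (h₂ : MeasIso ν S ρ R) : MeasIso μ T ρ R := by
  obtain ⟨φ₁, ψ₁, hφ₁, hψ₁, rfl, hl₁, hr₁, hT₁⟩ := h₁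
  obtain ⟨φ₂, ψ₂, hφ₂, hψ₂, rfl, hl₂, hr₂, hT₂⟩ := h₂
  have hψν : Measure.map ψ₂ (Measure.map φ₂ (Measure.map φ₁ μ)) = Measure.map φ₁ μ := by
    rw [Measure.map_map hψ₂ hφ₂, Measure.map_congr (f := ψ₂ ∘ φ₂) (g := id) hl₂, Measure.map_id]
  refine ⟨φ₂ ∘ φ₁, ψ₁ ∘ ψ₂, hφ₂.comp hφ₁, hψ₁.comp hψ₂, (Measure.map_map hφ₂ hφ₁).symm,
    ?_, ?_, ?_⟩
  · filter_upwards [hl₁, ae_of_ae_map hφ₁.aemeasurable hl₂] with x h1 h2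
    simp [h1, h2]
  · rw [← hψν] at hr₁
    filter_upwards [hr₂, ae_of_ae_map hψ₂.aemeasurable hr₁] with x h1 h2
    simp [h1, h2]
  · filter_upwards [hT₁, ae_of_ae_map hφ₁.aemeasurable hT₂] with x h1 h2
    simp [h1, h2]

lemma hasUniquelyErgodicModel_of_dirac [MeasurableSingletonClass X] (x₀ : X) (T : X ≃ᵐ X) :
    HasUniquelyErgodicModel (Measure.dirac x₀) T := by
  have huniq : ∀ ρ : Measure Unit, IsProbabilityMeasure ρ → ρ = Measure.dirac () := by
    intro ρ hρ
    refine Measure.ext_of_singleton fun u => ?_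
    have : ({u} : Set Unit) = Set.univ := Set.eq_univ_of_forall fun v => rfl
    rw [this, measure_univ, measure_univ]
  refine ⟨Unit, inferInstance, inferInstance, inferInstance, inferInstance, Homeomorph.refl Unit,
    Measure.dirac (), ⟨inferInstance, MeasurePreserving.id _, fun _ => (), fun _ => x₀,
      measurable_const, measurable_const, huniq _ ?_, ?_, ?_, ?_⟩, fun ρ hρ _ => huniq ρ hρ, ?_⟩
  · exact Measure.isProbabilityMeasure_map measurable_const.aemeasurable
  · rw [ae_dirac_eq]; rfl
  · exact Eventually.of_forall fun _ => rfl
  · exact Eventually.of_forall fun _ => rfl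
  · rintro U - ⟨u, hu⟩
    simp [Set.indicator, hu]

/-- A weakly mixing transformation some power of which is the identity lives on one point. -/
lemma WeakMixing.exists_eq_dirac_of_periodic [StandardBorelSpace X] {μ : Measure X}
    [IsProbabilityMeasure μ] {T : X → X} (hw : WeakMixing μ T)
    {i : ℕ} (hi : 0 < i) (hper : ∀ᵐ x ∂μ, T^[i] x = x) : ∃ x₀, μ = Measure.dirac x₀ := by
  have hperk : ∀ᵐ x ∂μ, ∀ k, T^[i * k] x = x := by
    filter_upwards [hper] with x hx k
    rw [Function.iterate_mul]
    exact Function.iterate_fixed hx k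
  have hzo : ∀ A, MeasurableSet A → μ.real A = μ.real A * μ.real A := by
    intro A hA
    have h := hw A A hA hA
    by_contra hne
    set e := |μ.real A - μ.real A * μ.real A| with he
    have hepos : 0 < e := abs_pos.2 (sub_ne_zero.2 hne)
    have hiR : (0 : ℝ) < i := by exact_mod_cast hi
    have hval : ∀ k, |μ.real (A ∩ T^[i * k] ⁻¹' A) - μ.real A * μ.real A| = e := fun k => by
      have : μ.real (A ∩ T^[i * k] ⁻¹' A) = μ.real A := by
        refine measureReal_congr ?_
        filter_upwards [hperk] with x hx
        simp only [eq_iff_iff]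
        change (x ∈ A ∧ T^[i * k] x ∈ A) ↔ x ∈ A
        rw [hx k, and_self]
      rw [this]
    have hlow : ∀ k : ℕ, (k : ℝ) * e ≤ ∑ n ∈ Finset.range (i * k),
        |μ.real (A ∩ T^[n] ⁻¹' A) - μ.real A * μ.real A| := by
      intro k
      have hinj : Set.InjOn (fun j => i * j) (Finset.range k : Finset ℕ) :=
        fun a _ b _ hab => Nat.eq_of_mul_eq_mul_left hi hab
      calc (k : ℝ) * e = ∑ j ∈ Finset.range k,
            |μ.real (A ∩ T^[i * j] ⁻¹' A) - μ.real A * μ.real A| := by simp [hval]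
        _ = ∑ n ∈ (Finset.range k).image (fun j => i * j),
            |μ.real (A ∩ T^[n] ⁻¹' A) - μ.real A * μ.real A| := by
          rw [Finset.sum_image hinj]
        _ ≤ _ := by
          refine Finset.sum_le_sum_of_subset_of_nonneg ?_ fun _ _ _ => abs_nonneg _
          intro n hn
          obtain ⟨j, hj, rfl⟩ := Finset.mem_image.1 hn
          exact Finset.mem_range.2 (Nat.mul_lt_mul_of_pos_left (Finset.mem_range.1 hj) hi)
    have h' : ∀ᶠ k : ℕ in atTop, ((i * k : ℕ) : ℝ)⁻¹ * ∑ n ∈ Finset.range (i * k),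
        |μ.real (A ∩ T^[n] ⁻¹' A) - μ.real A * μ.real A| < e / i :=
      (h.comp (tendsto_id.const_mul_atTop' hi)).eventually (gt_mem_nhds (by positivity))
    obtain ⟨k, hk, hkpos⟩ := (h'.and (eventually_gt_atTop 0)).exists
    have hkR : (0 : ℝ) < k := by exact_mod_cast hkpos
    push_cast at hk
    rw [inv_mul_lt_iff₀ (by positivity)] at hk
    have := hlow k
    have h2 : (i : ℝ) * k * (e / i) = k * e := by field_simp
    linarith
  have : IsZeroOneMeasure μ := by
    refine ⟨fun A hA => ?_⟩
    have h := hzo A hA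
    have h2 : μ.real A * (μ.real A - 1) = 0 := by linarith
    rcases mul_eq_zero.1 h2 with h3 | h3
    · left; rwa [measureReal_eq_zero_iff] at h3
    · right
      have h4 : μ.real A = 1 := by linarith
      rw [← ofReal_measureReal (μ := μ) (s := A), h4, ENNReal.ofReal_one]
  exact IsZeroOneMeasure.exists_eq_dirac

/-- A measurable automorphism restricts to an invariant set. -/
def restrictEquiv (T : X ≃ᵐ X) (X₀ : Set X) (h : ∀ x, x ∈ X₀ ↔ T x ∈ X₀) : X₀ ≃ᵐ X₀ where
  toEquiv := T.toEquiv.subtypeEquiv h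
  measurable_toFun := (T.measurable.comp measurable_subtype_coe).subtype_mk
  measurable_invFun := (T.symm.measurable.comp measurable_subtype_coe).subtype_mk

lemma exists_measIso_restrictEquiv {μ : Measure X} [IsProbabilityMeasure μ]
    {T : X ≃ᵐ X} {X₀ : Set X} (hm : MeasurableSet X₀) (h₀ : ∀ᵐ x ∂μ, x ∈ X₀)
    (h : ∀ x, x ∈ X₀ ↔ T x ∈ X₀) :
    ∃ (μ₀ : Measure X₀) (φ : X → X₀), MeasurePreserving φ μ μ₀ ∧
      (∀ x, φ (T x) = restrictEquiv T X₀ h (φ x) ∨ x ∉ X₀) ∧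
      MeasIso μ T μ₀ (restrictEquiv T X₀ h) := by
  obtain ⟨x₁, hx₁⟩ := h₀.exists
  classical
  let φ : X → X₀ := fun x => if hx : x ∈ X₀ then ⟨x, hx⟩ else ⟨x₁, hx₁⟩
  have hφv : ∀ x (hx : x ∈ X₀), φ x = ⟨x, hx⟩ := fun x hx => by simp [φ, hx]
  have hφ : Measurable φ := by
    refine (MeasurableEmbedding.subtype_coe hm).measurable_comp_iff.1 ?_
    have : Subtype.val ∘ φ = X₀.piecewise id fun _ => x₁ := by
      ext1 x
      by_cases hx : x ∈ X₀ <;> simp [φ, hx]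
    rw [this]
    exact measurable_id.piecewise hm measurable_const
  have hφT : ∀ x ∈ X₀, φ (T x) = restrictEquiv T X₀ h (φ x) := fun x hx => by
    rw [hφv x hx, hφv (T x) ((h x).1 hx)]
    rfl
  refine ⟨μ.map φ, φ, hφ.measurePreserving μ, fun x => ?_, φ, Subtype.val, hφ,
    measurable_subtype_coe, rfl, ?_, ?_, ?_⟩
  · by_cases hx : x ∈ X₀
    · exact Or.inl (hφT x hx)
    · exact Or.inr hx
  · filter_upwards [h₀] with x hx
    rw [hφv x hx]
  · exact Eventually.of_forall fun y => hφv y y.2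
  · filter_upwards [h₀] with x hx using hφT x hx

lemma hasUniquelyErgodicModel [StandardBorelSpace X] {μ : Measure X} [IsProbabilityMeasure μ]
    {T : X ≃ᵐ X} (hT : MeasurePreserving T μ μ) (hw : WeakMixing μ T) :
    HasUniquelyErgodicModel μ T := by
  have hQm : ∀ i : ℕ, MeasurableSet {x | zpt T i x = x} := fun i =>
    measurableSet_eq_fun (measurable_zpt T i) measurable_id
  have hQT : ∀ (i : ℕ) x, zpt T i (T x) = T x ↔ zpt T i x = x := fun i x => by
    rw [← zpt_add_one', zpt_add_one, T.injective.eq_iff]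
  by_cases hall : ∀ i : ℕ, 0 < i → μ {x | zpt T i x = x} = 0
  · set X₀ : Set X := {x | ∀ i : ℕ, 0 < i → zpt T i x ≠ x} with hX₀
    have hm : MeasurableSet X₀ := by
      have : X₀ = ⋂ i : ℕ, ⋂ _ : 0 < i, {x | zpt T i x = x}ᶜ := by
        ext; simp [hX₀]
      rw [this]
      exact MeasurableSet.iInter fun i => MeasurableSet.iInter fun _ => (hQm i).compl
    have h₀ : ∀ᵐ x ∂μ, x ∈ X₀ := by
      simp only [hX₀, Set.mem_ofPred_eq, ae_all_iff]
      intro i hi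
      exact measure_eq_zero_iff_ae_notMem.1 (hall i hi)
    have h : ∀ x, x ∈ X₀ ↔ T x ∈ X₀ := fun x => by
      simp only [hX₀, Set.mem_ofPred_eq, ne_eq, hQT]
    obtain ⟨μ₀, φ, hφ, hφT, hiso⟩ := exists_measIso_restrictEquiv hm h₀ h
    have hφT' : ∀ᵐ x ∂μ, φ (T x) = restrictEquiv T X₀ h (φ x) := by
      filter_upwards [h₀] with x hx
      exact (hφT x).resolve_right (not_not.2 hx)
    set T₀ := restrictEquiv T X₀ h with hT₀
    have : IsProbabilityMeasure μ₀ := hφ.map_eq ▸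
      Measure.isProbabilityMeasure_map hφ.measurable.aemeasurable
    have : StandardBorelSpace X₀ := hm.standardBorel
    have hTp : MeasurePreserving T₀ μ₀ μ₀ := by
      refine ⟨T₀.measurable, ?_⟩
      rw [← hφ.map_eq, Measure.map_map T₀.measurable hφ.measurable,
        show T₀ ∘ φ = fun x => T₀ (φ x) from rfl,
        ← Measure.map_congr (f := φ ∘ T) hφT', ← Measure.map_map hφ.measurable hT.measurable,
        hT.map_eq]
    have hit : ∀ (n : ℕ) (y : X₀), ((T₀^[n] y : X₀) : X) = T^[n] y := fun n y =>
      (show Function.Semiconj Subtype.val T₀ T from fun _ => rfl).iterate_right n y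
    obtain ⟨Y, i1, i2, i3, i4, S, ν, ⟨hν, hS, hI⟩, hu, hs⟩ :=
      hasUniquelyErgodicModel_of_aperiodic (T := T₀) hTp
        (hw.of_map hT hφ T₀.measurable hφT') fun y i hi he => by
          refine y.2 i hi ?_
          rw [zpt_natCast] at he ⊢
          rw [← hit, he]
    exact ⟨Y, i1, i2, i3, i4, S, ν, ⟨hν, hS, hiso.trans hI⟩, hu, hs⟩
  · push Not at hall
    obtain ⟨i, hi, hne⟩ := hall
    have h1 : μ {x | zpt T i x = x} = 1 :=
      (((hw.ergodic hT).toPreErgodic.prob_eq_zero_or_one (hQm i)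
        (by ext x; exact hQT i x))).resolve_left hne
    have hper : ∀ᵐ x ∂μ, T^[i] x = x := by
      have := (prob_compl_eq_zero_iff (hQm i)).2 h1
      filter_upwards [(show {x | zpt T i x = x} ∈ ae μ from this)] with x hx
      rw [← zpt_natCast]
      exact hx
    obtain ⟨x₀, rfl⟩ := hw.exists_eq_dirac_of_periodic hi hper
    exact hasUniquelyErgodicModel_of_dirac x₀ T

end Reduction

/-- **Theorem (weakly mixing systems).** A weakly mixing invertible measure-preserving
system on a Lebesgue (standard Borel) probability space has, for every `d ≥ 1`, a strictly
ergodic topological model `(Y, S)` such that the `F^[d]`-orbit closure of every diagonal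
point `y^[d]` is strictly ergodic under `F^[d]`, and `Q^[d](Y)` is strictly ergodic under
`G^[d]`. -/
theorem weakMixing_face_model {X : Type*} [MeasurableSpace X] [StandardBorelSpace X]
    (μ : Measure X) [IsProbabilityMeasure μ] (T : X ≃ᵐ X)
    (hT : MeasurePreserving T μ μ)
    (hwm : Ergodic (Prod.map T T) (μ.prod μ))
    (d : ℕ) (hd : 1 ≤ d) :
    ∃ (Y : Type) (_ : MetricSpace Y) (_ : CompactSpace Y) (_ : MeasurableSpace Y)
      (_ : BorelSpace Y) (S : Y ≃ₜ Y) (ν : Measure Y),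
      IsModel μ (⇑T) S ν ∧ StrictlyErgodicHomeo S ∧
      (∀ y : Y, StrictlyErgodicOn (faceGens S d)
        (closure (grpOrbit (faceGens S d) (fun _ : Fin d → Bool => y)))) ∧
      StrictlyErgodicOn (parallelepipedGens S d) (Qset S d) := by
  have hw := weakMixing_of_ergodic_prod hT hwm
  obtain ⟨Y, i1, i2, i3, i4, S, ν, hM, huniq, hsupp⟩ := hasUniquelyErgodicModel hT hw
  obtain ⟨hν, hS, φ, ψ, hφ, -, hmap, -, -, hφT⟩ := id hM
  have hwS : WeakMixing ν S := hw.of_map hT ⟨hφ, hmap⟩ S.continuous.measurable hφT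
  have : Nonempty Y := ν.nonempty_of_neZero
  exact ⟨Y, i1, i2, i3, i4, S, ν, hM, strictlyErgodicHomeo_of_unique hS huniq hsupp,
    strictlyErgodicOn_faceGens hS hwS huniq hsupp d,
    strictlyErgodicOn_parallelepipedGens hS hwS huniq hsupp d⟩

end HSY
end

section
/- Let (X,T) be a uniquely ergodic t.d.s. whose unique invariant Borel probability measure μ makes (X,ℬ(X),μ,T) weakly mixing, and let d ∈ ℕ. Then the action on X^d of the group ⟨τ_d,σ_d⟩ generated by τ_d = T×···×T (d times) and σ_d = T×T²×···×T^d is uniquely ergodic, and its unique invariant measure is the d-fold product measure μ×···×μ. -/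
open MeasureTheory Topology Filter

namespace HSY

/-- `τ_d = S × ⋯ × S` (`d` times) acting on `Y^d`. -/
def tauHomeo {Y : Type*} [TopologicalSpace Y] (S : Y ≃ₜ Y) (d : ℕ) :
    (Fin d → Y) ≃ₜ (Fin d → Y) :=
  Homeomorph.piCongrRight fun _ => S

/-- `σ_d = S × S² × ⋯ × S^d` acting on `Y^d`. -/
def sigmaHomeo {Y : Type*} [TopologicalSpace Y] (S : Y ≃ₜ Y) (d : ℕ) :
    (Fin d → Y) ≃ₜ (Fin d → Y) :=
  Homeomorph.piCongrRight fun i => S ^ ((i : ℕ) + 1)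

/-- The generators `τ_d, σ_d` of the group `⟨τ_d, σ_d⟩`. -/
def apGens {Y : Type*} [TopologicalSpace Y] (S : Y ≃ₜ Y) (d : ℕ) :
    Set ((Fin d → Y) ≃ₜ (Fin d → Y)) :=
  {tauHomeo S d, sigmaHomeo S d}

section CesaroNull

/-- The Cesàro averages of the absolute values of `a` tend to zero. -/
def CesaroNull (a : ℕ → ℝ) : Prop :=
  Tendsto (fun N : ℕ => (∑ n ∈ Finset.range N, |a n|) / N) atTop (𝓝 0)

theorem CesaroNull.mono {a b : ℕ → ℝ} (hb : CesaroNull b) (h : ∀ n, |a n| ≤ |b n|) :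
    CesaroNull a :=
  squeeze_zero (fun _ => by positivity) (fun N =>
    div_le_div_of_nonneg_right (Finset.sum_le_sum fun n _ => h n) N.cast_nonneg) hb

theorem CesaroNull.sum {ι : Type*} (s : Finset ι) {a : ι → ℕ → ℝ}
    (h : ∀ i ∈ s, CesaroNull (a i)) : CesaroNull fun n => ∑ i ∈ s, |a i n| := by
  have := tendsto_finsetSum s h
  rw [Finset.sum_const_zero] at this
  refine this.congr fun N => ?_
  simp_rw [abs_of_nonneg (Finset.sum_nonneg fun i (_ : i ∈ s) => abs_nonneg (a i _))]
  rw [Finset.sum_comm, Finset.sum_div]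

theorem CesaroNull.of_sq {a : ℕ → ℝ}
    (h : Tendsto (fun N : ℕ => (∑ n ∈ Finset.range N, a n ^ 2) / N) atTop (𝓝 0)) :
    CesaroNull a := by
  have hs := (Real.continuous_sqrt.tendsto 0).comp h
  rw [Real.sqrt_zero] at hs
  refine squeeze_zero (fun _ => by positivity) (fun N => Real.le_sqrt_of_sq_le ?_) hs
  rcases N.eq_zero_or_pos with rfl | hN
  · simp
  have hN' : (0 : ℝ) < N := by exact_mod_cast hN
  have := sq_sum_le_card_mul_sum_sq (s := Finset.range N) (f := fun n => |a n|)
  simp only [sq_abs, Finset.card_range] at this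
  rw [div_pow, div_le_div_iff₀ (by positivity) hN']
  nlinarith

theorem CesaroNull.comp_mul_left {a : ℕ → ℝ} (h : CesaroNull a) {k : ℕ} (hk : 0 < k) :
    CesaroNull fun n => a (k * n) := by
  have ht : Tendsto (fun N : ℕ => k * N) atTop atTop := tendsto_id.const_mul_atTop' hk
  have := (h.comp ht).const_mul (k : ℝ)
  rw [mul_zero] at this
  refine squeeze_zero (fun _ => by positivity) (fun N => ?_) this
  have hle : ∑ n ∈ Finset.range N, |a (k * n)| ≤ ∑ m ∈ Finset.range (k * N), |a m| := by
    rw [← Finset.sum_image (f := fun m => |a m|) (g := fun n => k * n)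
      fun x _ y _ hxy => Nat.eq_of_mul_eq_mul_left hk hxy]
    refine Finset.sum_le_sum_of_subset_of_nonneg ?_ fun _ _ _ => abs_nonneg _
    intro m hm
    obtain ⟨n, hn, rfl⟩ := Finset.mem_image.1 hm
    exact Finset.mem_range.2 (Nat.mul_lt_mul_of_pos_left (Finset.mem_range.1 hn) hk)
  have hk' : (k : ℝ) ≠ 0 := by positivity
  calc (∑ n ∈ Finset.range N, |a (k * n)|) / N
      ≤ (∑ m ∈ Finset.range (k * N), |a m|) / N := by gcongr
    _ = k * ((∑ m ∈ Finset.range (k * N), |a m|) / (k * N : ℕ)) := by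
      push_cast; field_simp

theorem eq_zero_of_cesaroNull_const {c : ℝ} (h : CesaroNull fun _ => c) : c = 0 := by
  have : Tendsto (fun _ : ℕ => |c|) atTop (𝓝 0) := by
    refine Tendsto.congr' ?_ h
    filter_upwards [eventually_gt_atTop 0] with N hN
    have : (N : ℝ) ≠ 0 := by positivity
    simp [this]
  exact abs_eq_zero.1 (tendsto_nhds_unique tendsto_const_nhds this)

end CesaroNull

/-- Products of numbers in `[0, 1]` are `1`-Lipschitz in each factor. -/
theorem abs_prod_sub_prod_le {ι : Type*} (s : Finset ι) (a b : ι → ℝ)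
    (ha : ∀ i, |a i| ≤ 1) (hb : ∀ i, |b i| ≤ 1) :
    |∏ i ∈ s, a i - ∏ i ∈ s, b i| ≤ ∑ i ∈ s, |a i - b i| := by
  classical
  induction s using Finset.induction_on with
  | empty => simp
  | insert i s hi ih =>
    rw [Finset.prod_insert hi, Finset.prod_insert hi, Finset.sum_insert hi]
    have hB : |∏ j ∈ s, b j| ≤ 1 := by
      rw [Finset.abs_prod]
      exact Finset.prod_le_one (fun _ _ => abs_nonneg _) fun j _ => hb j
    calc |a i * ∏ j ∈ s, a j - b i * ∏ j ∈ s, b j|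
        = |(a i - b i) * ∏ j ∈ s, b j + a i * (∏ j ∈ s, a j - ∏ j ∈ s, b j)| := by
          congr 1; ring
      _ ≤ |a i - b i| * |∏ j ∈ s, b j| + |a i| * |∏ j ∈ s, a j - ∏ j ∈ s, b j| := by
          rw [← abs_mul, ← abs_mul]; exact abs_add_le _ _
      _ ≤ |a i - b i| * 1 + 1 * ∑ j ∈ s, |a j - b j| := by
          gcongr
          exact ha i
      _ = _ := by ring

section Ergodic

variable {Ω : Type*} [MeasurableSpace Ω] {ρ : Measure Ω} {S : Ω → Ω}

open scoped RealInnerProductSpace in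
/-- The mean ergodic theorem, tested on indicators of sets. -/
theorem tendsto_cesaro_measureReal_inter [IsProbabilityMeasure ρ] (hS : Ergodic S ρ)
    {A B : Set Ω} (hA : MeasurableSet A) (hB : MeasurableSet B) :
    Tendsto (fun N : ℕ => (∑ n ∈ Finset.range N, ρ.real (A ∩ S^[n] ⁻¹' B)) / N) atTop
      (𝓝 (ρ.real A * ρ.real B)) := by
  have hm := hS.toMeasurePreserving
  have hBn (n : ℕ) : MeasurableSet (S^[n] ⁻¹' B) := (hm.measurable.iterate n) hB
  let U : Lp ℝ 2 ρ →L[ℝ] Lp ℝ 2 ρ :=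
    (Lp.compMeasurePreservingₗᵢ ℝ S hm).toContinuousLinearMap
  let f : Lp ℝ 2 ρ := indicatorConstLp 2 hB (measure_ne_top ρ B) 1
  have hU (n : ℕ) : U^[n] f = indicatorConstLp 2 (hBn n) (measure_ne_top ρ _) 1 := by
    induction n with
    | zero => rfl
    | succ n ih =>
      rw [Function.iterate_succ_apply', ih]
      exact Lp.indicatorConstLp_compMeasurePreserving (hBn n) (measure_ne_top ρ _) 1 hm
  have hlim := U.tendsto_birkhoffAverage_orthogonalProjection
    (LinearIsometry.norm_toContinuousLinearMap_le _) f
  set g := (U.eqLocus (1 : Lp ℝ 2 ρ →L[ℝ] Lp ℝ 2 ρ)).orthogonalProjectionOnto f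
  have hfix : U (g : Lp ℝ 2 ρ) = g := g.2
  obtain ⟨c, hc⟩ : ∃ c, (g : Lp ℝ 2 ρ) =ᵐ[ρ] Function.const Ω c := by
    refine hS.ae_eq_const_of_ae_eq_comp_ae (Lp.aestronglyMeasurable _) ?_
    have h1 := Lp.coeFn_compMeasurePreserving (g : Lp ℝ 2 ρ) hm
    have h2 : Lp.compMeasurePreserving S hm (g : Lp ℝ 2 ρ) = g := hfix
    rw [h2] at h1
    exact h1.symm
  have key {C : Set Ω} (hC : MeasurableSet C) :
      Tendsto (fun N : ℕ => (∑ n ∈ Finset.range N, ρ.real (C ∩ S^[n] ⁻¹' B)) / N) atTop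
        (𝓝 (ρ.real C * c)) := by
    have h := (tendsto_const_nhds (x := indicatorConstLp 2 hC (measure_ne_top ρ C)
      (1 : ℝ))).inner (𝕜 := ℝ) hlim
    have hval : ⟪indicatorConstLp 2 hC (measure_ne_top ρ C) (1 : ℝ), (g : Lp ℝ 2 ρ)⟫
        = ρ.real C * c := by
      rw [L2.inner_indicatorConstLp_one, setIntegral_congr_ae (g := fun _ => c) hC
        (hc.mono fun x hx _ => hx)]
      simp
    rw [hval] at h
    refine h.congr fun N => ?_
    rw [birkhoffAverage, birkhoffSum, inner_smul_right, inner_sum]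
    simp_rw [id, hU, L2.inner_indicatorConstLp_one_indicatorConstLp_one]
    simp [div_eq_inv_mul]
  have hcB : c = ρ.real B := by
    have h1 : Tendsto (fun _ : ℕ => ρ.real B) atTop (𝓝 c) := by
      have := key MeasurableSet.univ
      rw [probReal_univ, one_mul] at this
      refine this.congr' ?_
      filter_upwards [eventually_gt_atTop 0] with N hN
      have : (N : ℝ) ≠ 0 := by positivity
      have hn (n : ℕ) : ρ.real (S^[n] ⁻¹' B) = ρ.real B :=
        (hm.iterate n).measureReal_preimage hB.nullMeasurableSet
      simp [hn, this]
    exact tendsto_nhds_unique h1 tendsto_const_nhds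
  exact hcB ▸ key hA

/-- The deviation of `A` and `S⁻ⁿ B` from independence. -/
def correlation (ρ : Measure Ω) (S : Ω → Ω) (A B : Set Ω) (n : ℕ) : ℝ :=
  ρ.real (A ∩ S^[n] ⁻¹' B) - ρ.real A * ρ.real B

theorem cesaroNull_correlation [IsProbabilityMeasure ρ]
    (hS : Ergodic (Prod.map S S) (ρ.prod ρ)) {A B : Set Ω} (hA : MeasurableSet A)
    (hB : MeasurableSet B) : CesaroNull (correlation ρ S A B) := by
  have h1 := tendsto_cesaro_measureReal_inter hS (hA.prod MeasurableSet.univ)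
    (hB.prod MeasurableSet.univ)
  have h2 := tendsto_cesaro_measureReal_inter hS (hA.prod hA) (hB.prod hB)
  have hpre (n : ℕ) (C D : Set Ω) : (Prod.map S S)^[n] ⁻¹' (C ×ˢ D)
      = (S^[n] ⁻¹' C) ×ˢ (S^[n] ⁻¹' D) := by
    rw [Prod.map_iterate]; rfl
  simp only [hpre, Set.prod_inter_prod, measureReal_prod_prod, Set.preimage_univ,
    Set.inter_univ, probReal_univ, mul_one] at h1 h2
  apply CesaroNull.of_sq
  have h := (h2.sub (h1.const_mul (2 * (ρ.real A * ρ.real B)))).add_const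
    ((ρ.real A * ρ.real B) ^ 2)
  have h0 : ρ.real A * ρ.real A * (ρ.real B * ρ.real B)
      - 2 * (ρ.real A * ρ.real B) * (ρ.real A * ρ.real B) + (ρ.real A * ρ.real B) ^ 2 = 0 := by
    ring
  rw [h0] at h
  refine h.congr' ?_
  filter_upwards [eventually_gt_atTop 0] with N hN
  have : (N : ℝ) ≠ 0 := by positivity
  simp only [correlation, sub_sq, Finset.sum_add_distrib, Finset.sum_sub_distrib,
    Finset.sum_const, Finset.card_range, nsmul_eq_mul, ← Finset.sum_mul, ← Finset.mul_sum]
  field_simp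

theorem correlation_iterate (k : ℕ) (A B : Set Ω) (n : ℕ) :
    correlation ρ S^[k] A B n = correlation ρ S A B (k * n) := by
  simp only [correlation, Function.iterate_mul]

theorem correlation_compl [IsProbabilityMeasure ρ] (hm : MeasurePreserving S ρ ρ)
    {A B : Set Ω} (hB : MeasurableSet B) (n : ℕ) :
    correlation ρ S A Bᶜ n = -correlation ρ S A B n := by
  have h := measureReal_inter_add_sdiff (μ := ρ) (s := A) ((hm.measurable.iterate n) hB)
  simp only [correlation, Set.preimage_compl, ← Set.sdiff_eq]
  rw [probReal_compl_eq_one_sub hB]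
  linarith

theorem abs_correlation_le [IsProbabilityMeasure ρ] (hm : MeasurePreserving S ρ ρ)
    {A B : Set Ω} (hB : MeasurableSet B) (n : ℕ) :
    |correlation ρ S A B n| ≤ ρ.real B := by
  have h1 : ρ.real (A ∩ S^[n] ⁻¹' B) ≤ ρ.real B :=
    (measureReal_mono Set.inter_subset_right).trans_eq
      ((hm.iterate n).measureReal_preimage hB.nullMeasurableSet)
  have h2 : ρ.real A * ρ.real B ≤ ρ.real B :=
    mul_le_of_le_one_left measureReal_nonneg measureReal_le_one
  have h3 : 0 ≤ ρ.real (A ∩ S^[n] ⁻¹' B) := measureReal_nonneg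
  have h4 : 0 ≤ ρ.real A * ρ.real B := by positivity
  rw [correlation, abs_le]
  constructor <;> linarith

theorem hasSum_measureReal_iUnion [IsFiniteMeasure ρ] {f : ℕ → Set Ω}
    (hd : Pairwise (Function.onFun Disjoint f)) (hf : ∀ i, MeasurableSet (f i)) :
    HasSum (fun i => ρ.real (f i)) (ρ.real (⋃ i, f i)) := by
  rw [measureReal_def, measure_iUnion hd hf]
  rw [ENNReal.tsum_toReal_eq fun i => measure_ne_top ρ _]
  exact ENNReal.hasSum_toReal ((measure_iUnion hd hf) ▸ measure_ne_top ρ _)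

theorem cesaroNull_correlation_iUnion [IsProbabilityMeasure ρ] (hm : MeasurePreserving S ρ ρ)
    {A : Set Ω} (hA : MeasurableSet A) {f : ℕ → Set Ω}
    (hd : Pairwise (Function.onFun Disjoint f)) (hf : ∀ i, MeasurableSet (f i))
    (h : ∀ i, CesaroNull (correlation ρ S A (f i))) :
    CesaroNull (correlation ρ S A (⋃ i, f i)) := by
  have hsum := hasSum_measureReal_iUnion (ρ := ρ) hd hf
  have hcorr (n : ℕ) : HasSum (fun i => correlation ρ S A (f i) n)
      (correlation ρ S A (⋃ i, f i) n) := by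
    have hn := (hm.measurable.iterate n)
    have := hasSum_measureReal_iUnion (ρ := ρ) (f := fun i => A ∩ S^[n] ⁻¹' f i)
      (fun i j hij => ((hd hij).preimage _).mono Set.inter_subset_right Set.inter_subset_right)
      fun i => hA.inter (hn (hf i))
    rw [← Set.inter_iUnion, ← Set.preimage_iUnion] at this
    exact this.sub (hsum.mul_left _)
  have habs (n : ℕ) : Summable fun i => |correlation ρ S A (f i) n| :=
    hsum.summable.of_nonneg_of_le (fun _ => abs_nonneg _) fun i => abs_correlation_le hm (hf i) n
  have hbound (N i : ℕ) : ‖(∑ n ∈ Finset.range N, |correlation ρ S A (f i) n|) / (N : ℝ)‖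
      ≤ ρ.real (f i) := by
    have hle : ∑ n ∈ Finset.range N, |correlation ρ S A (f i) n| ≤ N * ρ.real (f i) := by
      simpa using Finset.sum_le_card_nsmul (Finset.range N) _ _
        fun n _ => abs_correlation_le (A := A) hm (hf i) n
    rw [Real.norm_of_nonneg (by positivity)]
    exact div_le_of_le_mul₀ N.cast_nonneg measureReal_nonneg (hle.trans_eq (mul_comm _ _))
  have ht : Tendsto (fun N : ℕ =>
      ∑' i, (∑ n ∈ Finset.range N, |correlation ρ S A (f i) n|) / (N : ℝ)) atTop
        (𝓝 (∑' _ : ℕ, (0 : ℝ))) :=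
    tendsto_tsum_of_dominated_convergence hsum.summable h (Eventually.of_forall hbound)
  rw [tsum_zero] at ht
  refine squeeze_zero (fun _ => by positivity) (fun N => ?_) ht
  rw [tsum_div_const, Summable.tsum_finsetSum fun n _ => habs n]
  refine div_le_div_of_nonneg_right (Finset.sum_le_sum fun n _ => ?_) N.cast_nonneg
  rw [← (hcorr n).tsum_eq]
  simpa only [Real.norm_eq_abs] using
    norm_tsum_le_tsum_norm (f := fun i => correlation ρ S A (f i) n) (habs n)

/-- Asymptotic independence along a generating `π`-system implies ergodicity. -/
theorem ergodic_of_cesaroNull_correlation [IsProbabilityMeasure ρ]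
    (hm : MeasurePreserving S ρ ρ) {C : Set (Set Ω)}
    (hgen : ‹MeasurableSpace Ω› = MeasurableSpace.generateFrom C) (hpi : IsPiSystem C)
    (h : ∀ A ∈ C, ∀ B ∈ C, CesaroNull (correlation ρ S A B)) : Ergodic S ρ := by
  have hCm {A : Set Ω} (hA : A ∈ C) : MeasurableSet A :=
    hgen ▸ MeasurableSpace.measurableSet_generateFrom hA
  have hext {A : Set Ω} (hA : A ∈ C) (B : Set Ω) (hB : MeasurableSet B) :
      CesaroNull (correlation ρ S A B) := by
    induction B, hB using MeasurableSpace.induction_on_inter hgen hpi with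
    | empty => simp [CesaroNull, correlation]
    | basic B hB => exact h A hA B hB
    | compl B hB ih => exact ih.mono fun n => by rw [correlation_compl hm hB, abs_neg]
    | iUnion f hd hf ih => exact cesaroNull_correlation_iUnion hm (hCm hA) hd hf ih
  refine ⟨hm, ⟨fun B hB hinv => ?_⟩⟩
  have hind {A : Set Ω} (hA : A ∈ C) : ρ.real (A ∩ B) = ρ.real A * ρ.real B := by
    have hn (n : ℕ) : S^[n] ⁻¹' B = B := Function.IsFixedPt.preimage_iterate hinv n
    have := hext hA B hB
    simp only [CesaroNull, correlation, hn] at this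
    exact sub_eq_zero.1 (eq_zero_of_cesaroNull_const this)
  have hrestrict : ρ.restrict B = ρ B • ρ := by
    have : IsFiniteMeasure (ρ B • ρ) := ρ.smul_finite (measure_ne_top ρ B)
    refine ext_of_generate_finite C hgen hpi (fun A hA => ?_) (by simp)
    rw [Measure.restrict_apply (hCm hA), ← ENNReal.toReal_eq_toReal_iff' (by simp)
      (measure_ne_top _ _)]
    simpa [measureReal_def, mul_comm] using hind hA
  have hsq : ρ B = ρ B * ρ B := by
    simpa using congrArg (fun m : Measure Ω => m B) hrestrict
  rw [eventuallyConst_set', ae_eq_empty, ae_eq_univ_iff_measure_eq hB.nullMeasurableSet,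
    measure_univ]
  rcases eq_or_ne (ρ B) 0 with h0 | h0
  · exact Or.inl h0
  · exact Or.inr ((ENNReal.mul_eq_left h0 (measure_ne_top ρ B)).1 hsq.symm)

/-- A finite product of weakly mixing maps is ergodic. -/
theorem ergodic_pi {ι : Type*} [Fintype ι] {Y : ι → Type*} [∀ i, MeasurableSpace (Y i)]
    {ρ : ∀ i, Measure (Y i)} [∀ i, IsProbabilityMeasure (ρ i)] {S : ∀ i, Y i → Y i}
    (hm : ∀ i, MeasurePreserving (S i) (ρ i) (ρ i))
    (h : ∀ i A B, MeasurableSet A → MeasurableSet B →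
      CesaroNull (correlation (ρ i) (S i) A B)) :
    Ergodic (fun x i => S i (x i)) (Measure.pi ρ) := by
  refine ergodic_of_cesaroNull_correlation (measurePreserving_pi ρ ρ hm)
    generateFrom_pi.symm isPiSystem_pi ?_
  rintro _ ⟨A, hA, rfl⟩ _ ⟨B, hB, rfl⟩
  have hit (n : ℕ) : (fun (x : ∀ i, Y i) i => S i (x i))^[n] = fun x i => (S i)^[n] (x i) := by
    induction n with
    | zero => rfl
    | succ n ih => rw [Function.iterate_succ, ih]; rfl
  have hreal (s : ∀ i, Set (Y i)) :
      (Measure.pi ρ).real (Set.univ.pi s) = ∏ i, (ρ i).real (s i) := by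
    simp [measureReal_def, Measure.pi_pi, ENNReal.toReal_prod]
  refine (CesaroNull.sum Finset.univ fun i _ =>
    h i (A i) (B i) (hA i trivial) (hB i trivial)).mono fun n => ?_
  have hset : Set.univ.pi A ∩ (fun (x : ∀ i, Y i) i => S i (x i))^[n] ⁻¹' Set.univ.pi B
      = Set.univ.pi fun i => A i ∩ (S i)^[n] ⁻¹' B i := by
    rw [hit]; ext x; simp [forall_and]
  rw [correlation, hset, hreal, hreal, hreal, ← Finset.prod_mul_distrib]
  refine (abs_prod_sub_prod_le _ _ _ (fun i => ?_) fun i => ?_).trans (le_abs_self _)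
  · rw [abs_of_nonneg measureReal_nonneg]
    exact measureReal_le_one
  · rw [abs_of_nonneg (by positivity)]
    exact mul_le_one₀ measureReal_le_one measureReal_nonneg measureReal_le_one

/-- A coupling that is invariant under `id × S`, with `S` ergodic for the second marginal, is the
product of its marginals. -/
theorem eq_prod_of_ergodic {α : Type*} [MeasurableSpace α] {m : Measure (α × Ω)}
    [IsProbabilityMeasure m] (hm : MeasurePreserving (Prod.map id S) m m)
    (hS : Ergodic S m.snd) : m = m.fst.prod m.snd := by
  refine (Measure.prod_eq fun A B hA hB => ?_).symm
  let κ : Measure Ω := (m.restrict (A ×ˢ Set.univ)).map Prod.snd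
  have hκ {D : Set Ω} (hD : MeasurableSet D) : κ D = m (A ×ˢ D) := by
    rw [Measure.map_apply measurable_snd hD, Measure.restrict_apply (measurable_snd hD)]
    congr 1; ext x; simp [and_comm]
  have hinv : MeasurePreserving S κ κ := by
    refine ⟨hS.measurable, Measure.ext fun D hD => ?_⟩
    rw [Measure.map_apply hS.measurable hD, hκ hD, hκ (hS.measurable hD),
      ← hm.measure_preimage (hA.prod hD).nullMeasurableSet]
    rfl
  have hac : κ ≪ m.snd := Measure.AbsolutelyContinuous.mk fun D hD h0 => by
    rw [Measure.snd_apply hD] at h0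
    rw [hκ hD]
    exact measure_mono_null (fun x hx => hx.2) h0
  obtain ⟨c, hc⟩ := hS.eq_smul_of_absolutelyContinuous hinv hac
  have hcA : m.fst A = c := by
    have := congrArg (fun k : Measure Ω => k Set.univ) hc
    rw [Measure.fst_apply hA, ← Set.prod_univ, ← hκ MeasurableSet.univ]
    simpa using this
  rw [hcA, ← hκ hB, hc]
  simp

end Ergodic

theorem coe_pow {Y : Type*} [TopologicalSpace Y] (S : Y ≃ₜ Y) (n : ℕ) : ⇑(S ^ n) = S^[n] := by
  induction n with
  | zero => rfl
  | succ n ih => rw [pow_succ, Function.iterate_succ, ← ih]; rfl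

theorem tauHomeo_apply {Y : Type*} [TopologicalSpace Y] (S : Y ≃ₜ Y) (d : ℕ) (x : Fin d → Y)
    (i : Fin d) : tauHomeo S d x i = S (x i) := rfl

theorem sigmaHomeo_apply {Y : Type*} [TopologicalSpace Y] (S : Y ≃ₜ Y) (d : ℕ) (x : Fin d → Y)
    (i : Fin d) : sigmaHomeo S d x i = S^[(i : ℕ) + 1] (x i) := by
  rw [← coe_pow]; rfl

section Joining

variable {X : Type*} [TopologicalSpace X] [MeasurableSpace X] (T : X ≃ₜ X)
  (μ : Measure X) [IsProbabilityMeasure μ]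

theorem measurePreserving_tauHomeo (hinv : MeasurePreserving T μ μ) (d : ℕ) :
    MeasurePreserving (tauHomeo T d) (Measure.pi fun _ => μ) (Measure.pi fun _ => μ) :=
  measurePreserving_pi _ _ fun _ => hinv

theorem measurePreserving_sigmaHomeo (hinv : MeasurePreserving T μ μ) (d : ℕ) :
    MeasurePreserving (sigmaHomeo T d) (Measure.pi fun _ => μ) (Measure.pi fun _ => μ) := by
  have := measurePreserving_pi (fun _ : Fin d => μ) (fun _ => μ)
    fun i : Fin d => hinv.iterate ((i : ℕ) + 1)
  convert this using 1
  ext x i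
  exact sigmaHomeo_apply T d x i

theorem ergodic_sigmaHomeo (hinv : MeasurePreserving T μ μ)
    (hwm : Ergodic (Prod.map T T) (μ.prod μ)) (d : ℕ) :
    Ergodic (sigmaHomeo T d) (Measure.pi fun _ => μ) := by
  have := ergodic_pi (ρ := fun _ : Fin d => μ) (S := fun i : Fin d => T^[(i : ℕ) + 1])
    (fun i => hinv.iterate _) fun i A B hA hB => by
      refine ((cesaroNull_correlation hwm hA hB).comp_mul_left i.1.succ_pos).mono
        fun n => ?_
      rw [correlation_iterate]
  convert this using 1
  ext x i
  exact sigmaHomeo_apply T d x i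

theorem eq_pi_of_measurePreserving [BorelSpace X] (hinv : MeasurePreserving T μ μ)
    (huniq : ∀ ν : Measure X, IsProbabilityMeasure ν → MeasurePreserving T ν ν → ν = μ)
    (hwm : Ergodic (Prod.map T T) (μ.prod μ)) (d : ℕ) (ν : Measure (Fin d → X))
    [IsProbabilityMeasure ν] (hτ : MeasurePreserving (tauHomeo T d) ν ν)
    (hσ : MeasurePreserving (sigmaHomeo T d) ν ν) : ν = Measure.pi fun _ => μ := by
  induction d with
  | zero =>
    refine Measure.ext fun s _ => ?_
    rcases s.eq_empty_or_nonempty with rfl | hs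
    · simp
    · rw [Set.Nonempty.eq_univ hs, measure_univ, measure_univ]
  | succ d ih =>
    let e := MeasurableEquiv.piFinSuccAbove (fun _ : Fin (d + 1) => X) 0
    let m := ν.map e
    have he : MeasurePreserving e ν m := e.measurable.measurePreserving ν
    have hTm : Measurable T := T.continuous.measurable
    have hτm (k : ℕ) : Measurable (tauHomeo T k) :=
      measurable_pi_lambda _ fun i => hTm.comp (measurable_pi_apply i)
    have hσm (k : ℕ) : Measurable (sigmaHomeo T k) := measurable_pi_lambda _ fun i => by
      simp_rw [sigmaHomeo_apply]
      exact (hTm.iterate _).comp (measurable_pi_apply i)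
    have : IsProbabilityMeasure m := Measure.isProbabilityMeasure_map e.measurable.aemeasurable
    have hmτ : MeasurePreserving (Prod.map T (tauHomeo T d)) m m :=
      he.of_semiconj hτ (fun x => rfl) (hTm.prodMap (hτm d))
    have hmid : MeasurePreserving (Prod.map id (sigmaHomeo T d)) m m := by
      let E : X × (Fin d → X) ≃ᵐ X × (Fin d → X) := T.toMeasurableEquiv.prodCongr
        (MeasurableEquiv.piCongrRight fun _ => T.toMeasurableEquiv)
      have hE : MeasurePreserving E m m := hmτ
      refine (hE.comp_left_iff (g := Prod.map id (sigmaHomeo T d))).1 ?_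
      refine he.of_semiconj hσ (fun x => Prod.ext ?_ (funext fun i => ?_))
        (E.measurable.comp (measurable_id.prodMap (hσm d)))
      · exact sigmaHomeo_apply T (d + 1) x 0
      · refine (sigmaHomeo_apply T (d + 1) x i.succ).trans ?_
        rw [Fin.val_succ, Function.iterate_succ_apply']
        exact congrArg T (sigmaHomeo_apply T d (e x).2 i).symm
    have hfst : m.fst = μ := huniq _ inferInstance <|
      (measurable_fst.measurePreserving m).of_semiconj hmτ (fun _ => rfl) hTm
    have hsnd : m.snd = Measure.pi fun _ => μ := by
      have hs : MeasurePreserving Prod.snd m m.snd := measurable_snd.measurePreserving m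
      exact ih m.snd (hs.of_semiconj hmτ (fun _ => rfl) (hτm d))
        (hs.of_semiconj hmid (fun _ => rfl) (hσm d))
    have hm : m = μ.prod (Measure.pi fun _ => μ) := by
      have := eq_prod_of_ergodic hmid (hsnd ▸ ergodic_sigmaHomeo T μ hinv hwm d)
      rwa [hfst, hsnd] at this
    exact e.map_measurableEquiv_injective
      (hm.trans (measurePreserving_piFinSuccAbove (fun _ => μ) 0).map_eq.symm)

end Joining

/-- **Proposition (weakly mixing systems, arithmetic progressions).** Let `(X, T)` be a
uniquely ergodic t.d.s. whose unique invariant measure `μ` is weakly mixing and `d ≥ 1`.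
Then the action on `X^d` of the group `⟨τ_d, σ_d⟩` generated by `τ_d = T × ⋯ × T` and
`σ_d = T × T² × ⋯ × T^d` is uniquely ergodic, with unique invariant measure the `d`-fold
product `μ × ⋯ × μ`. -/
theorem prop_weakMixing_ap {X : Type*} [MetricSpace X] [CompactSpace X]
    [MeasurableSpace X] [BorelSpace X] (T : X ≃ₜ X)
    (μ : Measure X) [IsProbabilityMeasure μ] (hinv : MeasurePreserving T μ μ)
    (huniq : ∀ ν : Measure X, IsProbabilityMeasure ν → MeasurePreserving T ν ν → ν = μ)
    (hwm : Ergodic (Prod.map T T) (μ.prod μ)) (d : ℕ) (hd : 1 ≤ d) :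
    (∀ g ∈ apGens T d,
        MeasurePreserving g (Measure.pi fun _ : Fin d => μ) (Measure.pi fun _ => μ)) ∧
    (∀ ν : Measure (Fin d → X), IsProbabilityMeasure ν →
      (∀ g ∈ apGens T d, MeasurePreserving g ν ν) →
      ν = Measure.pi fun _ => μ) := by
  refine ⟨?_, fun ν _ h => eq_pi_of_measurePreserving T μ hinv huniq hwm d ν
    (h _ (Or.inl rfl)) (h _ (Or.inr rfl))⟩
  rintro g (rfl | rfl)
  · exact measurePreserving_tauHomeo T μ hinv d
  · exact measurePreserving_sigmaHomeo T μ hinv d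

end HSY
end
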